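/- arXiv:2209.14588 — 3 statements merged into one kernel-verified Lean document; each statement's English description precedes it below -/
import Mathlib

section
/- (Intermediate claim in the odd construction.) For every odd integer x ≥ 1 there exists a family of permutations σ_1, …, σ_{3(x−1)/2} of Fin x × Fin 3 such that each σ_k is fixed-point-free with all cycles of length 3 and satisfies (σ_k(p)).1 ≠ p.1 for every p, and for every ordered pair (p, q) of elements of Fin x × Fin 3 with p.1 ≠ q.1 there is exactly one index k with σ_k(p) = q or σ_k(q) = p. (That is, the digraph K_x^* ≀ K̄_3 has a K_3^*-factorization into (3x − 3)/2 factors.) -/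
/-!
A `K_3^*`-factorization of `K_x^* ≀ K̄_3` is what remains of a Kirkman triple system of order `3x`
when one parallel class is deleted, so the claim is the Ray-Chaudhuri–Wilson theorem for the orders
`3x = 6N + 3`. Deleting a point instead turns a Kirkman triple system of order `2r + 1` into a
Kirkman frame of type `2^r`, and the set of `r` for which there is such a frame is PBD-closed.
Giving weight `3` to the points of a transversal design with five groups of size `m`, one of them
truncated to size `t`, then leads from `r = 3m + 1` and `r = 3t + 1` to `r = 3(4m + t) + 1`,
provided `m` is a prime power `≥ 4` or coprime to `6`. The small values of `r` not reached by this
recursion come from finite fields, which give Kirkman triple systems of orders `2q + 1` and `3q` for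
prime powers `q ≡ 1 (mod 6)`, and from a few explicit difference families.
-/

/-- The orbit of `u` under a map `f` of order three. Such a map encodes a parallel class, whose
triples are the orbits. -/
def triple {V : Type*} (f : V → V) (u : V) : Set V := {u, f u, f (f u)}

/-- The pair `u`, `v` is an edge of one of the triangles cut out by a map `f` of order three. -/
def Joins {V : Type*} (f : V → V) (u v : V) : Prop := f u = v ∨ f v = u

section Triple

variable {V : Type*} {f : V → V} {u v : V}

theorem joins_comm : Joins f u v ↔ Joins f v u := or_comm

theorem mem_triple_self : u ∈ triple f u := Or.inl rfl

theorem mem_triple_iff (hf : ∀ u, f (f (f u)) = u) : v ∈ triple f u ↔ v = u ∨ Joins f u v := by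
  have hback : v = f (f u) ↔ f v = u :=
    ⟨fun h ↦ by rw [h, hf], fun h ↦ by rw [← h, hf]⟩
  simp only [triple, Joins, Set.mem_insert_iff, Set.mem_singleton_iff, hback, eq_comm (a := v)]

theorem triple_map (hf : ∀ u, f (f (f u)) = u) : triple f (f u) = triple f u := by
  ext w
  simp only [triple, hf, Set.mem_insert_iff, Set.mem_singleton_iff]
  tauto

theorem triple_eq_of_mem (hf : ∀ u, f (f (f u)) = u) (h : v ∈ triple f u) :
    triple f v = triple f u := by
  rcases h with rfl | rfl | rfl
  · rfl
  · exact triple_map hf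
  · rw [triple_map hf, triple_map hf]

theorem triple_eq_iff (hf : ∀ u, f (f (f u)) = u) :
    triple f u = triple f v ↔ u = v ∨ Joins f u v := by
  rw [joins_comm, ← mem_triple_iff hf]
  exact ⟨fun h ↦ h ▸ mem_triple_self, triple_eq_of_mem hf⟩

theorem Joins.trans {w : V} (hf : ∀ u, f (f (f u)) = u) (huv : Joins f u v) (hvw : Joins f v w)
    (huw : u ≠ w) : Joins f u w :=
  ((triple_eq_iff hf).1 (((triple_eq_iff hf).2 (.inr huv)).trans
    ((triple_eq_iff hf).2 (.inr hvw)))).resolve_left huw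

theorem ncard_triple (hf : ∀ u, f (f (f u)) = u) (hne : ∀ u, f u ≠ u) (u : V) :
    (triple f u).ncard = 3 :=
  Set.ncard_eq_three.2 ⟨u, f u, f (f u), (hne u).symm,
    fun h ↦ hne u (by conv_lhs => rw [h, hf]), (hne _).symm, rfl⟩

end Triple

/-- A family of parallel classes of triples on `V`, no pair lying in two triples. Each class is
encoded by a fixed-point-free map of order three whose orbits are the triples. -/
structure IsPartialKirkmanSystem {R V : Type*} (G : R → V → V) : Prop where
  iterate_three : ∀ p u, G p (G p (G p u)) = u
  ne_self : ∀ p u, G p u ≠ u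
  index_unique : ∀ {p q u v}, Joins (G p) u v → Joins (G q) u v → p = q

/-- A Kirkman triple system on `V` with parallel classes indexed by `R`. -/
structure IsKirkmanSystem {R V : Type*} (G : R → V → V) : Prop
    extends IsPartialKirkmanSystem G where
  exists_joins : ∀ {u v}, u ≠ v → ∃ p, Joins (G p) u v

/-- A Kirkman frame of type `2^R`: the points are `R × Bool`, the groups are the pairs
`{p} × Bool`, and `F p` fixes the group of `p` and partitions the other points into triples
transversal to the groups, so that each pair from distinct groups lies in exactly one triple. -/
structure IsKirkmanFrame {R : Type*} (F : R → R × Bool → R × Bool) : Prop where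
  map_group : ∀ p l, F p (p, l) = (p, l)
  iterate_three : ∀ p u, F p (F p (F p u)) = u
  fst_ne : ∀ {p u}, u.1 ≠ p → (F p u).1 ≠ u.1
  existsUnique_joins : ∀ {u v}, u.1 ≠ v.1 → ∃! p, Joins (F p) u v

/-- There is a Kirkman frame of type `2^R`. By `IsKirkmanSystem.hasKirkmanFrame` and
`HasKirkmanFrame.exists_isKirkmanSystem`, this amounts to the existence of a Kirkman triple system
of order `2 * |R| + 1`. -/
def HasKirkmanFrame (R : Type*) : Prop := ∃ F : R → R × Bool → R × Bool, IsKirkmanFrame F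

/-- The cliques in `𝓑` cover each edge of `Γ` exactly once. For `Γ` complete this is a pairwise
balanced design; for `Γ` complete multipartite, a group divisible design whose groups are the
parts. -/
structure IsCliqueDecomposition {X : Type*} (Γ : SimpleGraph X) (𝓑 : Set (Set X)) : Prop where
  isClique : ∀ S ∈ 𝓑, Γ.IsClique S
  existsUnique : ∀ {u v}, Γ.Adj u v → ∃! S, S ∈ 𝓑 ∧ u ∈ S ∧ v ∈ S

section Frame

variable {R R' : Type*}

theorem IsKirkmanFrame.map_of_fst_eq {F : R → R × Bool → R × Bool} (hF : IsKirkmanFrame F) {p : R}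
    {u : R × Bool} (hu : u.1 = p) : F p u = u := by
  subst hu
  exact hF.map_group u.1 u.2

theorem IsKirkmanFrame.fst_ne_index {F : R → R × Bool → R × Bool} (hF : IsKirkmanFrame F) {p : R}
    {u : R × Bool} (hu : u.1 ≠ p) : (F p u).1 ≠ p := fun h ↦ by
  have hfix : F p u = u := by
    simpa only [hF.map_of_fst_eq h] using hF.iterate_three p u
  exact hF.fst_ne hu (congrArg Prod.fst hfix)

theorem hasKirkmanFrame_of_subsingleton [Subsingleton R] : HasKirkmanFrame R :=
  ⟨fun _ u ↦ u, fun _ _ ↦ rfl, fun _ _ ↦ rfl, fun h ↦ (h (Subsingleton.elim _ _)).elim,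
    fun h ↦ (h (Subsingleton.elim _ _)).elim⟩

theorem HasKirkmanFrame.congr (h : HasKirkmanFrame R) (e : R ≃ R') : HasKirkmanFrame R' := by
  obtain ⟨F, hF⟩ := h
  let E : R × Bool ≃ R' × Bool := e.prodCongr (Equiv.refl Bool)
  let F' : R' → R' × Bool → R' × Bool := fun p u ↦ E (F (e.symm p) (E.symm u))
  have hjoins (p : R') (u v : R' × Bool) :
      Joins (F' p) u v ↔ Joins (F (e.symm p)) (E.symm u) (E.symm v) := by
    simp only [F', Joins, Equiv.eq_symm_apply]
  refine ⟨F', fun p l ↦ ?_, fun p u ↦ ?_, fun {p u} hu ↦ ?_, fun {u v} huv ↦ ?_⟩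
  · simp [F', E, hF.map_group]
  · simp only [F', Equiv.symm_apply_apply, hF.iterate_three, Equiv.apply_symm_apply]
  · have hfst := hF.fst_ne (p := e.symm p) (u := E.symm u) (e.symm.injective.ne hu)
    exact fun h ↦ hfst (e.eq_symm_apply.2 h)
  · simp only [hjoins]
    exact e.symm.bijective.existsUnique_iff.1
      (hF.existsUnique_joins (u := E.symm u) (v := E.symm v) (e.symm.injective.ne huv))

theorem hasKirkmanFrame_iff_fin [Finite R] {n : ℕ} (h : Nat.card R = n) :
    HasKirkmanFrame R ↔ HasKirkmanFrame (Fin n) :=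
  let e := Finite.equivFinOfCardEq h
  ⟨fun hR ↦ hR.congr e, fun hn ↦ hn.congr e.symm⟩

theorem exists_blockwise_map {𝓑 : Set (Set R)} (h𝓑 : IsCliqueDecomposition ⊤ 𝓑)
    (F : ∀ S ∈ 𝓑, S → S × Bool → S × Bool) (hF : ∀ S hS p l, F S hS p (p, l) = (p, l)) :
    ∃ F' : R → R × Bool → R × Bool, (∀ p l, F' p (p, l) = (p, l)) ∧
      ∀ (S : Set R) (hS : S ∈ 𝓑) (p : S) (u : S × Bool),
        F' p (Prod.map Subtype.val id u) = Prod.map Subtype.val id (F S hS p u) := by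
  have exists_image (p : R) (w : R × Bool) : ∃ w', (p = w.1 → w' = w) ∧
      ∀ S (hS : S ∈ 𝓑) (p' : S) (u : S × Bool), ↑p' = p → Prod.map Subtype.val id u = w →
        w' = Prod.map Subtype.val id (F S hS p' u) := by
    by_cases hpw : p = w.1
    · refine ⟨w, fun _ ↦ rfl, ?_⟩
      rintro S hS p' ⟨u, l⟩ rfl rfl
      obtain rfl : p' = u := Subtype.ext hpw
      rw [hF]
    · obtain ⟨S, ⟨hS, hp, hw⟩, hunique⟩ := h𝓑.existsUnique (u := p) (v := w.1) hpw
      refine ⟨Prod.map Subtype.val id (F S hS ⟨p, hp⟩ (⟨w.1, hw⟩, w.2)), fun h ↦ (hpw h).elim, ?_⟩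
      rintro T hT p' u rfl rfl
      obtain rfl := hunique T ⟨hT, p'.2, u.1.2⟩
      rfl
  choose F' hF'_group hF'_block using exists_image
  exact ⟨F', fun p l ↦ hF'_group _ _ rfl, fun S hS p u ↦ hF'_block _ _ S hS p u rfl rfl⟩

-- Every class map acts inside the block through its index and its argument.
theorem HasKirkmanFrame.of_isCliqueDecomposition {𝓑 : Set (Set R)}
    (h𝓑 : IsCliqueDecomposition ⊤ 𝓑) (h : ∀ S ∈ 𝓑, HasKirkmanFrame S) : HasKirkmanFrame R := by
  choose F hF using h
  obtain ⟨F', hF'_group, hF'⟩ := exists_blockwise_map h𝓑 F fun S hS ↦ (hF S hS).map_group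
  let ι (S : Set R) : S × Bool → R × Bool := Prod.map Subtype.val id
  have hι (S : Set R) : Function.Injective (ι S) :=
    Subtype.val_injective.prodMap Function.injective_id
  have exists_block {p : R} {w : R × Bool} (hpw : w.1 ≠ p) :
      ∃ S ∈ 𝓑, ∃ (p' : S) (u : S × Bool), ↑p' = p ∧ ι S u = w := by
    obtain ⟨S, ⟨hS, hp, hw⟩, -⟩ := h𝓑.existsUnique (u := p) (v := w.1) hpw.symm
    exact ⟨S, hS, ⟨p, hp⟩, (⟨w.1, hw⟩, w.2), rfl, rfl⟩
  have hjoins {S} (hS : S ∈ 𝓑) (p : S) (u v : S × Bool) :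
      Joins (F' p) (ι S u) (ι S v) ↔ Joins (F S hS p) u v := by
    simp only [Joins, ι, hF' S hS, (hι S).eq_iff]
  have index_mem {S} (hS : S ∈ 𝓑) {q : R} {u v : R × Bool} (hu : u.1 ∈ S) (hv : v.1 ∈ S)
      (huv : u.1 ≠ v.1) (h : F' q u = v) : q ∈ S := by
    by_cases hq : u.1 = q
    · exact hq ▸ hu
    obtain ⟨T, hT, q', u', rfl, rfl⟩ := exists_block hq
    have hvT : v.1 ∈ T := by
      rw [← h, hF' T hT]
      exact Subtype.coe_prop _
    obtain rfl := (h𝓑.existsUnique huv).unique ⟨hS, hu, hv⟩ ⟨hT, u'.1.2, hvT⟩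
    exact q'.2
  refine ⟨F', hF'_group, fun p w ↦ ?_, fun {p w} hw ↦ ?_, fun {u v} huv ↦ ?_⟩
  · by_cases hpw : w.1 = p
    · obtain rfl := hpw
      simp only [hF'_group]
    · obtain ⟨S, hS, p, u, rfl, rfl⟩ := exists_block hpw
      simp only [ι, hF' S hS, (hF S hS).iterate_three]
  · obtain ⟨S, hS, p, u, rfl, rfl⟩ := exists_block hw
    rw [hF' S hS]
    exact Subtype.coe_injective.ne ((hF S hS).fst_ne fun h ↦ hw (congrArg Subtype.val h))
  · obtain ⟨S, ⟨hS, hu, hv⟩, -⟩ := h𝓑.existsUnique huv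
    let u' : S × Bool := (⟨u.1, hu⟩, u.2)
    let v' : S × Bool := (⟨v.1, hv⟩, v.2)
    obtain ⟨p, hp, hunique⟩ := (hF S hS).existsUnique_joins (u := u') (v := v')
      fun h ↦ huv (congrArg Subtype.val h)
    refine ⟨p, (hjoins hS p u' v').2 hp, fun q hq ↦ ?_⟩
    have hqS : q ∈ S := hq.elim (index_mem hS hu hv huv) (index_mem hS hv hu huv.symm)
    exact congrArg Subtype.val (hunique ⟨q, hqS⟩ ((hjoins hS ⟨q, hqS⟩ u' v').1 hq))

end Frame

section OneMorePoint

variable {R V : Type*}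

theorem IsKirkmanSystem.of_existsUnique {G : R → V → V}
    (hiter : ∀ p u, G p (G p (G p u)) = u) (hne : ∀ p u, G p u ≠ u)
    (h : ∀ {u v}, u ≠ v → ∃! p, Joins (G p) u v) : IsKirkmanSystem G where
  iterate_three := hiter
  ne_self := hne
  index_unique {p q u v} hp hq := by
    have huv : u ≠ v := by
      rintro rfl
      exact hne p u (hp.elim id id)
    exact (h huv).unique hp hq
  exists_joins huv := (h huv).exists

theorem IsPartialKirkmanSystem.ne_of_joins {G : R → V → V} (hG : IsPartialKirkmanSystem G) {p : R}
    {u v : V} (h : Joins (G p) u v) : u ≠ v := by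
  rintro rfl
  exact hG.ne_self p u (h.elim id id)

/-- The points of a Kirkman triple system other than `v₀`, grouped by the triples through `v₀`. -/
def pointThrough (G : R → V → V) (v₀ : V) (u : R × Bool) : V :=
  bif u.2 then G u.1 (G u.1 v₀) else G u.1 v₀

section PointThrough

variable {G : R → V → V} {v₀ : V} {p : R} {u v : R × Bool}

theorem IsPartialKirkmanSystem.joins_pointThrough_iff (hG : IsPartialKirkmanSystem G) :
    Joins (G p) v₀ (pointThrough G v₀ u) ↔ u.1 = p := by
  have hself : Joins (G u.1) v₀ (pointThrough G v₀ u) := by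
    obtain ⟨q, _ | _⟩ := u
    · exact .inl rfl
    · exact .inr (hG.iterate_three q v₀)
  exact ⟨fun h ↦ hG.index_unique hself h, fun h ↦ h ▸ hself⟩

theorem IsPartialKirkmanSystem.pointThrough_ne (hG : IsPartialKirkmanSystem G) :
    pointThrough G v₀ u ≠ v₀ :=
  (hG.ne_of_joins (hG.joins_pointThrough_iff.2 rfl)).symm

theorem joins_pointThrough_of_fst_eq (h : u.1 = v.1) (huv : u ≠ v) :
    Joins (G u.1) (pointThrough G v₀ u) (pointThrough G v₀ v) := by
  obtain ⟨p, _ | _⟩ := u <;> obtain ⟨q, _ | _⟩ := v <;> obtain rfl : p = q := h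
  · exact (huv rfl).elim
  · exact .inl rfl
  · exact .inr rfl
  · exact (huv rfl).elim

theorem IsPartialKirkmanSystem.pointThrough_injective (hG : IsPartialKirkmanSystem G) :
    Function.Injective (pointThrough G v₀) := fun u v h ↦ by
  by_contra huv
  have hfst : u.1 = v.1 := (hG.joins_pointThrough_iff.1 (h ▸ hG.joins_pointThrough_iff.2 rfl)).symm
  exact hG.ne_of_joins (joins_pointThrough_of_fst_eq hfst huv) h

theorem IsKirkmanSystem.exists_pointThrough_eq (hG : IsKirkmanSystem G) {w : V} (hw : w ≠ v₀) :
    ∃ u, pointThrough G v₀ u = w := by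
  obtain ⟨p, h | h⟩ := hG.exists_joins hw.symm
  · exact ⟨(p, false), h⟩
  · exact ⟨(p, true), by simp [pointThrough, ← h, hG.iterate_three]⟩

theorem IsPartialKirkmanSystem.fst_ne_of_joins (hG : IsPartialKirkmanSystem G) (huv : u.1 ≠ v.1)
    (h : Joins (G p) (pointThrough G v₀ u) (pointThrough G v₀ v)) : u.1 ≠ p := by
  rintro rfl
  exact huv (hG.joins_pointThrough_iff.1 <| (hG.joins_pointThrough_iff.2 rfl).trans
    (hG.iterate_three _) h hG.pointThrough_ne.symm).symm

end PointThrough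

theorem IsKirkmanSystem.hasKirkmanFrame {G : R → V → V} (hG : IsKirkmanSystem G) (v₀ : V) :
    HasKirkmanFrame R := by
  let e := pointThrough G v₀
  have exists_image (p : R) (u : R × Bool) :
      ∃ u', (u.1 = p → u' = u) ∧ (u.1 ≠ p → e u' = G p (e u)) := by
    by_cases hu : u.1 = p
    · exact ⟨u, fun _ ↦ rfl, fun h ↦ (h hu).elim⟩
    · obtain ⟨u', hu'⟩ := hG.exists_pointThrough_eq (v₀ := v₀) (w := G p (e u))
        fun h ↦ hu (hG.joins_pointThrough_iff.1 (.inr h))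
      exact ⟨u', fun h ↦ (hu h).elim, fun _ ↦ hu'⟩
  choose F hF_group hF using exists_image
  have hfst {p u} (hu : u.1 ≠ p) : (F p u).1 ≠ u.1 := fun h ↦ by
    have hjoins : Joins (G p) (e u) (e (F p u)) := .inl (hF p u hu).symm
    have hne : u ≠ F p u := fun h' ↦ hG.ne_of_joins hjoins (congrArg e h')
    exact hu (hG.index_unique (joins_pointThrough_of_fst_eq h.symm hne) hjoins)
  have hjoins {p u v} (huv : u.1 ≠ v.1) : Joins (F p) u v ↔ Joins (G p) (e u) (e v) := by
    have himage {u v} (huv : u.1 ≠ v.1) (h : F p u = v) : G p (e u) = e v := by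
      rw [← h, hF]
      exact fun hu ↦ huv (congrArg Prod.fst ((hF_group p u hu).symm.trans h))
    refine ⟨Or.imp (himage huv) (himage huv.symm), fun h ↦ ?_⟩
    have hu := hG.fst_ne_of_joins huv h
    have hv := hG.fst_ne_of_joins huv.symm (joins_comm.1 h)
    simpa only [Joins, ← hF p u hu, ← hF p v hv, hG.pointThrough_injective.eq_iff, e] using h
  refine ⟨F, fun p l ↦ hF_group p (p, l) rfl, fun p u ↦ ?_, hfst, fun {u v} huv ↦ ?_⟩
  · by_cases hu : u.1 = p
    · simp only [hF_group p u hu]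
    · have hstep {u} (hu : u.1 ≠ p) : (F p u).1 ≠ p :=
        hG.fst_ne_of_joins (hfst hu) ((hjoins (hfst hu)).1 (.inr rfl))
      apply hG.pointThrough_injective (v₀ := v₀)
      change e _ = e u
      rw [hF p _ (hstep (hstep hu)), hF p _ (hstep hu), hF p _ hu, hG.iterate_three]
  · obtain ⟨p, hp⟩ := hG.exists_joins (hG.pointThrough_injective.ne (ne_of_apply_ne _ huv))
    exact ⟨p, (hjoins huv).2 hp, fun q hq ↦ hG.index_unique ((hjoins huv).1 hq) hp⟩

theorem IsKirkmanSystem.hasKirkmanFrame_fin [Finite V] {G : R → V → V} {n : ℕ}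
    (hG : IsKirkmanSystem G) (hV : Nat.card V = 2 * n + 1) : HasKirkmanFrame (Fin n) := by
  classical
  obtain ⟨v₀⟩ : Nonempty V := (Nat.card_pos_iff.1 (by lia)).1
  let f : R × Bool → {v // v ≠ v₀} := fun u ↦ ⟨pointThrough G v₀ u, hG.pointThrough_ne⟩
  have hinj : Function.Injective f := fun u v h ↦
    hG.pointThrough_injective (congrArg Subtype.val h)
  have hsurj : Function.Surjective f := fun w ↦
    (hG.exists_pointThrough_eq w.2).imp fun _ ↦ Subtype.ext
  have : Finite (R × Bool) := .of_injective f hinj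
  have : Finite R := .of_injective (·, false) (Prod.mk_left_injective false)
  have hcard := Nat.card_congr
    ((Equiv.ofBijective f ⟨hinj, hsurj⟩).optionCongr.trans (Equiv.optionSubtypeNe v₀))
  rw [Finite.card_option, Nat.card_prod, Nat.card_eq_fintype_card (α := Bool),
    Fintype.card_bool] at hcard
  exact (hasKirkmanFrame_iff_fin (by lia)).1 (hG.hasKirkmanFrame v₀)

open scoped Classical in
/-- The class map that adds to the triples of `F p` the triple of the group of `p` with a new point
`none`. -/
noncomputable def completeClass (F : R → R × Bool → R × Bool) (p : R) :
    Option (R × Bool) → Option (R × Bool)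
  | none => some (p, false)
  | some u => if u.1 = p then bif u.2 then none else some (p, true) else some (F p u)

section CompleteClass

variable {F : R → R × Bool → R × Bool} {p : R} {u v : R × Bool}

theorem joins_completeClass_none_some :
    Joins (completeClass F p) none (some u) ↔ u.1 = p := by
  obtain ⟨q, _ | _⟩ := u <;> by_cases hq : q = p <;>
    simp [Joins, completeClass, hq, eq_comm (a := p)]

theorem joins_completeClass_of_fst_eq (h : u.1 = v.1) (huv : u ≠ v) (hF : IsKirkmanFrame F) :
    Joins (completeClass F p) (some u) (some v) ↔ u.1 = p := by
  by_cases hu : u.1 = p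
  · obtain ⟨a, _ | _⟩ := u <;> obtain ⟨b, _ | _⟩ := v <;> simp_all [Joins, completeClass]
  · have hne {u v} (hu : u.1 ≠ p) (h : u.1 = v.1) : completeClass F p (some u) ≠ some v :=
      fun h' ↦ hF.fst_ne hu <| by
        rw [completeClass, if_neg hu, Option.some_inj] at h'
        rw [h', h]
    exact iff_of_false (not_or.2 ⟨hne hu h, hne (h ▸ hu) h.symm⟩) hu

theorem joins_completeClass_of_fst_ne (h : u.1 ≠ v.1) (hF : IsKirkmanFrame F) :
    Joins (completeClass F p) (some u) (some v) ↔ Joins (F p) u v := by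
  have himage {u v : R × Bool} (h : u.1 ≠ v.1) :
      completeClass F p (some u) = some v ↔ F p u = v := by
    by_cases hu : u.1 = p
    · have hv : (p, true) ≠ v := fun h' ↦ h (hu.trans (congrArg Prod.fst h'))
      have huv : u ≠ v := ne_of_apply_ne _ h
      rw [hF.map_of_fst_eq hu]
      obtain ⟨a, _ | _⟩ := u <;> simp_all [completeClass]
    · simp [completeClass, hu]
  exact or_congr (himage h) (himage h.symm)

theorem existsUnique_joins_completeClass (hF : IsKirkmanFrame F) {a b : Option (R × Bool)}
    (hab : a ≠ b) : ∃! p, Joins (completeClass F p) a b := by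
  rcases a with _ | u <;> rcases b with _ | v
  · exact (hab rfl).elim
  · simp only [joins_completeClass_none_some, existsUnique_eq']
  · simp only [joins_comm (u := some u), joins_completeClass_none_some, existsUnique_eq']
  · have huv : u ≠ v := fun h ↦ hab (congrArg some h)
    by_cases h : u.1 = v.1
    · simp only [joins_completeClass_of_fst_eq h huv hF, existsUnique_eq']
    · simpa only [joins_completeClass_of_fst_ne h hF] using hF.existsUnique_joins h

theorem IsKirkmanFrame.isKirkmanSystem (hF : IsKirkmanFrame F) :
    IsKirkmanSystem (completeClass F) := by
  have hne (p : R) (a : Option (R × Bool)) : completeClass F p a ≠ a := by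
    obtain _ | ⟨q, l⟩ := a
    · simp [completeClass]
    by_cases hq : q = p
    · cases l <;> simp [completeClass, hq]
    · simpa [completeClass, hq] using ne_of_apply_ne _ (hF.fst_ne (u := (q, l)) hq)
  refine .of_existsUnique (fun p a ↦ ?_) hne fun hab ↦ existsUnique_joins_completeClass hF hab
  obtain _ | ⟨q, l⟩ := a
  · simp [completeClass]
  by_cases hq : q = p
  · cases l <;> simp [completeClass, hq]
  · have hindex {u : R × Bool} (hu : u.1 ≠ p) := hF.fst_ne_index hu
    simp [completeClass, hq, hindex, hF.iterate_three]

end CompleteClass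

theorem HasKirkmanFrame.exists_isKirkmanSystem (h : HasKirkmanFrame R) :
    ∃ G : R → Option (R × Bool) → Option (R × Bool), IsKirkmanSystem G :=
  h.imp' completeClass fun _ hF ↦ hF.isKirkmanSystem

end OneMorePoint

section CliqueDecomposition

open SimpleGraph

variable {X Y W κ A Q : Type*} {Γ : SimpleGraph X} {𝓑 : Set (Set X)} {k : ℕ}

/-- The edges of `Γ` decompose into cliques of size `k`. -/
def HasCliqueDecomposition (k : ℕ) (Γ : SimpleGraph X) : Prop :=
  ∃ 𝓑, IsCliqueDecomposition Γ 𝓑 ∧ ∀ S ∈ 𝓑, S.ncard = k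

theorem IsCliqueDecomposition.comap (h : IsCliqueDecomposition Γ 𝓑) (f : Y ↪ X) :
    IsCliqueDecomposition (Γ.comap f) (Set.preimage f '' 𝓑) := by
  refine ⟨?_, fun {u v} huv ↦ ?_⟩
  · rintro - ⟨S, hS, rfl⟩ u hu v hv huv
    exact h.isClique S hS hu hv (f.injective.ne huv)
  · obtain ⟨S, ⟨hS, hu, hv⟩, hunique⟩ := h.existsUnique (u := f u) (v := f v) huv
    refine ⟨f ⁻¹' S, ⟨⟨S, hS, rfl⟩, hu, hv⟩, ?_⟩
    rintro - ⟨⟨T, hT, rfl⟩, hu, hv⟩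
    rw [hunique T ⟨hT, hu, hv⟩]

theorem HasCliqueDecomposition.comap (h : HasCliqueDecomposition k Γ) (e : Y ≃ X) :
    HasCliqueDecomposition k (Γ.comap e) := by
  obtain ⟨𝓑, h𝓑, hcard⟩ := h
  refine ⟨_, h𝓑.comap e.toEmbedding, ?_⟩
  rintro - ⟨S, hS, rfl⟩
  rw [← hcard S hS]
  exact Set.ncard_preimage_of_injective_subset_range e.injective (by simp)

-- Wilson's fundamental construction.
theorem IsCliqueDecomposition.hasCliqueDecomposition_comap_fst (h : IsCliqueDecomposition Γ 𝓑)
    (hW : ∀ S ∈ 𝓑, HasCliqueDecomposition k ((⊤ : SimpleGraph S).comap (Prod.fst : S × W → S))) :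
    HasCliqueDecomposition k (Γ.comap (Prod.fst : X × W → X)) := by
  choose 𝓒 h𝓒 hcard using hW
  let ι (S : Set X) : S × W → X × W := Prod.map Subtype.val id
  have hι (S : Set X) : Function.Injective (ι S) :=
    Subtype.val_injective.prodMap Function.injective_id
  refine ⟨{T | ∃ S hS, ∃ C ∈ 𝓒 S hS, ι S '' C = T}, ⟨?_, fun {u v} huv ↦ ?_⟩, ?_⟩
  · rintro - ⟨S, hS, C, hC, rfl⟩ - ⟨u, hu, rfl⟩ - ⟨v, hv, rfl⟩ huv
    have hadj : u.1 ≠ v.1 := (h𝓒 S hS).isClique C hC hu hv (ne_of_apply_ne _ huv)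
    exact h.isClique S hS u.1.2 v.1.2 (Subtype.val_injective.ne hadj)
  · obtain ⟨S, ⟨hS, hu, hv⟩, hunique⟩ := h.existsUnique (u := u.1) (v := v.1) huv
    let u' : S × W := (⟨u.1, hu⟩, u.2)
    let v' : S × W := (⟨v.1, hv⟩, v.2)
    obtain ⟨C, ⟨hC, hu', hv'⟩, hC_unique⟩ := (h𝓒 S hS).existsUnique (u := u') (v := v')
      fun h' ↦ Γ.ne_of_adj huv (congrArg Subtype.val h')
    refine ⟨ι S '' C, ⟨⟨S, hS, C, hC, rfl⟩, ⟨u', hu', rfl⟩, ⟨v', hv', rfl⟩⟩, ?_⟩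
    rintro - ⟨⟨T, hT, C', hC', rfl⟩, ⟨u'', hu'', rfl⟩, ⟨v'', hv'', rfl⟩⟩
    obtain rfl := hunique T ⟨hT, u''.1.2, v''.1.2⟩
    rw [hC_unique C' ⟨hC', hu'', hv''⟩]
  · rintro - ⟨S, hS, C, hC, rfl⟩
    rw [Set.ncard_image_of_injective C (hι S), hcard S hS C hC]

-- `B` is a difference family, and `Γ` the Cayley graph with connection set `D`.
theorem isCliqueDecomposition_translates {G J K : Type*} [AddCommGroup G] {Γ : SimpleGraph G}
    {D : Set G} (hΓ : ∀ u v, Γ.Adj u v ↔ u - v ∈ D) {B : J → K → G}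
    (hB : ∀ j a b, a ≠ b → B j a - B j b ∈ D)
    (hD : ∀ d ∈ D, ∃! t : J × K × K, B t.1 t.2.1 - B t.1 t.2.2 = d) :
    IsCliqueDecomposition Γ (Set.range fun t : J × G ↦ Set.range fun a ↦ B t.1 a + t.2) := by
  refine ⟨?_, fun {u v} huv ↦ ?_⟩
  · rintro - ⟨⟨j, g⟩, rfl⟩ - ⟨a, rfl⟩ - ⟨b, rfl⟩ hab
    rw [hΓ, add_sub_add_right_eq_sub]
    exact hB j a b fun h ↦ hab (by rw [h])
  · obtain ⟨⟨j, a, b⟩, hab, hunique⟩ := hD _ ((hΓ u v).1 huv)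
    refine ⟨_, ⟨⟨(j, u - B j a), rfl⟩, ⟨a, add_sub_cancel _ _⟩, ⟨b, ?_⟩⟩, ?_⟩
    · calc B j b + (u - B j a) = u - (B j a - B j b) := by abel
        _ = v := by rw [hab, sub_sub_cancel]
    · rintro - ⟨⟨⟨j', g⟩, rfl⟩, ⟨a', rfl⟩, ⟨b', rfl⟩⟩
      obtain ⟨rfl, rfl, rfl⟩ : j' = j ∧ a' = a ∧ b' = b := by
        simpa using hunique (j', a', b') (add_sub_add_right_eq_sub _ _ _).symm
      simp

theorem hasCliqueDecomposition_translates {G J K : Type*} [AddCommGroup G] {Γ : SimpleGraph G}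
    {D : Set G} (hΓ : ∀ u v, Γ.Adj u v ↔ u - v ∈ D) {B : J → K → G}
    (hB : ∀ j a b, a ≠ b → B j a - B j b ∈ D)
    (hD : ∀ d ∈ D, ∃! t : J × K × K, B t.1 t.2.1 - B t.1 t.2.2 = d) :
    HasCliqueDecomposition (Nat.card K) Γ := by
  refine ⟨_, isCliqueDecomposition_translates hΓ hB hD, ?_⟩
  rintro - ⟨⟨j, g⟩, rfl⟩
  refine Set.ncard_range_of_injective fun a b hab ↦ ?_
  by_contra hne
  have hzero : g - g ∈ D := by simpa [add_right_cancel hab] using hB j a b hne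
  exact (hΓ g g).not.1 Γ.irrefl hzero

-- The maps `f c` are the rows of an orthogonal array of strength two and index one.
theorem isCliqueDecomposition_transversal {f : κ → Q → A}
    (hf : Pairwise fun c d ↦ Function.Bijective fun x ↦ (f c x, f d x)) :
    IsCliqueDecomposition ((⊤ : SimpleGraph κ).comap (Prod.fst : κ × A → κ))
      (Set.range fun x ↦ Set.range fun c ↦ (c, f c x)) := by
  refine ⟨?_, fun {u v} huv ↦ ?_⟩
  · rintro - ⟨x, rfl⟩ - ⟨c, rfl⟩ - ⟨d, rfl⟩ hcd
    exact ne_of_apply_ne (fun c ↦ (c, f c x)) hcd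
  · obtain ⟨x, hx, hunique⟩ := (hf huv).existsUnique (u.2, v.2)
    obtain ⟨hu, hv⟩ := Prod.mk.inj hx
    refine ⟨_, ⟨⟨x, rfl⟩, ⟨u.1, Prod.ext rfl hu⟩, ⟨v.1, Prod.ext rfl hv⟩⟩, ?_⟩
    rintro - ⟨⟨y, rfl⟩, ⟨c, rfl⟩, ⟨d, rfl⟩⟩
    rw [hunique y rfl]

theorem ncard_transversal (f : κ → A) : (Set.range fun c ↦ (c, f c)).ncard = Nat.card κ :=
  Set.ncard_range_of_injective fun _ _ h ↦ congrArg Prod.fst h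

/-- The levels of the functions `x + s c * y` and `y` on the affine plane over a ring. -/
def affineLevel [CommRing A] (s : κ → A) : Option κ → A × A → A
  | none, x => x.2
  | some c, x => x.1 + s c * x.2

theorem bijective_affineLevel [CommRing A] {s : κ → A}
    (hs : Pairwise fun c d ↦ IsUnit (s c - s d)) :
    Pairwise fun c d ↦ Function.Bijective fun x ↦ (affineLevel s c x, affineLevel s d x) := by
  have hnone (c : κ) : Function.Bijective fun x : A × A ↦ (x.2, x.1 + s c * x.2) := by
    refine Function.bijective_iff_has_inverse.2
      ⟨fun z ↦ (z.2 - s c * z.1, z.1), fun x ↦ ?_, fun z ↦ ?_⟩ <;> simp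
  rintro (_ | c) (_ | d) hcd
  · exact (hcd rfl).elim
  · exact hnone d
  · exact Prod.swap_bijective.comp (hnone c)
  · obtain ⟨w, hw⟩ := hs (ne_of_apply_ne some hcd)
    have hsc : s c = w + s d := by rw [hw, sub_add_cancel]
    refine Function.bijective_iff_has_inverse.2 ⟨fun z ↦
      (z.1 - s c * (↑w⁻¹ * (z.1 - z.2)), ↑w⁻¹ * (z.1 - z.2)), fun x ↦ ?_, fun z ↦ ?_⟩
    · have hy : (↑w⁻¹ : A) * (x.1 + s c * x.2 - (x.1 + s d * x.2)) = x.2 := by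
        linear_combination (x.2 * ↑w⁻¹) * hsc + x.2 * w.inv_mul
      ext <;> simp only [affineLevel, hy, add_sub_cancel_right]
    · ext
      · simp [affineLevel]
      · simp only [affineLevel]
        linear_combination (-(↑w⁻¹ : A) * (z.1 - z.2)) * hsc - (z.1 - z.2) * w.mul_inv

end CliqueDecomposition

section Translations

variable {P V : Type*} [AddCommGroup V] {d : P → V}

theorem joins_add_iff {d u v : V} : Joins (· + d) u v ↔ v - u = d ∨ v - u = -d := by
  rw [Joins, add_comm u, add_comm v, ← eq_sub_iff_add_eq, ← eq_sub_iff_add_eq, eq_comm,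
    eq_comm (a := d), ← neg_sub v u, neg_eq_iff_eq_neg]

theorem isPartialKirkmanSystem_translations (hV : ∀ v : V, v + v + v = 0) (hd : ∀ p, d p ≠ 0)
    (hdir : ∀ p q, d p = d q ∨ d p = -d q → p = q) :
    IsPartialKirkmanSystem fun p u ↦ u + d p where
  iterate_three p u := by rw [add_assoc, add_assoc, ← add_assoc (d p), hV, add_zero]
  ne_self p u h := hd p (add_eq_left.1 h)
  index_unique {p q u v} hp hq := by
    apply hdir
    rcases joins_add_iff.1 hp with hp | hp <;> rcases joins_add_iff.1 hq with hq | hq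
    · exact .inl (hp.symm.trans hq)
    · exact .inr (hp.symm.trans hq)
    · exact .inr (neg_eq_iff_eq_neg.1 (hp.symm.trans hq))
    · exact .inl (neg_injective (hp.symm.trans hq))

end Translations

theorem hasKirkmanFrame_four : HasKirkmanFrame (Fin 4) := by
  let d : Fin 4 → ZMod 3 × ZMod 3 := ![(1, 0), (0, 1), (1, 1), (1, 2)]
  have hpartial : IsPartialKirkmanSystem fun p u ↦ u + d p :=
    isPartialKirkmanSystem_translations (by decide) (by decide) (by decide)
  have hcover : ∀ w : ZMod 3 × ZMod 3, w ≠ 0 → ∃ p, w = d p ∨ w = -d p := by decide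
  have hsystem : IsKirkmanSystem fun p u ↦ u + d p :=
    ⟨hpartial, fun huv ↦ (hcover _ (sub_ne_zero.2 huv.symm)).imp fun _ ↦ joins_add_iff.2⟩
  exact hsystem.hasKirkmanFrame 0

section Adjoin

variable {P V : Type*} {G : P → V → V}

/-- The pairs of points lying in no triple of a family of parallel classes. -/
def leaveGraph (G : P → V → V) : SimpleGraph V where
  Adj u v := u ≠ v ∧ ∀ p, ¬ Joins (G p) u v
  symm := ⟨fun _ _ h ↦ ⟨h.1.symm, fun p hp ↦ h.2 p (joins_comm.1 hp)⟩⟩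
  loopless := ⟨fun _ h ↦ h.1 rfl⟩

theorem HasKirkmanFrame.of_isCliqueDecomposition_fin {R : Type*} [Finite R] {𝓑 : Set (Set R)}
    (h𝓑 : IsCliqueDecomposition ⊤ 𝓑) (h : ∀ S ∈ 𝓑, HasKirkmanFrame (Fin S.ncard)) :
    HasKirkmanFrame R :=
  .of_isCliqueDecomposition h𝓑 fun S hS ↦ (hasKirkmanFrame_iff_fin rfl).2 (h S hS)

/-- The triples of the class `p` extended by a new point for `p`, the new points, and a
decomposition of the leave. -/
def adjoinBlocks (G : P → V → V) (𝓑 : Set (Set V)) : Set (Set (V ⊕ P)) :=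
  insert (Set.range Sum.inr) ((Sum.inl '' ·) '' 𝓑 ∪
    Set.range fun t : P × V ↦ insert (Sum.inr t.1) (Sum.inl '' triple (G t.1) t.2))

theorem IsPartialKirkmanSystem.joins_of_mem_triple (hG : IsPartialKirkmanSystem G) {p : P}
    {u v w : V} (hu : u ∈ triple (G p) w) (hv : v ∈ triple (G p) w) (huv : u ≠ v) :
    Joins (G p) u v :=
  ((triple_eq_iff (hG.iterate_three p)).1 ((triple_eq_of_mem (hG.iterate_three p) hu).trans
    (triple_eq_of_mem (hG.iterate_three p) hv).symm)).resolve_left huv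

theorem IsPartialKirkmanSystem.existsUnique_adjoinBlocks_inl_inr (hG : IsPartialKirkmanSystem G)
    (𝓑 : Set (Set V)) (u : V) (p : P) :
    ∃! S, S ∈ adjoinBlocks G 𝓑 ∧ Sum.inl u ∈ S ∧ Sum.inr p ∈ S := by
  refine ⟨_, ⟨.inr (.inr ⟨(p, u), rfl⟩), .inr ⟨u, mem_triple_self, rfl⟩, .inl rfl⟩, ?_⟩
  rintro - ⟨rfl | ⟨S, -, rfl⟩ | ⟨⟨q, v⟩, rfl⟩, hu, hp⟩
  · simp at hu
  · simp at hp
  · obtain rfl : p = q := by simpa using hp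
    have hu : u ∈ triple (G p) v := by simpa using hu
    simp only [triple_eq_of_mem (hG.iterate_three p) hu]

theorem IsPartialKirkmanSystem.existsUnique_adjoinBlocks_inl_inl (hG : IsPartialKirkmanSystem G)
    {𝓑 : Set (Set V)} (h𝓑 : IsCliqueDecomposition (leaveGraph G) 𝓑) {u v : V} (huv : u ≠ v) :
    ∃! S, S ∈ adjoinBlocks G 𝓑 ∧ Sum.inl u ∈ S ∧ Sum.inl v ∈ S := by
  by_cases hadj : (leaveGraph G).Adj u v
  · obtain ⟨S, ⟨hS, hu, hv⟩, hunique⟩ := h𝓑.existsUnique hadj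
    refine ⟨Sum.inl '' S, ⟨.inr (.inl ⟨S, hS, rfl⟩), ⟨u, hu, rfl⟩, ⟨v, hv, rfl⟩⟩, ?_⟩
    rintro - ⟨rfl | ⟨T, hT, rfl⟩ | ⟨⟨p, w⟩, rfl⟩, hu, hv⟩
    · simp at hu
    · simp only [hunique T ⟨hT, by simpa using hu, by simpa using hv⟩]
    · exact (hadj.2 p (hG.joins_of_mem_triple (by simpa using hu) (by simpa using hv) huv)).elim
  · obtain ⟨p, hp⟩ : ∃ p, Joins (G p) u v := by simpa [leaveGraph, huv] using hadj
    have hv : v ∈ triple (G p) u := (mem_triple_iff (hG.iterate_three p)).2 (.inr hp)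
    refine ⟨_, ⟨.inr (.inr ⟨(p, u), rfl⟩), .inr ⟨u, mem_triple_self, rfl⟩, .inr ⟨v, hv, rfl⟩⟩, ?_⟩
    rintro - ⟨rfl | ⟨T, hT, rfl⟩ | ⟨⟨q, w⟩, rfl⟩, hu', hv'⟩
    · simp at hu'
    · exact (hadj (h𝓑.isClique T hT (by simpa using hu') (by simpa using hv') huv)).elim
    · have hu' : u ∈ triple (G q) w := by simpa using hu'
      obtain rfl := hG.index_unique hp (hG.joins_of_mem_triple hu' (by simpa using hv') huv)
      simp only [triple_eq_of_mem (hG.iterate_three p) hu']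

theorem IsPartialKirkmanSystem.isCliqueDecomposition_adjoinBlocks {𝓑 : Set (Set V)}
    (hG : IsPartialKirkmanSystem G) (h𝓑 : IsCliqueDecomposition (leaveGraph G) 𝓑) :
    IsCliqueDecomposition ⊤ (adjoinBlocks G 𝓑) := by
  refine ⟨fun S _ u _ v _ huv ↦ huv, ?_⟩
  rintro (u | p) (v | q) huv
  · exact hG.existsUnique_adjoinBlocks_inl_inl h𝓑 (ne_of_apply_ne _ huv)
  · exact hG.existsUnique_adjoinBlocks_inl_inr 𝓑 u q
  · simpa only [and_comm (a := Sum.inr p ∈ _)] using hG.existsUnique_adjoinBlocks_inl_inr 𝓑 v p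
  · have hpq : p ≠ q := ne_of_apply_ne _ huv
    refine ⟨_, ⟨.inl rfl, ⟨p, rfl⟩, ⟨q, rfl⟩⟩, ?_⟩
    rintro - ⟨rfl | ⟨T, -, rfl⟩ | ⟨⟨r, w⟩, rfl⟩, hp, hq⟩
    · rfl
    · simp at hp
    · exact (hpq (by simp_all)).elim

theorem IsPartialKirkmanSystem.hasKirkmanFrame_sum [Finite V] [Finite P]
    (hG : IsPartialKirkmanSystem G) (hleave : HasCliqueDecomposition 4 (leaveGraph G))
    (hP : HasKirkmanFrame P) : HasKirkmanFrame (V ⊕ P) := by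
  obtain ⟨𝓑, h𝓑, hcard⟩ := hleave
  refine .of_isCliqueDecomposition_fin (hG.isCliqueDecomposition_adjoinBlocks h𝓑) ?_
  rintro - (rfl | ⟨S, hS, rfl⟩ | ⟨⟨p, u⟩, rfl⟩)
  · rw [Set.ncard_range_of_injective Sum.inr_injective]
    exact (hasKirkmanFrame_iff_fin rfl).1 hP
  · rw [Set.ncard_image_of_injective _ Sum.inl_injective, hcard S hS]
    exact hasKirkmanFrame_four
  · rw [Set.ncard_insert_of_notMem (by simp), Set.ncard_image_of_injective _ Sum.inl_injective,
      ncard_triple (hG.iterate_three p) (hG.ne_self p)]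
    exact hasKirkmanFrame_four

theorem leaveGraph_eq_bot (hG : IsKirkmanSystem G) : leaveGraph G = ⊥ :=
  eq_bot_iff.2 fun _ _ h ↦
    let ⟨p, hp⟩ := hG.exists_joins h.1
    h.2 p hp

theorem hasCliqueDecomposition_bot (k : ℕ) : HasCliqueDecomposition k (⊥ : SimpleGraph V) :=
  ⟨∅, ⟨by simp, fun h ↦ h.elim⟩, by simp⟩

theorem HasKirkmanFrame.three_mul_add_one {r : ℕ} (h : HasKirkmanFrame (Fin r)) :
    HasKirkmanFrame (Fin (3 * r + 1)) := by
  obtain ⟨G, hG⟩ := h.exists_isKirkmanSystem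
  refine (hasKirkmanFrame_iff_fin ?_).1 (hG.hasKirkmanFrame_sum ?_ h)
  · simp
    ring
  · exact leaveGraph_eq_bot hG ▸ hasCliqueDecomposition_bot 4

theorem leaveGraph_translations_adj_iff [AddCommGroup V] {d : P → V} {u v : V} :
    (leaveGraph fun p u ↦ u + d p).Adj u v ↔
      u - v ∈ {w | w ≠ 0 ∧ ∀ p, w ≠ d p ∧ w ≠ -d p} := by
  refine and_congr sub_ne_zero.symm (forall_congr' fun p ↦ ?_)
  rw [joins_comm, joins_add_iff, not_or]

set_option synthInstance.maxSize 256 in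
-- Over `(ZMod 3)^3`, the translations in seven of the thirteen directions leave the pairs in the
-- six directions that occur as differences in `{0, e₁, e₂, e₃}`.
theorem hasKirkmanFrame_thirty_four (h : HasKirkmanFrame (Fin 7)) :
    HasKirkmanFrame (Fin 34) := by
  let d : Fin 7 → ZMod 3 × ZMod 3 × ZMod 3 :=
    ![(1, 1, 0), (1, 0, 1), (0, 1, 1), (1, 1, 1), (1, 1, 2), (1, 2, 1), (2, 1, 1)]
  let B : Unit → Fin 4 → ZMod 3 × ZMod 3 × ZMod 3 := fun _ ↦ ![0, (1, 0, 0), (0, 1, 0), (0, 0, 1)]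
  have hG : IsPartialKirkmanSystem fun p u ↦ u + d p :=
    isPartialKirkmanSystem_translations (by decide) (by decide) (by decide)
  have hleave : HasCliqueDecomposition (Nat.card (Fin 4)) (leaveGraph fun p u ↦ u + d p) :=
    hasCliqueDecomposition_translates (fun _ _ ↦ leaveGraph_translations_adj_iff) (B := B)
      (by decide) (by simp only [ExistsUnique, Set.mem_ofPred_eq]; decide)
  rw [Nat.card_fin] at hleave
  refine (hasKirkmanFrame_iff_fin ?_).1 (hG.hasKirkmanFrame_sum hleave h)
  simp

end Adjoin

section GroupDivisibleDesign

open SimpleGraph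

variable {X ι : Type*} {π : X → ι} {𝓑 : Set (Set X)}

/-- The blocks of a group divisible design with groups the fibres of `π`, together with the groups
extended by a common new point `none`. -/
def fillGroups (π : X → ι) (𝓑 : Set (Set X)) : Set (Set (Option X)) :=
  (some '' ·) '' 𝓑 ∪ Set.range fun i ↦ insert none (some '' (π ⁻¹' {i}))

theorem isCliqueDecomposition_fillGroups
    (h𝓑 : IsCliqueDecomposition ((⊤ : SimpleGraph ι).comap π) 𝓑) :
    IsCliqueDecomposition ⊤ (fillGroups π 𝓑) := by
  have none_some (x : X) : ∃! S, S ∈ fillGroups π 𝓑 ∧ none ∈ S ∧ some x ∈ S := by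
    refine ⟨_, ⟨.inr ⟨π x, rfl⟩, .inl rfl, .inr ⟨x, rfl, rfl⟩⟩, ?_⟩
    rintro - ⟨⟨S, -, rfl⟩ | ⟨i, rfl⟩, hnone, hx⟩
    · simp at hnone
    · obtain rfl : π x = i := by simpa using hx
      rfl
  refine ⟨fun S _ u _ v _ huv ↦ huv, ?_⟩
  rintro (_ | u) (_ | v) huv
  · exact (huv rfl).elim
  · exact none_some v
  · simpa only [and_comm (a := none ∈ _)] using none_some u
  · have huv : u ≠ v := ne_of_apply_ne _ huv
    by_cases hπ : π u = π v
    · refine ⟨_, ⟨.inr ⟨π u, rfl⟩, .inr ⟨u, rfl, rfl⟩, .inr ⟨v, hπ.symm, rfl⟩⟩, ?_⟩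
      rintro - ⟨⟨S, hS, rfl⟩ | ⟨i, rfl⟩, hu, hv⟩
      · exact (h𝓑.isClique S hS (by simpa using hu) (by simpa using hv) huv hπ).elim
      · obtain rfl : π u = i := by simpa using hu
        rfl
    · obtain ⟨S, ⟨hS, hu, hv⟩, hunique⟩ := h𝓑.existsUnique (u := u) (v := v) hπ
      refine ⟨_, ⟨.inl ⟨S, hS, rfl⟩, ⟨u, hu, rfl⟩, ⟨v, hv, rfl⟩⟩, ?_⟩
      rintro - ⟨⟨T, hT, rfl⟩ | ⟨i, rfl⟩, hu, hv⟩
      · rw [hunique T ⟨hT, by simpa using hu, by simpa using hv⟩]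
      · have hu : π u = i := by simpa using hu
        have hv : π v = i := by simpa using hv
        exact (hπ (hu.trans hv.symm)).elim

theorem HasKirkmanFrame.option_of_groups [Finite X]
    (h𝓑 : IsCliqueDecomposition ((⊤ : SimpleGraph ι).comap π) 𝓑)
    (hblock : ∀ S ∈ 𝓑, HasKirkmanFrame (Fin S.ncard))
    (hgroup : ∀ i, HasKirkmanFrame (Fin ((π ⁻¹' {i}).ncard + 1))) :
    HasKirkmanFrame (Option X) := by
  refine .of_isCliqueDecomposition_fin (isCliqueDecomposition_fillGroups h𝓑) ?_
  rintro - (⟨S, hS, rfl⟩ | ⟨i, rfl⟩)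
  · rw [Set.ncard_image_of_injective S (Option.some_injective X)]
    exact hblock S hS
  · rw [Set.ncard_insert_of_notMem (by simp),
      Set.ncard_image_of_injective _ (Option.some_injective X)]
    exact hgroup i

theorem HasCliqueDecomposition.comap_fst_of_equiv {S κ W : Type*} {k : ℕ} (e : S ≃ κ)
    (h : HasCliqueDecomposition k ((⊤ : SimpleGraph κ).comap (Prod.fst : κ × W → κ))) :
    HasCliqueDecomposition k ((⊤ : SimpleGraph S).comap (Prod.fst : S × W → S)) := by
  convert h.comap (e.prodCongr (Equiv.refl W))
  ext u v
  simp

theorem hasCliqueDecomposition_four_three_pow_four {S : Type*} [Finite S] (hS : Nat.card S = 4) :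
    HasCliqueDecomposition 4 ((⊤ : SimpleGraph S).comap (Prod.fst : S × ZMod 3 → S)) := by
  have hκ : Nat.card (Option (ZMod 3)) = 4 := by simp
  obtain ⟨e⟩ := Finite.card_eq.1 (hS.trans hκ.symm)
  have hunit : Pairwise fun c d : ZMod 3 ↦ IsUnit (id c - id d) := fun c d hcd ↦
    (sub_ne_zero.2 hcd).isUnit
  refine .comap_fst_of_equiv e
    ⟨_, isCliqueDecomposition_transversal (bijective_affineLevel hunit), ?_⟩
  rintro - ⟨x, rfl⟩
  rw [ncard_transversal, hκ]

-- In `ZMod 15 ≃+ ZMod 5 × ZMod 3`, the base block is `{0, 1, 3, 7}`.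
theorem hasCliqueDecomposition_four_three_pow_five {S : Type*} [Finite S] (hS : Nat.card S = 5) :
    HasCliqueDecomposition 4 ((⊤ : SimpleGraph S).comap (Prod.fst : S × ZMod 3 → S)) := by
  let B : Unit → Fin 4 → ZMod 5 × ZMod 3 := fun _ ↦ ![(0, 0), (1, 1), (3, 0), (2, 1)]
  obtain ⟨e⟩ := Finite.card_eq.1 (hS.trans (Nat.card_zmod 5).symm)
  refine .comap_fst_of_equiv e ?_
  rw [← Nat.card_fin 4]
  refine hasCliqueDecomposition_translates (D := {d | d.1 ≠ 0}) (fun u v ↦ sub_ne_zero.symm)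
    (B := B) (by decide) ?_
  simp only [ExistsUnique, Set.mem_ofPred_eq]
  decide

theorem hasKirkmanFrame_of_groupDivisibleDesign [Finite X]
    (h𝓑 : IsCliqueDecomposition ((⊤ : SimpleGraph ι).comap π) 𝓑)
    (hcard : ∀ S ∈ 𝓑, S.ncard = 4 ∨ S.ncard = 5)
    (hgroup : ∀ i, HasKirkmanFrame (Fin (3 * (π ⁻¹' {i}).ncard + 1))) :
    HasKirkmanFrame (Fin (3 * Nat.card X + 1)) := by
  obtain ⟨𝓒, h𝓒, h𝓒_card⟩ := h𝓑.hasCliqueDecomposition_comap_fst (W := ZMod 3) fun S hS ↦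
    (hcard S hS).elim hasCliqueDecomposition_four_three_pow_four
      hasCliqueDecomposition_four_three_pow_five
  refine (hasKirkmanFrame_iff_fin ?_).1 (HasKirkmanFrame.option_of_groups
    (π := fun u : X × ZMod 3 ↦ π u.1) h𝓒 (fun S hS ↦ ?_) fun i ↦ ?_)
  · simp [mul_comm]
  · rw [h𝓒_card S hS]
    exact hasKirkmanFrame_four
  · have hfibre : ((fun u : X × ZMod 3 ↦ π u.1) ⁻¹' {i}).ncard = 3 * (π ⁻¹' {i}).ncard := by
      have hprod : (fun u : X × ZMod 3 ↦ π u.1) ⁻¹' {i} = (π ⁻¹' {i}) ×ˢ Set.univ := by ext; simp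
      rw [hprod, Set.ncard_prod, Set.ncard_univ, Nat.card_zmod, mul_comm]
    rw [hfibre]
    exact hgroup i

end GroupDivisibleDesign

section TruncatedTransversalDesign

open SimpleGraph

variable {A : Type*} {t : ℕ} {T : Set A}

/-- The points of a transversal design with five groups of points `A`, one of them truncated to the
points of `T`. -/
def truncatedPoint (T : Set A) : (Fin 4 × A) ⊕ T ↪ Option (Fin 4) × A where
  toFun := Sum.elim (fun u ↦ (some u.1, u.2)) fun a ↦ (none, a)
  inj' := by rintro (u | a) (v | b) h <;> simp_all [Prod.ext_iff, Subtype.ext_iff]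

@[simp] theorem truncatedPoint_inl (u : Fin 4 × A) :
    truncatedPoint T (.inl u) = (some u.1, u.2) := rfl

@[simp] theorem truncatedPoint_inr (a : T) : truncatedPoint T (.inr a) = (none, ↑a) := rfl

theorem ncard_preimage_truncatedPoint (f : Option (Fin 4) → A) :
    (truncatedPoint T ⁻¹' Set.range fun c ↦ (c, f c)).ncard = 4 ∨
      (truncatedPoint T ⁻¹' Set.range fun c ↦ (c, f c)).ncard = 5 := by
  set S := truncatedPoint T ⁻¹' Set.range fun c ↦ (c, f c)
  have hS : (truncatedPoint T '' S).ncard ≤ 5 := by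
    calc (truncatedPoint T '' S).ncard ≤ (Set.range fun c ↦ (c, f c)).ncard :=
          Set.ncard_le_ncard (Set.image_preimage_subset _ _) (Set.finite_range _)
      _ = 5 := by simp [ncard_transversal]
  rw [Set.ncard_image_of_injective S (truncatedPoint T).injective] at hS
  have hrange : Set.range (fun c ↦ Sum.inl (c, f (some c))) ⊆ S := by
    rintro - ⟨c, rfl⟩
    exact ⟨some c, rfl⟩
  have hfinite : S.Finite := (Set.finite_range _).preimage (truncatedPoint T).injective.injOn
  have hle := Set.ncard_le_ncard hrange hfinite
  rw [Set.ncard_range_of_injective fun c d h ↦ congrArg Prod.fst (Sum.inl_injective h),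
    Nat.card_fin] at hle
  omega

theorem ncard_group_truncatedPoint_some (c : Fin 4) :
    ((fun u ↦ (truncatedPoint T u).1) ⁻¹' {some c}).ncard = Nat.card A := by
  have hrange : (fun u ↦ (truncatedPoint T u).1) ⁻¹' {some c} =
      Set.range fun a ↦ Sum.inl (c, a) := by
    ext (⟨d, a⟩ | a) <;> simp [eq_comm]
  rw [hrange, Set.ncard_range_of_injective fun a b h ↦ congrArg Prod.snd (Sum.inl_injective h)]

theorem ncard_group_truncatedPoint_none :
    ((fun u ↦ (truncatedPoint T u).1) ⁻¹' {none}).ncard = T.ncard := by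
  have hrange : (fun u ↦ (truncatedPoint T u).1) ⁻¹' {none} = Set.range Sum.inr := by
    ext (⟨d, a⟩ | a) <;> simp
  rw [hrange, Set.ncard_range_of_injective Sum.inr_injective]
  rfl

theorem hasKirkmanFrame_four_mul_card_add [CommRing A] [Finite A] {s : Fin 4 → A}
    (hs : Pairwise fun c d ↦ IsUnit (s c - s d))
    (hA : HasKirkmanFrame (Fin (3 * Nat.card A + 1))) (ht : t ≤ Nat.card A)
    (hT : HasKirkmanFrame (Fin (3 * t + 1))) :
    HasKirkmanFrame (Fin (3 * (4 * Nat.card A + t) + 1)) := by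
  obtain ⟨T, -, rfl⟩ := Set.exists_subset_card_eq (s := Set.univ) (n := t)
    (by rwa [Set.ncard_univ])
  have hX : Nat.card ((Fin 4 × A) ⊕ T) = 4 * Nat.card A + T.ncard := by
    simp
  rw [← hX]
  refine hasKirkmanFrame_of_groupDivisibleDesign (π := fun u ↦ (truncatedPoint T u).1)
    ((isCliqueDecomposition_transversal (bijective_affineLevel hs)).comap (truncatedPoint T)) ?_ ?_
  · rintro - ⟨-, ⟨x, rfl⟩, rfl⟩
    exact ncard_preimage_truncatedPoint _
  · rintro (_ | c)
    · rwa [ncard_group_truncatedPoint_none]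
    · rwa [ncard_group_truncatedPoint_some]

theorem hasKirkmanFrame_four_mul_add_of_coprime_six {m : ℕ} (hm : m.Coprime 6)
    (hA : HasKirkmanFrame (Fin (3 * m + 1))) (ht : t ≤ m)
    (hT : HasKirkmanFrame (Fin (3 * t + 1))) :
    HasKirkmanFrame (Fin (3 * (4 * m + t) + 1)) := by
  have : NeZero m := ⟨by rintro rfl; simp at hm⟩
  have hlt {c d : Fin 4} (hcd : d < c) : IsUnit ((c.val : ZMod m) - d.val) := by
    have hdvd : c.val - d.val ∣ 6 := by
      decide +revert
    rw [← Nat.cast_sub hcd.le, ZMod.isUnit_iff_coprime]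
    exact (hm.coprime_dvd_right hdvd).symm
  have hs : Pairwise fun c d : Fin 4 ↦ IsUnit ((c.val : ZMod m) - d.val) := fun c d hcd ↦
    hcd.lt_or_gt.elim (fun h ↦ by simpa using (hlt h).neg) hlt
  simpa using hasKirkmanFrame_four_mul_card_add hs (by simpa) (by simpa) hT

theorem hasKirkmanFrame_four_mul_add_of_isPrimePow {m : ℕ} (hm : IsPrimePow m) (hm4 : 4 ≤ m)
    (hA : HasKirkmanFrame (Fin (3 * m + 1))) (ht : t ≤ m)
    (hT : HasKirkmanFrame (Fin (3 * t + 1))) :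
    HasKirkmanFrame (Fin (3 * (4 * m + t) + 1)) := by
  obtain ⟨_⟩ : Nonempty (Field (Fin m)) := Fintype.nonempty_field_iff.2 (by simpa using hm)
  simpa using hasKirkmanFrame_four_mul_card_add (A := Fin m) (s := Fin.castLE hm4)
    (fun c d hcd ↦ (sub_ne_zero.2 ((Fin.castLE_injective hm4).ne hcd)).isUnit)
    (by simpa) (by simpa) hT

end TruncatedTransversalDesign

section Starter

/-- The translate by `p` of a class on two copies of `A`: the conjugate of `f` by `(· + p)`. -/
def translateClass {A : Type*} [AddGroup A] (f : A × Bool → A × Bool) (p : A) (u : A × Bool) :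
    A × Bool :=
  Prod.map (· + p) id (f (u.1 - p, u.2))

variable {A : Type*} [AddCommGroup A] {f : A × Bool → A × Bool}

theorem joins_translateClass {p : A} {u v : A × Bool} :
    Joins (translateClass f p) u v ↔ Joins f (u.1 - p, u.2) (v.1 - p, v.2) := by
  simp [Joins, translateClass, Prod.ext_iff, eq_sub_iff_add_eq]

-- The class of `p` is the translate by `p` of the class of `0`, so its triples have to contain
-- each pair of levels at each nonzero difference once.
theorem isKirkmanFrame_translateClass (hzero : ∀ l, f (0, l) = (0, l))
    (hf : ∀ u, f (f (f u)) = u) (hfst : ∀ u : A × Bool, u.1 ≠ 0 → (f u).1 ≠ u.1)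
    (hsame : ∀ l, ∀ d ≠ 0, ∃! x, Joins f (x + d, l) (x, l))
    (hmixed : ∀ d ≠ 0, ∃! x, Joins f (x + d, false) (x, true)) :
    IsKirkmanFrame (translateClass f) := by
  have existsUnique_of_diff {a b : A} {l m : Bool}
      (h : ∃! x, Joins f (x + (a - b), l) (x, m)) :
      ∃! p, Joins (translateClass f p) (a, l) (b, m) := by
    refine (Equiv.subLeft b).bijective.existsUnique_iff.2 ?_
    have hsub (x : A) : a - (b - x) = x + (a - b) := by abel
    simpa only [joins_translateClass, Equiv.subLeft_apply, sub_sub_cancel, hsub] using h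
  refine ⟨fun p l ↦ ?_, fun p u ↦ ?_, fun {p u} hu ↦ ?_, ?_⟩
  · simp [translateClass, hzero]
  · simp [translateClass, hf]
  · have := hfst (u.1 - p, u.2) (sub_ne_zero.2 hu)
    simpa [translateClass, eq_sub_iff_add_eq] using this
  · rintro ⟨a, _ | _⟩ ⟨b, _ | _⟩ hab
    · exact existsUnique_of_diff (hsame _ _ (sub_ne_zero.2 hab))
    · exact existsUnique_of_diff (hmixed _ (sub_ne_zero.2 hab))
    · simpa only [joins_comm] using existsUnique_of_diff (hmixed _ (sub_ne_zero.2 hab.symm))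
    · exact existsUnique_of_diff (hsame _ _ (sub_ne_zero.2 hab))

end Starter

section HalfSystem

variable {K : Type*} [Field K] {ω x : K} {C : Set K}

/-- `C` contains exactly one of `x` and `-x` for each nonzero `x`, and is invariant under the cube
root of unity `ω`. -/
structure IsHalfSystem (ω : K) (C : Set K) : Prop where
  zero_notMem : 0 ∉ C
  mul_mem_iff : ∀ {x}, ω * x ∈ C ↔ x ∈ C
  neg_mem_iff : ∀ {x}, x ≠ 0 → (-x ∈ C ↔ x ∉ C)

theorem pow_three_eq_one (hω : ω ^ 2 + ω + 1 = 0) : ω ^ 3 = 1 := by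
  linear_combination (ω - 1) * hω

theorem ne_zero_of_cubeRoot (hω : ω ^ 2 + ω + 1 = 0) : ω ≠ 0 := by
  rintro rfl
  simp at hω

theorem ne_one_of_cubeRoot (hω : ω ^ 2 + ω + 1 = 0) (h3 : (3 : K) ≠ 0) : ω ≠ 1 := fun h ↦
  h3 (by linear_combination hω - (ω + 2) * h)

theorem exists_isHalfSystem (hω : ω ^ 2 + ω + 1 = 0) (h2 : (2 : K) ≠ 0) :
    ∃ C, IsHalfSystem ω C := by
  refine ⟨{x | WellOrderingRel (x ^ 3) (-x ^ 3)}, ?_, fun {x} ↦ ?_, fun {x} hx ↦ ?_⟩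
  · simpa using irrefl (r := WellOrderingRel) (0 : K)
  · simp only [Set.mem_ofPred_eq, mul_pow, pow_three_eq_one hω, one_mul]
  · have hne : x ^ 3 ≠ -x ^ 3 := fun h ↦
      mul_ne_zero h2 (pow_ne_zero 3 hx) (by linear_combination h)
    have hneg : (-x) ^ 3 = -x ^ 3 := by ring
    rw [Set.mem_ofPred_eq, Set.mem_ofPred_eq, hneg, neg_neg]
    exact ⟨fun h h' ↦ asymm h h', fun h ↦ ((trichotomous_of WellOrderingRel _ _).resolve_left
      h).resolve_left hne⟩

theorem IsHalfSystem.sq_mul_mem_iff (hC : IsHalfSystem ω C) : ω ^ 2 * x ∈ C ↔ x ∈ C := by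
  rw [pow_two, mul_assoc, hC.mul_mem_iff, hC.mul_mem_iff]

theorem existsUnique_of_iff_or {α : Type*} {P : α → Prop} {Q : Prop} {a b : α}
    (h : ∀ x, P x ↔ Q ∧ x = a ∨ ¬Q ∧ x = b) : ∃! x, P x := by
  by_cases hQ : Q <;> simp [h, hQ]

open scoped Classical in
/-- The class of `0` of a Kirkman frame on a field. With `2 * c = 2 + ω`, its triples are `(x, 0)`,
`((1 + ω) x, 0)`, `(c x, 1)` for `x` in the half-system `C`, and `(y, 1)`, `(ω y, 1)`, `(ω² y, 1)`
for the other nonzero points `(y, 1)`. -/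
noncomputable def fieldStarter (ω c : K) (C : Set K) : K × Bool → K × Bool
  | (x, false) => if x = 0 then (x, false) else if x ∈ C then ((1 + ω) * x, false)
      else (-(c * ω * x), true)
  | (y, true) => if y = 0 then (y, true) else if c⁻¹ * y ∈ C then (c⁻¹ * y, false)
      else (ω * y, true)

section FieldStarter

variable {c d y : K}

theorem fieldStarter_false_eq_false (hC : IsHalfSystem ω C) (hxy : x ≠ y) :
    fieldStarter ω c C (x, false) = (y, false) ↔ x ∈ C ∧ (1 + ω) * x = y := by
  rcases eq_or_ne x 0 with rfl | hx
  · simp [fieldStarter, hC.zero_notMem, hxy]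
  · by_cases hxC : x ∈ C <;> simp [fieldStarter, hx, hxC]

theorem fieldStarter_true_eq_true (hxy : x ≠ y) :
    fieldStarter ω c C (x, true) = (y, true) ↔ c⁻¹ * x ∉ C ∧ ω * x = y := by
  rcases eq_or_ne x 0 with rfl | hx
  · simp [fieldStarter, hxy]
  · by_cases hxC : c⁻¹ * x ∈ C <;> simp [fieldStarter, hx, hxC]

theorem fieldStarter_false_eq_true :
    fieldStarter ω c C (x, false) = (y, true) ↔ x ≠ 0 ∧ x ∉ C ∧ -(c * ω * x) = y := by
  rcases eq_or_ne x 0 with rfl | hx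
  · simp [fieldStarter]
  · by_cases hxC : x ∈ C <;> simp [fieldStarter, hx, hxC]

theorem fieldStarter_true_eq_false (hC : IsHalfSystem ω C) :
    fieldStarter ω c C (x, true) = (y, false) ↔ c⁻¹ * x ∈ C ∧ c⁻¹ * x = y := by
  rcases eq_or_ne x 0 with rfl | hx
  · simp [fieldStarter, hC.zero_notMem]
  · by_cases hxC : c⁻¹ * x ∈ C <;> simp [fieldStarter, hx, hxC]

theorem existsUnique_joins_fieldStarter_false (hω : ω ^ 2 + ω + 1 = 0) (hC : IsHalfSystem ω C)
    (hd : d ≠ 0) : ∃! x, Joins (fieldStarter ω c C) (x + d, false) (x, false) := by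
  refine existsUnique_of_iff_or (Q := d ∈ C) (a := ω ^ 2 * d) (b := ω * d) fun x ↦ ?_
  have hfwd : (1 + ω) * x = x + d ↔ x = ω ^ 2 * d :=
    ⟨fun h ↦ by linear_combination ω ^ 2 * h + (-ω + 1) * x * hω,
      fun h ↦ by linear_combination ω * h + (ω - 1) * d * hω⟩
  have hbwd : (1 + ω) * (x + d) = x ↔ x = ω * d :=
    ⟨fun h ↦ by linear_combination ω ^ 2 * h + (1 - ω) * (x + d) * hω - d * hω,
      fun h ↦ by linear_combination ω * h + d * hω⟩
  have hmem : ω * d + d ∈ C ↔ d ∉ C := by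
    rw [show ω * d + d = ω ^ 2 * -d by linear_combination d * hω, hC.sq_mul_mem_iff,
      hC.neg_mem_iff hd]
  rw [Joins, fieldStarter_false_eq_false hC (by simpa), fieldStarter_false_eq_false hC (by simpa),
    hfwd, hbwd, or_comm]
  refine or_congr (and_congr_left ?_) (and_congr_left ?_)
  · rintro rfl
    exact hC.sq_mul_mem_iff
  · rintro rfl
    exact hmem

theorem existsUnique_joins_fieldStarter_true (hC : IsHalfSystem ω C) (hω1 : ω ≠ 1) (hc : c ≠ 0)
    (hd : d ≠ 0) : ∃! x, Joins (fieldStarter ω c C) (x + d, true) (x, true) := by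
  have hω1' : ω - 1 ≠ 0 := sub_ne_zero.2 hω1
  obtain ⟨e, rfl⟩ : ∃ e, d = (ω - 1) * e := ⟨(ω - 1)⁻¹ * d, by field_simp⟩
  have he : c⁻¹ * e ≠ 0 := mul_ne_zero (inv_ne_zero hc) (right_ne_zero_of_mul hd)
  refine existsUnique_of_iff_or (Q := c⁻¹ * e ∈ C) (a := -(ω * e)) (b := e) fun x ↦ ?_
  have hfwd : ω * x = x + (ω - 1) * e ↔ x = e :=
    ⟨fun h ↦ mul_left_cancel₀ hω1' (by linear_combination h), fun h ↦ by rw [h]; ring⟩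
  have hbwd : ω * (x + (ω - 1) * e) = x ↔ x = -(ω * e) :=
    ⟨fun h ↦ mul_left_cancel₀ hω1' (by linear_combination h), fun h ↦ by rw [h]; ring⟩
  have hmem : c⁻¹ * (-(ω * e) + (ω - 1) * e) ∉ C ↔ c⁻¹ * e ∈ C := by
    rw [show c⁻¹ * (-(ω * e) + (ω - 1) * e) = -(c⁻¹ * e) by ring, hC.neg_mem_iff he, not_not]
  rw [Joins, fieldStarter_true_eq_true (by simpa using hd),
    fieldStarter_true_eq_true (by simpa using hd),
    hfwd, hbwd]
  refine or_congr (and_congr_left ?_) (and_congr_left ?_)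
  · rintro rfl
    exact hmem
  · rintro rfl
    rfl

theorem existsUnique_joins_fieldStarter_mixed (hω : ω ^ 2 + ω + 1 = 0) (hC : IsHalfSystem ω C)
    (h2 : (2 : K) ≠ 0) (hc : c ≠ 0) (hcω : 2 * c = 2 + ω) (hd : d ≠ 0) :
    ∃! x, Joins (fieldStarter ω c C) (x + d, false) (x, true) := by
  refine existsUnique_of_iff_or (Q := 2 * d ∈ C) (a := -(2 * ω * d) - d)
    (b := -(2 * ω ^ 2 * d) - d) fun x ↦ ?_
  have h2d : 2 * d ≠ 0 := mul_ne_zero h2 hd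
  have hfwd : -(c * ω * (x + d)) = x ↔ x = -(2 * ω * d) - d :=
    ⟨fun h ↦ by
      linear_combination 2 * ω * h + (x + d) * (1 + ω) * hω + ω ^ 2 * (x + d) * hcω,
    fun h ↦ mul_left_cancel₀ h2 <| by
      linear_combination ω ^ 2 * h + 2 * (d * (1 - ω) - (x + d)) * hω - ω * (x + d) * hcω⟩
  have hbwd : c⁻¹ * x = x + d ↔ x = -(2 * ω ^ 2 * d) - d := by
    rw [inv_mul_eq_iff_eq_mul₀ hc]
    exact ⟨fun h ↦ by
      linear_combination -2 * ω ^ 2 * h - ω ^ 2 * (x + d) * hcω + (x + d) * (1 - ω) * hω,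
    fun h ↦ mul_left_cancel₀ h2 <| by
      linear_combination -ω * h - 2 * d * (1 - ω) * hω - (x + d) * hcω⟩
  rw [Joins, fieldStarter_false_eq_true, fieldStarter_true_eq_false hC, hfwd, hbwd, ← and_assoc]
  refine or_congr (and_congr_left fun h ↦ ?_) (and_congr_left fun h ↦ ?_)
  · rw [h, sub_add_cancel, show -(2 * ω * d) = ω * -(2 * d) by ring, hC.mul_mem_iff]
    simp [hC.neg_mem_iff h2d, h2, hd, ne_zero_of_cubeRoot hω]
  · rw [hbwd.2 h, h, sub_add_cancel, show -(2 * ω ^ 2 * d) = ω ^ 2 * -(2 * d) by ring,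
      hC.sq_mul_mem_iff, hC.neg_mem_iff h2d]

theorem fieldStarter_iterate_three (hω : ω ^ 2 + ω + 1 = 0) (hC : IsHalfSystem ω C) (hc : c ≠ 0)
    (u : K × Bool) :
    fieldStarter ω c C (fieldStarter ω c C (fieldStarter ω c C u)) = u := by
  have hω0 := ne_zero_of_cubeRoot hω
  have hζ (x : K) : (1 + ω) * x = ω ^ 2 * -x := by linear_combination x * hω
  have hζ' (x : K) : (1 + ω) * -(ω * x) = x := by linear_combination -x * hω
  have hneg {x : K} (hx : x ≠ 0) (hxC : x ∉ C) : -(ω * x) ∈ C := by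
    rwa [← mul_neg, hC.mul_mem_iff, hC.neg_mem_iff hx]
  have of_mem₁ {x : K} (hx : x ∈ C) : fieldStarter ω c C (x, false) = ((1 + ω) * x, false) := by
    have hx0 : x ≠ 0 := ne_of_mem_of_not_mem hx hC.zero_notMem
    simp [fieldStarter, hx, hx0]
  have of_mem₂ {x : K} (hx : x ∈ C) :
      fieldStarter ω c C ((1 + ω) * x, false) = (c * x, true) := by
    have hx0 : x ≠ 0 := ne_of_mem_of_not_mem hx hC.zero_notMem
    rw [fieldStarter_false_eq_true, hζ, hC.sq_mul_mem_iff, hC.neg_mem_iff hx0, not_not]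
    exact ⟨by simp [hx0, hω0], hx, by linear_combination c * x * pow_three_eq_one hω⟩
  have of_mem₃ {x : K} (hx : x ∈ C) : fieldStarter ω c C (c * x, true) = (x, false) := by
    simpa [fieldStarter_true_eq_false hC, hc] using hx
  obtain ⟨x, _ | _⟩ := u <;> rcases eq_or_ne x 0 with rfl | hx0
  · simp [fieldStarter]
  · by_cases hx : x ∈ C
    · rw [of_mem₁ hx, of_mem₂ hx, of_mem₃ hx]
    · have hmem := hneg hx0 hx
      rw [← hζ' x, of_mem₂ hmem, of_mem₃ hmem, of_mem₁ hmem]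
  · simp [fieldStarter]
  · by_cases hx : c⁻¹ * x ∈ C
    · rw [← mul_inv_cancel_left₀ hc x, of_mem₃ hx, of_mem₁ hx, of_mem₂ hx]
    · have hmul {y : K} (hy : y ≠ 0) (hyC : c⁻¹ * y ∉ C) :
          fieldStarter ω c C (y, true) = (ω * y, true) := by simp [fieldStarter, hy, hyC]
      have hmem {y : K} : c⁻¹ * (ω * y) ∈ C ↔ c⁻¹ * y ∈ C := by
        rw [mul_left_comm, hC.mul_mem_iff]
      rw [hmul hx0 hx, hmul (by simp [hω0, hx0]) (by rwa [hmem]),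
        hmul (by simp [hω0, hx0]) (by rwa [hmem, hmem])]
      exact Prod.ext (by linear_combination x * pow_three_eq_one hω) rfl

theorem fieldStarter_fst_ne (hω : ω ^ 2 + ω + 1 = 0) (hω1 : ω ≠ 1) (hc : c ≠ 0)
    (hcω : 2 * c = 2 + ω) {u : K × Bool} (hu : u.1 ≠ 0) :
    (fieldStarter ω c C u).1 ≠ u.1 := by
  obtain ⟨x, l⟩ := u
  have hω0 := ne_zero_of_cubeRoot hω
  have hx : x ≠ 0 := hu
  intro h
  cases l <;> simp only [fieldStarter, if_neg hx] at h <;> split_ifs at h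
  · exact mul_ne_zero hω0 hx (by linear_combination h)
  · exact mul_ne_zero (pow_ne_zero 2 hω0) hx
      (by linear_combination 2 * h + ω * x * hcω + 2 * x * hω)
  · exact mul_ne_zero hω0 hx
      (by linear_combination -2 * (inv_mul_eq_iff_eq_mul₀ hc).1 h - x * hcω)
  · exact mul_ne_zero (sub_ne_zero.2 hω1) hx (by linear_combination h)

end FieldStarter

theorem hasKirkmanFrame_of_cubeRoot (hω : ω ^ 2 + ω + 1 = 0) (h2 : (2 : K) ≠ 0)
    (h3 : (3 : K) ≠ 0) : HasKirkmanFrame K := by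
  obtain ⟨C, hC⟩ := exists_isHalfSystem hω h2
  obtain ⟨c, hcω⟩ : ∃ c, 2 * c = 2 + ω := ⟨2⁻¹ * (2 + ω), mul_inv_cancel_left₀ h2 _⟩
  have hc : c ≠ 0 := fun hc ↦ h3 (by linear_combination (ω - 1) * (hcω - 2 * hc) + hω)
  have hω1 := ne_one_of_cubeRoot hω h3
  exact ⟨_, isKirkmanFrame_translateClass (f := fieldStarter ω c C)
    (fun l ↦ by cases l <;> simp [fieldStarter])
    (fieldStarter_iterate_three hω hC hc) (fun _ ↦ fieldStarter_fst_ne hω hω1 hc hcω)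
    (fun l d hd ↦ match l with
      | false => existsUnique_joins_fieldStarter_false hω hC hd
      | true => existsUnique_joins_fieldStarter_true hC hω1 hc hd)
    fun d hd ↦ existsUnique_joins_fieldStarter_mixed hω hC h2 hc hcω hd⟩

end HalfSystem

section CubeRoot

variable {K : Type*} [Field K] {ω : K} {C : Set K}

theorem exists_cubeRoot [Finite K] (h : 3 ∣ Nat.card K - 1) : ∃ ω : K, ω ^ 2 + ω + 1 = 0 := by
  have : Fact (Nat.Prime 3) := ⟨Nat.prime_three⟩
  obtain ⟨u, hu⟩ := exists_prime_orderOf_dvd_card' (G := Kˣ) 3 (by rwa [Nat.card_units])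
  have hcube : (u : K) ^ 3 = 1 := by
    rw [← Units.val_pow_eq_pow_val, ← hu, pow_orderOf_eq_one, Units.val_one]
  have hne : (u : K) ≠ 1 := fun h ↦ by
    rw [Units.val_eq_one.1 h, orderOf_one] at hu
    exact absurd hu (by decide)
  exact ⟨u, mul_left_cancel₀ (sub_ne_zero.2 hne) (by linear_combination hcube)⟩

theorem natCast_ne_zero_of_coprime_card [Finite K] {n : ℕ} (h : n.Coprime (Nat.card K)) :
    (n : K) ≠ 0 := fun hn ↦ by
  obtain ⟨a, b, hab⟩ := Nat.isCoprime_iff_coprime.2 h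
  have hcard : (Nat.card K : K) = 0 := by
    rw [← nsmul_one, card_nsmul_eq_zero']
  have : (a : K) * n + b * Nat.card K = 1 := mod_cast congrArg (Int.cast : ℤ → K) hab
  simp [hn, hcard] at this

theorem exists_cubeRoot_of_card_mod_six [Finite K] (h : Nat.card K % 6 = 1) :
    (∃ ω : K, ω ^ 2 + ω + 1 = 0) ∧ (2 : K) ≠ 0 ∧ (3 : K) ≠ 0 := by
  have hcoprime : Nat.Coprime 6 (Nat.card K) := by
    rw [Nat.Coprime, Nat.gcd_rec, h, Nat.gcd_one_left]
  exact ⟨exists_cubeRoot (by lia),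
    mod_cast natCast_ne_zero_of_coprime_card (hcoprime.coprime_dvd_left ⟨3, rfl⟩),
    mod_cast natCast_ne_zero_of_coprime_card (hcoprime.coprime_dvd_left ⟨2, rfl⟩)⟩

theorem hasKirkmanFrame_of_isPrimePow {q : ℕ} (hq : IsPrimePow q) (h : q % 6 = 1) :
    HasKirkmanFrame (Fin q) := by
  obtain ⟨_⟩ : Nonempty (Field (Fin q)) := Fintype.nonempty_field_iff.2 (by simpa using hq)
  obtain ⟨⟨ω, hω⟩, h2, h3⟩ := exists_cubeRoot_of_card_mod_six (K := Fin q) (by simpa using h)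
  exact hasKirkmanFrame_of_cubeRoot hω h2 h3

section Tripling

open scoped Classical in
/-- The parallel classes of a Kirkman triple system on `K × ZMod 3`: the translates by `s` of the
class with the triples `(ωⁱ a, j)`, `i = 0, 1, 2`, for `a ∈ C` and `(ωⁱ a, j + i)` for `a ∉ C`,
and for each `c ∈ C` the class of the triples `(z + ωʲ c, j)`, `j = 0, 1, 2`. -/
noncomputable def tripleClass (ω : K) (C : Set K) : K ⊕ C → K × ZMod 3 → K × ZMod 3
  | .inl s, (x, j) => (ω * (x - s) + s, if x - s ∈ C then j else j + 1)
  | .inr c, (x, j) => (x + (ω - 1) * (ω ^ j.val * c), j + 1)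

variable {p : K ⊕ C} {x a : K} {j : ZMod 3}

theorem pow_val_add_one (hω : ω ^ 2 + ω + 1 = 0) : ω ^ (j + 1).val = ω * ω ^ j.val := by
  rw [ZMod.val_add, ← pow_eq_pow_mod _ (pow_three_eq_one hω), pow_add, mul_comm,
    show (1 : ZMod 3).val = 1 from rfl, pow_one]

theorem tripleClass_eq_same (hω1 : ω ≠ 1) :
    tripleClass ω C p (x, j) = (x + (ω - 1) * a, j) ↔ a ∈ C ∧ p = .inl (x - a) := by
  have hω1' : ω - 1 ≠ 0 := sub_ne_zero.2 hω1
  rcases p with s | c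
  · have hfst : ω * (x - s) + s = x + (ω - 1) * a ↔ s = x - a :=
      ⟨fun h ↦ mul_left_cancel₀ hω1' (by linear_combination -h), fun h ↦ by rw [h]; ring⟩
    rw [tripleClass, Prod.mk.injEq, hfst, Sum.inl.injEq, and_comm]
    refine and_congr_left ?_
    rintro rfl
    simp
  · simp [tripleClass]

theorem tripleClass_eq_succ (hω1 : ω ≠ 1) :
    tripleClass ω C p (x, j) = (x + (ω - 1) * a, j + 1) ↔
      a ∉ C ∧ p = .inl (x - a) ∨ ∃ c : C, a = ω ^ j.val * c ∧ p = .inr c := by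
  have hω1' : ω - 1 ≠ 0 := sub_ne_zero.2 hω1
  rcases p with s | c
  · have hfst : ω * (x - s) + s = x + (ω - 1) * a ↔ s = x - a :=
      ⟨fun h ↦ mul_left_cancel₀ hω1' (by linear_combination -h), fun h ↦ by rw [h]; ring⟩
    rw [tripleClass, Prod.mk.injEq, hfst, Sum.inl.injEq, and_comm]
    simp only [reduceCtorEq, and_false, exists_false, or_false]
    refine and_congr_left ?_
    rintro rfl
    simp
  · simp [tripleClass, hω1', eq_comm (a := a)]

theorem existsUnique_joins_tripleClass_same (hω1 : ω ≠ 1) (hC : IsHalfSystem ω C) (ha : a ≠ 0) :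
    ∃! p, Joins (tripleClass ω C p) (x, j) (x + (ω - 1) * a, j) := by
  refine existsUnique_of_iff_or (Q := a ∈ C) (a := .inl (x - a)) (b := .inl (x + ω * a)) fun p ↦ ?_
  have hback : tripleClass ω C p (x + (ω - 1) * a, j) = (x, j) ↔
      a ∉ C ∧ p = .inl (x + ω * a) := by
    have := tripleClass_eq_same (C := C) (x := x + (ω - 1) * a) (a := -a) (p := p) (j := j) hω1
    rwa [hC.neg_mem_iff ha, show x + (ω - 1) * a + (ω - 1) * -a = x by ring,
      show x + (ω - 1) * a - -a = x + ω * a by ring] at this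
  rw [Joins, tripleClass_eq_same hω1, hback]

theorem existsUnique_joins_tripleClass_succ (hω : ω ^ 2 + ω + 1 = 0) (hω1 : ω ≠ 1)
    (hC : IsHalfSystem ω C) :
    ∃! p, Joins (tripleClass ω C p) (x, j) (x + (ω - 1) * a, j + 1) := by
  have hback {p} {y : K} : tripleClass ω C p (y, j + 1) ≠ (x, j) := fun h ↦ by
    have hsucc : ∀ j : ZMod 3, j + 1 ≠ j ∧ j + 1 + 1 ≠ j := by decide
    have hlevel := congrArg Prod.snd h
    rcases p with s | c <;> simp only [tripleClass] at hlevel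
    · split_ifs at hlevel
      · exact (hsucc j).1 hlevel
      · exact (hsucc j).2 hlevel
    · exact (hsucc j).2 hlevel
  have hω0 : ω ^ j.val ≠ 0 := pow_ne_zero _ (ne_zero_of_cubeRoot hω)
  obtain ⟨b, rfl⟩ : ∃ b, a = ω ^ j.val * b := ⟨(ω ^ j.val)⁻¹ * a, (mul_inv_cancel_left₀ hω0 a).symm⟩
  have hmem : ω ^ j.val * b ∈ C ↔ b ∈ C := by
    induction j.val with
    | zero => simp
    | succ n ih => rw [pow_succ', mul_assoc, hC.mul_mem_iff, ih]
  simp only [Joins, tripleClass_eq_succ hω1, hback, or_false, hmem, mul_right_inj' hω0]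
  by_cases hb : b ∈ C
  · exact ⟨.inr ⟨b, hb⟩, by simp, by simp +contextual [hb]⟩
  · exact ⟨.inl (x - ω ^ j.val * b), by simp [hb], by simp +contextual [hb]⟩

theorem isKirkmanSystem_tripleClass (hω : ω ^ 2 + ω + 1 = 0) (hω1 : ω ≠ 1)
    (hC : IsHalfSystem ω C) : IsKirkmanSystem (tripleClass ω C) := by
  have hω1' : ω - 1 ≠ 0 := sub_ne_zero.2 hω1
  have hdiff (x y : K) : ∃ a, y = x + (ω - 1) * a := ⟨(ω - 1)⁻¹ * (y - x), by field_simp; ring⟩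
  have existsUnique_succ {u v : K × ZMod 3} (h : v.2 = u.2 + 1) :
      ∃! p, Joins (tripleClass ω C p) u v := by
    obtain ⟨x, i⟩ := u
    obtain ⟨y, j⟩ := v
    obtain ⟨a, rfl⟩ := hdiff x y
    obtain rfl : j = i + 1 := h
    exact existsUnique_joins_tripleClass_succ hω hω1 hC
  refine .of_existsUnique ?_ ?_ fun {u v} huv ↦ ?_
  · have hthree : ∀ j : ZMod 3, j + 1 + 1 + 1 = j := by decide
    rintro (s | c) ⟨x, j⟩
    · have hx : ω * (ω * (ω * (x - s))) + s = x := by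
        linear_combination (x - s) * pow_three_eq_one hω
      by_cases hs : x - s ∈ C <;> simp [tripleClass, hC.mul_mem_iff, hs, hx, hthree]
    · simp only [tripleClass, pow_val_add_one hω, hthree, Prod.mk.injEq, and_true]
      linear_combination (ω - 1) * (ω ^ j.val * c) * hω
  · rintro p ⟨x, j⟩ h
    exact hC.zero_notMem ((tripleClass_eq_same hω1).1 (by simpa using h)).1
  · obtain h | h | h : v.2 = u.2 ∨ v.2 = u.2 + 1 ∨ u.2 = v.2 + 1 := by
      generalize u.2 = i, v.2 = j
      decide +revert
    · obtain ⟨x, i⟩ := u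
      obtain ⟨y, j⟩ := v
      obtain ⟨a, rfl⟩ := hdiff x y
      obtain rfl : j = i := h
      refine existsUnique_joins_tripleClass_same hω1 hC ?_
      rintro rfl
      simp at huv
    · exact existsUnique_succ h
    · simpa only [joins_comm] using existsUnique_succ h

theorem hasKirkmanFrame_of_three_mul_isPrimePow {q n : ℕ} (hq : IsPrimePow q) (h : q % 6 = 1)
    (hn : 3 * q = 2 * n + 1) : HasKirkmanFrame (Fin n) := by
  obtain ⟨_⟩ : Nonempty (Field (Fin q)) := Fintype.nonempty_field_iff.2 (by simpa using hq)
  obtain ⟨⟨ω, hω⟩, h2, h3⟩ := exists_cubeRoot_of_card_mod_six (K := Fin q) (by simpa using h)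
  obtain ⟨C, hC⟩ := exists_isHalfSystem hω h2
  exact (isKirkmanSystem_tripleClass hω (ne_one_of_cubeRoot hω h3) hC).hasKirkmanFrame_fin
    (by simp; lia)

end Tripling

end CubeRoot

set_option synthInstance.maxSize 256 in
-- The group divisible design of type `3^9` has the groups `ZMod 3 × {y}`.
theorem hasKirkmanFrame_eighty_two (h : HasKirkmanFrame (Fin 10)) : HasKirkmanFrame (Fin 82) := by
  let B : Fin 2 → Fin 4 → ZMod 3 × ZMod 3 × ZMod 3 :=
    ![![(0, 0, 0), (0, 0, 1), (0, 1, 0), (1, 1, 1)],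
      ![(0, 0, 0), (0, 1, 1), (1, 0, 2), (2, 2, 1)]]
  obtain ⟨𝓑, h𝓑, hcard⟩ : HasCliqueDecomposition (Nat.card (Fin 4))
      ((⊤ : SimpleGraph (ZMod 3 × ZMod 3)).comap (Prod.snd : ZMod 3 × ZMod 3 × ZMod 3 → _)) :=
    hasCliqueDecomposition_translates (D := {d | d.2 ≠ 0}) (fun u v ↦ sub_ne_zero.symm) (B := B)
      (by decide) (by simp only [ExistsUnique, Set.mem_ofPred_eq]; decide)
  rw [Nat.card_fin] at hcard
  have hgroup (y : ZMod 3 × ZMod 3) :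
      (Prod.snd ⁻¹' {y} : Set (ZMod 3 × ZMod 3 × ZMod 3)).ncard = 3 := by
    have hprod : (Prod.snd ⁻¹' {y} : Set (ZMod 3 × ZMod 3 × ZMod 3)) = Set.univ ×ˢ {y} := by
      ext
      simp
    rw [hprod, Set.ncard_prod, Set.ncard_univ, Nat.card_zmod, Set.ncard_singleton]
  simpa using hasKirkmanFrame_of_groupDivisibleDesign h𝓑 (fun S hS ↦ .inl (hcard S hS))
    fun y ↦ by rwa [hgroup]

theorem hasKirkmanFrame_of_prime {p : ℕ} (hp : p.Prime) (h : p % 6 = 1) : HasKirkmanFrame (Fin p) :=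
  hasKirkmanFrame_of_isPrimePow hp.isPrimePow h

theorem hasKirkmanFrame_small {N : ℕ} (hN : N < 16 ∧ N ≠ 4 ∧ N ≠ 5 ∨ N = 26 ∨ N = 27) :
    HasKirkmanFrame (Fin (3 * N + 1)) := by
  have h7 : HasKirkmanFrame (Fin 7) := hasKirkmanFrame_of_prime (by norm_num) rfl
  have h10 : HasKirkmanFrame (Fin 10) :=
    hasKirkmanFrame_of_three_mul_isPrimePow (q := 7) (by norm_num : Nat.Prime 7).isPrimePow rfl rfl
  have h13 : HasKirkmanFrame (Fin 13) := hasKirkmanFrame_of_prime (by norm_num) rfl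
  obtain rfl | rfl | rfl | rfl | rfl | rfl | rfl | rfl |
      rfl | rfl | rfl | rfl | rfl | rfl | rfl | rfl :
      N = 0 ∨ N = 1 ∨ N = 2 ∨ N = 3 ∨ N = 6 ∨ N = 7 ∨ N = 8 ∨ N = 9 ∨
      N = 10 ∨ N = 11 ∨ N = 12 ∨ N = 13 ∨ N = 14 ∨ N = 15 ∨ N = 26 ∨ N = 27 := by
    lia
  · exact hasKirkmanFrame_of_subsingleton (R := Fin 1)
  · exact hasKirkmanFrame_four
  · exact h7
  · exact h10
  · exact hasKirkmanFrame_of_prime (by norm_num : Nat.Prime 19) rfl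
  · exact h7.three_mul_add_one
  · exact hasKirkmanFrame_of_isPrimePow (Nat.prime_five.isPrimePow.pow two_ne_zero) rfl
  · exact hasKirkmanFrame_of_three_mul_isPrimePow (by norm_num : Nat.Prime 19).isPrimePow rfl rfl
  · exact hasKirkmanFrame_of_prime (by norm_num : Nat.Prime 31) rfl
  · exact hasKirkmanFrame_thirty_four h7
  · exact hasKirkmanFrame_of_prime (by norm_num : Nat.Prime 37) rfl
  · exact h13.three_mul_add_one
  · exact hasKirkmanFrame_of_prime (by norm_num : Nat.Prime 43) rfl
  · exact hasKirkmanFrame_of_three_mul_isPrimePow (by norm_num : Nat.Prime 31).isPrimePow rfl rfl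
  · exact hasKirkmanFrame_of_prime (by norm_num : Nat.Prime 79) rfl
  · exact hasKirkmanFrame_eighty_two h10

theorem exists_four_mul_add {N : ℕ} (hN : ¬ (N < 16 ∧ N ≠ 4 ∧ N ≠ 5 ∨ N = 26 ∨ N = 27)) :
    ∃ m t, N = 4 * m + t ∧ t ≤ m ∧ 0 < m ∧ (m.Coprime 6 ∨ 4 ≤ m ∧ IsPrimePow m) := by
  have coprime_of_mod {m : ℕ} (h : m % 6 = 1 ∨ m % 6 = 5) : m.Coprime 6 := by
    rw [Nat.Coprime, Nat.gcd_comm, Nat.gcd_rec]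
    rcases h with h | h <;> rw [h] <;> rfl
  obtain h | h | h | h | h | h | h | h | h :
      N ≤ 5 ∨ 16 ≤ N ∧ N ≤ 20 ∨ 20 ≤ N ∧ N ≤ 25 ∨ 28 ≤ N ∧ N ≤ 35 ∨ 36 ≤ N ∧ N ≤ 45 ∨
        44 ≤ N ∧ N ≤ 55 ∨ 52 ≤ N ∧ N ≤ 65 ∨ 64 ≤ N ∧ N ≤ 80 ∨ 68 ≤ N := by
    lia
  · exact ⟨1, N - 4, by lia, by lia, by lia, .inl (by decide)⟩
  · exact ⟨4, N - 16, by lia, by lia, by lia,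
      .inr ⟨le_rfl, Nat.prime_two.isPrimePow.pow two_ne_zero⟩⟩
  · exact ⟨5, N - 20, by lia, by lia, by lia, .inl (by decide)⟩
  · exact ⟨7, N - 28, by lia, by lia, by lia, .inl (by decide)⟩
  · exact ⟨9, N - 36, by lia, by lia, by lia,
      .inr ⟨by decide, Nat.prime_three.isPrimePow.pow two_ne_zero⟩⟩
  · exact ⟨11, N - 44, by lia, by lia, by lia, .inl (by decide)⟩
  · exact ⟨13, N - 52, by lia, by lia, by lia, .inl (by decide)⟩
  · exact ⟨16, N - 64, by lia, by lia, by lia,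
      .inr ⟨by decide, Nat.prime_two.isPrimePow.pow (k := 4) (by decide)⟩⟩
  · obtain ⟨m, hm, hN⟩ : ∃ m, (m % 6 = 1 ∨ m % 6 = 5) ∧ 4 * m ≤ N ∧ N ≤ 5 * m := by
      obtain h0 | h5 | h14 :
          N / 4 % 6 = 0 ∨ N / 4 % 6 = 5 ∨ 1 ≤ N / 4 % 6 ∧ N / 4 % 6 ≤ 4 := by
        lia
      · exact ⟨N / 4 - 1, by lia, by lia, by lia⟩
      · exact ⟨N / 4, by lia, by lia, by lia⟩
      · exact ⟨N / 4 / 6 * 6 + 1, by lia, by lia, by lia⟩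
    exact ⟨m, N - 4 * m, by lia, by lia, by lia, .inl (coprime_of_mod hm)⟩

theorem hasKirkmanFrame_three_mul_add_one (N : ℕ) : HasKirkmanFrame (Fin (3 * N + 1)) := by
  induction N using Nat.strong_induction_on with
  | _ N ih =>
    by_cases hN : N < 16 ∧ N ≠ 4 ∧ N ≠ 5 ∨ N = 26 ∨ N = 27
    · exact hasKirkmanFrame_small hN
    · obtain ⟨m, t, rfl, ht, hm, hcoprime | ⟨hm4, hprimePow⟩⟩ := exists_four_mul_add hN
      · exact hasKirkmanFrame_four_mul_add_of_coprime_six hcoprime (ih m (by lia)) ht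
          (ih t (by lia))
      · exact hasKirkmanFrame_four_mul_add_of_isPrimePow hprimePow hm4 (ih m (by lia)) ht
          (ih t (by lia))

theorem exists_equiv_fin_prod_fin {α β : Type*} [Finite α] {f : α → β} {m n : ℕ}
    (hα : Nat.card α = m * n) (hn : 0 < n) (hf : ∀ a, {b | f b = f a}.ncard = n) :
    ∃ e : α ≃ Fin m × Fin n, ∀ a b, (e a).1 = (e b).1 ↔ f a = f b := by
  let fiberEquiv (y : Set.range f) : {a // Set.rangeFactorization f a = y} ≃ Fin n :=
    Finite.equivFinOfCardEq <| by
      obtain ⟨_, a, rfl⟩ := y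
      rw [← hf a, ← Nat.card_coe_set_eq]
      simp only [Subtype.ext_iff, Set.rangeFactorization_coe, Set.coe_ofPred]
  let e₁ : α ≃ Set.range f × Fin n :=
    (Equiv.sigmaFiberEquiv (Set.rangeFactorization f)).symm.trans
      ((Equiv.sigmaCongrRight fiberEquiv).trans (Equiv.sigmaEquivProd _ _))
  have hrange : Nat.card (Set.range f) = m := by
    have hcard := Nat.card_congr e₁
    rw [hα, Nat.card_prod, Nat.card_fin] at hcard
    exact (Nat.eq_of_mul_eq_mul_right hn hcard).symm
  let e₂ : Set.range f ≃ Fin m := Finite.equivFinOfCardEq hrange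
  refine ⟨e₁.trans (e₂.prodCongr (Equiv.refl _)), fun a b ↦ ?_⟩
  exact e₂.injective.eq_iff.trans Subtype.ext_iff

section Factorization

variable {R V : Type*} {G : R → V → V}

theorem IsPartialKirkmanSystem.exists_equiv_fin_prod_fin_three [Finite V]
    (hG : IsPartialKirkmanSystem G) {x : ℕ} (hV : Nat.card V = x * 3) (p : R) :
    ∃ e : V ≃ Fin x × Fin 3, ∀ u v, (e u).1 = (e v).1 ↔ u = v ∨ Joins (G p) u v := by
  simp_rw [← triple_eq_iff (hG.iterate_three p)]
  refine exists_equiv_fin_prod_fin hV three_pos fun u ↦ ?_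
  rw [← ncard_triple (hG.iterate_three p) (hG.ne_self p) u]
  congr 1
  ext v
  exact ⟨fun h ↦ h ▸ mem_triple_self, triple_eq_of_mem (hG.iterate_three p)⟩

/-- A parallel class, as a permutation whose cycles are its triples. -/
def IsPartialKirkmanSystem.classPerm (hG : IsPartialKirkmanSystem G) (p : R) : Equiv.Perm V where
  toFun := G p
  invFun u := G p (G p u)
  left_inv := hG.iterate_three p
  right_inv := hG.iterate_three p

theorem IsPartialKirkmanSystem.minimalPeriod_permCongr_classPerm {W : Type*}
    (hG : IsPartialKirkmanSystem G) (p : R) (e : V ≃ W) (w : W) :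
    Function.minimalPeriod (e.permCongr (hG.classPerm p)) w = 3 := by
  refine Function.minimalPeriod_eq_prime ?_ fun h ↦ ?_
  · simp [Function.IsPeriodicPt, Function.IsFixedPt, classPerm, hG.iterate_three]
  · exact hG.ne_self p (e.symm w) (e.eq_symm_apply.2 h)

end Factorization

/-- Intermediate claim in the odd construction: for odd `x ≥ 1`, the digraph
`K_x^* ≀ K̄_3` (vertices `Fin x × Fin 3`, arcs all ordered pairs with distinct
first coordinates) has a `K_3^*`-factorization into `3(x-1)/2` factors. Each
factor is a fixed-point-free permutation with all cycles of length 3 moving the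
first coordinate, whose arc set is `{(p, σ p)} ∪ {(σ p, p)}`; every arc of the
digraph lies in exactly one factor. -/
theorem wreath_K3star_factorization (x : ℕ) (hx : 1 ≤ x) (hxo : Odd x) :
    ∃ σ : Fin (3 * (x - 1) / 2) → Equiv.Perm (Fin x × Fin 3),
      (∀ k p, Function.minimalPeriod ⇑(σ k) p = 3) ∧
      (∀ k p, (σ k p).1 ≠ p.1) ∧
      (∀ p q : Fin x × Fin 3, p.1 ≠ q.1 → ∃! k, σ k p = q ∨ σ k q = p) := by
  obtain ⟨N, rfl⟩ := hxo
  obtain ⟨G, hG⟩ := (hasKirkmanFrame_three_mul_add_one N).exists_isKirkmanSystem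
  obtain ⟨e, he⟩ := hG.exists_equiv_fin_prod_fin_three (x := 2 * N + 1)
    (by simp; lia) 0
  rw [show 3 * (2 * N + 1 - 1) / 2 = 3 * N by lia]
  let σ (k : Fin (3 * N)) : Equiv.Perm (Fin (2 * N + 1) × Fin 3) :=
    e.permCongr (hG.classPerm k.succ)
  have hσ (k p q) : σ k p = q ∨ σ k q = p ↔ Joins (G k.succ) (e.symm p) (e.symm q) :=
    or_congr e.eq_symm_apply.symm e.eq_symm_apply.symm
  have hfst (p q) : p.1 = q.1 ↔ e.symm p = e.symm q ∨ Joins (G 0) (e.symm p) (e.symm q) := by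
    simpa only [e.apply_symm_apply] using he (e.symm p) (e.symm q)
  refine ⟨σ, fun k ↦ hG.minimalPeriod_permCongr_classPerm k.succ e, fun k p h ↦ ?_,
    fun p q hpq ↦ ?_⟩
  · have hjoins := (hσ k p (σ k p)).1 (.inl rfl)
    obtain heq | h0 := (hfst p (σ k p)).1 h.symm
    · exact hG.ne_of_joins hjoins heq
    · exact k.succ_ne_zero (hG.index_unique hjoins h0)
  · obtain ⟨huv, h0⟩ := not_or.1 (mt (hfst p q).2 hpq)
    obtain ⟨j, hj⟩ := hG.exists_joins huv
    obtain ⟨k, rfl⟩ := Fin.exists_succ_eq.2 fun hj0 ↦ h0 (hj0 ▸ hj)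
    exact ⟨k, (hσ k p q).2 hj, fun l hl ↦
      Fin.succ_injective _ (hG.index_unique ((hσ l p q).1 hl) hj)⟩
end

section
/- (Lemma 4.2, case (3,5).) For all nonnegative integers r and s: if r + s = 14 and r ∉ {11, 12, 13}, then there exists a solution to HWP*(15; 3^r, 5^s); conversely, if a solution to HWP*(15; 3^r, 5^s) exists, then r + s = 14. -/
/-- A solution to the directed Hamilton–Waterloo problem HWP*(v; m^r, n^s):
a family of `r + s` permutations of `Fin v`, the first `r` of which are
fixed-point-free with all cycles of length `m` (i.e. every point has minimal
period `m`), the last `s` fixed-point-free with all cycles of length `n`,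
such that for every ordered pair of distinct vertices `(x, y)` there is exactly
one index `i` with `σ i x = y`. -/
def HWPStarSolution (v m n r s : ℕ) : Prop :=
  ∃ σ : Fin (r + s) → Equiv.Perm (Fin v),
    (∀ i : Fin (r + s), (i : ℕ) < r → ∀ x : Fin v, Function.minimalPeriod ⇑(σ i) x = m) ∧
    (∀ i : Fin (r + s), r ≤ (i : ℕ) → ∀ x : Fin v, Function.minimalPeriod ⇑(σ i) x = n) ∧
    (∀ x y : Fin v, x ≠ y → ∃! i : Fin (r + s), σ i x = y)

/-!
Adjacency matrices turn decompositions of digraphs into sums, a directed 2-factor being a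
permutation matrix. Let `ρ` be the translation `x ↦ x + 5` of `ℤ/15`, of order 3. A computer search
gives decompositions of `K₁₅*` into `F`, the three translates of `M` and the three translates of `D`
under `ρ`, where `F` consists of two directed 2-factors, `M` is one, and the block `D` is a
3-regular digraph with two factorizations into different numbers of triangle and pentagon factors.
The factorization of each translate of `D` can be chosen independently, so one such decomposition
serves several values of `r`, and four of them serve all `r ≤ 13`. For `r = 14`, a Kirkman triple
system of order 15 with an automorphism of order 7 gives seven triangle factors, and reversing their
arcs gives seven more.
-/

open Equiv Function

section CycleFactorization

variable {V : Type*} {m n : ℕ}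

/-- `σ` encodes a directed 2-factor, with arcs `x → σ x`, all of whose cycles have length `m`. -/
def IsCycleFactor (m : ℕ) (σ : Perm V) : Prop :=
  ∀ x, minimalPeriod σ x = m

theorem isCycleFactor_of_prime {p : ℕ} (hp : p.Prime) {σ : Perm V}
    (h : ∀ x, σ^[p] x = x ∧ σ x ≠ x) : IsCycleFactor p σ := by
  have := Fact.mk hp
  exact fun x => minimalPeriod_eq_prime (h x).1 (h x).2

theorem IsCycleFactor.conj {σ : Perm V} (h : IsCycleFactor m σ) (g : Perm V) :
    IsCycleFactor m (g⁻¹ * σ * g) := fun x => by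
  have semiconj : Semiconj g ⇑(g⁻¹ * σ * g) σ := fun y => by simp
  rw [← h (g x), minimalPeriod_eq_minimalPeriod_iff]
  intro k
  rw [IsPeriodicPt, IsPeriodicPt, IsFixedPt, IsFixedPt, ← (semiconj.iterate_right k).eq,
    g.injective.eq_iff]

variable [DecidableEq V]

/-- The digraph with adjacency matrix `A`, multiple arcs allowed, decomposes into `r` directed
2-factors with all cycles of length `m` and `s` with all cycles of length `n`. -/
def HasCycleFactorization (m n : ℕ) (A : Matrix V V ℕ) (r s : ℕ) : Prop :=
  ∃ (σ : Fin r → Perm V) (τ : Fin s → Perm V),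
    (∀ i, IsCycleFactor m (σ i)) ∧ (∀ j, IsCycleFactor n (τ j)) ∧
      A = ∑ i, (σ i).permMatrix ℕ + ∑ j, (τ j).permMatrix ℕ

/-- The sum of the translates of the base digraph `A` under the first `k` powers of `g`; when `g`
has order `k`, this is `A` developed under the group generated by `g`. -/
def development (g : Perm V) (k : ℕ) (A : Matrix V V ℕ) : Matrix V V ℕ :=
  ∑ i ∈ Finset.range k, A.submatrix ⇑(g ^ i) ⇑(g ^ i)

theorem permMatrix_submatrix (σ g : Perm V) :
    (σ.permMatrix ℕ).submatrix g g = (g⁻¹ * σ * g).permMatrix ℕ := by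
  ext x y
  simp [PEquiv.toMatrix_apply, symm_apply_eq]

namespace HasCycleFactorization

variable {A B : Matrix V V ℕ} {r r' s s' : ℕ}

theorem zero : HasCycleFactorization m n (0 : Matrix V V ℕ) 0 0 :=
  ⟨![], ![], by simp, by simp, by simp⟩

theorem left {σ : Perm V} (h : IsCycleFactor m σ) :
    HasCycleFactorization m n (σ.permMatrix ℕ) 1 0 :=
  ⟨![σ], ![], by simpa, by simp, by simp⟩

theorem right {σ : Perm V} (h : IsCycleFactor n σ) :
    HasCycleFactorization m n (σ.permMatrix ℕ) 0 1 :=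
  ⟨![], ![σ], by simp, by simpa, by simp⟩

theorem add (hA : HasCycleFactorization m n A r s) (hB : HasCycleFactorization m n B r' s') :
    HasCycleFactorization m n (A + B) (r + r') (s + s') := by
  obtain ⟨σ, τ, hσ, hτ, rfl⟩ := hA
  obtain ⟨σ', τ', hσ', hτ', rfl⟩ := hB
  refine ⟨Fin.append σ σ', Fin.append τ τ', ?_, ?_, ?_⟩
  · exact Fin.addCases (by simpa using hσ) (by simpa using hσ')
  · exact Fin.addCases (by simpa using hτ) (by simpa using hτ')
  · simp only [Fin.sum_univ_add, Fin.append_left, Fin.append_right]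
    abel

theorem submatrix (hA : HasCycleFactorization m n A r s) (g : Perm V) :
    HasCycleFactorization m n (A.submatrix g g) r s := by
  obtain ⟨σ, τ, hσ, hτ, rfl⟩ := hA
  refine ⟨fun i => g⁻¹ * σ i * g, fun j => g⁻¹ * τ j * g, fun i => (hσ i).conj g,
    fun j => (hτ j).conj g, ?_⟩
  simp only [← permMatrix_submatrix]
  ext x y
  simp [Matrix.sum_apply]

theorem development_succ {g : Perm V} {k : ℕ}
    (hk : HasCycleFactorization m n (development g k A) r s)
    (hA : HasCycleFactorization m n A r' s') :
    HasCycleFactorization m n (development g (k + 1) A) (r + r') (s + s') := by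
  rw [development, Finset.sum_range_succ]
  exact hk.add (hA.submatrix (g ^ k))

theorem development_const (hA : HasCycleFactorization m n A r s) (g : Perm V) (k : ℕ) :
    HasCycleFactorization m n (development g k A) (k * r) (k * s) := by
  induction k with
  | zero => simpa [development] using zero
  | succ k ih => simpa only [Nat.succ_mul] using ih.development_succ hA

theorem development_mix (hA : HasCycleFactorization m n A r s)
    (hA' : HasCycleFactorization m n A r' s') (g : Perm V) (j k : ℕ) :
    HasCycleFactorization m n (development g (j + k) A)
      (j * r + k * r') (j * s + k * s') := by
  induction k with
  | zero => simpa using hA.development_const g j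
  | succ k ih => simpa only [Nat.succ_mul, add_assoc] using ih.development_succ hA'

theorem hwpStarSolution {v : ℕ}
    (h : HasCycleFactorization m n ((⊤ : SimpleGraph (Fin v)).adjMatrix ℕ) r s) :
    HWPStarSolution v m n r s := by
  obtain ⟨σ, τ, hσ, hτ, hsum⟩ := h
  refine ⟨Fin.append σ τ, ?_, ?_, fun x y hxy => ?_⟩
  · exact Fin.addCases (fun i _ x => by simpa only [Fin.append_left] using hσ i x)
      (fun j hj => absurd hj (Nat.le_add_right r j).not_gt)
  · exact Fin.addCases (fun i hi => absurd i.2 hi.not_gt)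
      (fun j _ x => by simpa only [Fin.append_right] using hτ j x)
  · have arcs_eq_one : ∑ i, (Fin.append σ τ i).permMatrix ℕ x y = 1 := by
      have arc_count := congr_fun₂ hsum x y
      simp only [Matrix.add_apply, Matrix.sum_apply] at arc_count
      simp only [Fin.sum_univ_add, Fin.append_left, Fin.append_right, ← arc_count]
      simp [hxy]
    simp only [PEquiv.toMatrix_apply, toPEquiv_apply, Option.mem_some_iff, Finset.sum_boole,
      Nat.cast_id, Finset.card_eq_one] at arcs_eq_one
    obtain ⟨i, hi⟩ := arcs_eq_one
    simp only [Finset.ext_iff, Finset.mem_filter, Finset.mem_univ, true_and,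
      Finset.mem_singleton] at hi
    exact ⟨i, (hi i).2 rfl, fun j hj => (hi j).1 hj⟩

theorem add_development {F M D : Matrix V V ℕ} {j k l rF sF rM sM rD sD rD' sD' : ℕ}
    (hF : HasCycleFactorization m n F rF sF) (hM : HasCycleFactorization m n M rM sM)
    (hD : HasCycleFactorization m n D rD sD) (hD' : HasCycleFactorization m n D rD' sD')
    (hjk : j + k = l) (g : Perm V) :
    HasCycleFactorization m n (F + development g l M + development g l D)
      (rF + l * rM + (j * rD + k * rD')) (sF + l * sM + (j * sD + k * sD')) :=
  (hF.add (hM.development_const g l)).add (hjk ▸ hD.development_mix hD' g j k)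

end HasCycleFactorization

theorem hasCycleFactorization_triangle {σ : Perm V} (h : ∀ x, σ^[3] x = x ∧ σ x ≠ x) :
    HasCycleFactorization 3 n (σ.permMatrix ℕ) 1 0 :=
  .left (isCycleFactor_of_prime Nat.prime_three h)

theorem hasCycleFactorization_pentagon {σ : Perm V} (h : ∀ x, σ^[5] x = x ∧ σ x ≠ x) :
    HasCycleFactorization m 5 (σ.permMatrix ℕ) 0 1 :=
  .right (isCycleFactor_of_prime Nat.prime_five h)

end CycleFactorization

theorem HWPStarSolution.add_eq {v m n r s : ℕ} (hm : m ≠ 1) (hn : n ≠ 1)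
    (h : HWPStarSolution (v + 1) m n r s) : r + s = v := by
  obtain ⟨σ, hm_cycles, hn_cycles, hσ⟩ := h
  have ne_self (i) : σ i 0 ≠ 0 := fun fixed => by
    have period_one : minimalPeriod (σ i) 0 = 1 := minimalPeriod_eq_one_iff_isFixedPt.2 fixed
    rcases lt_or_ge (i : ℕ) r with hi | hi
    · exact hm ((hm_cycles i hi 0).symm.trans period_one)
    · exact hn ((hn_cycles i hi 0).symm.trans period_one)
  have bijective : Bijective fun i => (⟨σ i 0, ne_self i⟩ : {y : Fin (v + 1) // y ≠ 0}) := by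
    refine (bijective_iff_existsUnique _).2 fun y => ?_
    simpa only [Subtype.ext_iff] using hσ 0 y y.2.symm
  simpa using Fintype.card_of_bijective bijective

/-- The translation `x ↦ x + 5` of `ℤ/15`, of order 3, under which base digraphs are developed. -/
def shift : Perm (Fin 15) := Equiv.addRight 5

namespace OddCount

/-- A triangle and a pentagon factor, the part of `K₁₅*` that is not developed under `shift`. -/
def fixedPart : Matrix (Fin 15) (Fin 15) ℕ :=
  Perm.permMatrix ℕ (c[0, 12, 3] * c[1, 6, 11] * c[2, 8, 5] * c[4, 14, 9] * c[7, 13, 10]) +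
  Perm.permMatrix ℕ (c[0, 2, 4, 6, 13] * c[1, 8, 10, 12, 14] * c[3, 5, 7, 9, 11])

theorem hasCycleFactorization_fixedPart : HasCycleFactorization 3 5 fixedPart 1 1 :=
  (hasCycleFactorization_triangle (by decide +kernel)).add
    (hasCycleFactorization_pentagon (by decide +kernel))

/-- The triangle factor that is developed under `shift`. -/
def starter : Perm (Fin 15) :=
  c[0, 3, 11] * c[1, 9, 6] * c[2, 13, 8] * c[4, 5, 12] * c[7, 10, 14]

/-- A 3-regular digraph with two factorizations: three triangle factors, or one triangle and two
pentagon factors. -/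
def block : Matrix (Fin 15) (Fin 15) ℕ :=
  Perm.permMatrix ℕ (c[0, 6, 5] * c[1, 13, 3] * c[2, 12, 11] * c[4, 8, 7] * c[9, 14, 10]) +
  Perm.permMatrix ℕ (c[0, 1, 10] * c[2, 11, 12] * c[3, 6, 9] * c[4, 7, 8] * c[5, 14, 13]) +
  Perm.permMatrix ℕ (c[0, 13, 2] * c[1, 12, 5] * c[3, 4, 10] * c[6, 8, 14] * c[7, 11, 9])

theorem block_eq : block =
  Perm.permMatrix ℕ (c[0, 13, 5] * c[1, 10, 3] * c[2, 11, 12] * c[4, 8, 7] * c[6, 9, 14]) +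
  Perm.permMatrix ℕ (c[0, 1, 12, 11, 2] * c[3, 6, 5, 14, 13] * c[4, 10, 9, 7, 8]) +
  Perm.permMatrix ℕ (c[0, 6, 8, 14, 10] * c[1, 13, 2, 12, 5] * c[3, 4, 7, 11, 9]) := by
  decide +kernel

theorem hasCycleFactorization_block_triangle : HasCycleFactorization 3 5 block 3 0 :=
  ((hasCycleFactorization_triangle (by decide +kernel)).add
    (hasCycleFactorization_triangle (by decide +kernel))).add
    (hasCycleFactorization_triangle (by decide +kernel))

theorem hasCycleFactorization_block_mixed : HasCycleFactorization 3 5 block 1 2 := by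
  rw [block_eq]
  exact ((hasCycleFactorization_triangle (by decide +kernel)).add
    (hasCycleFactorization_pentagon (by decide +kernel))).add
    (hasCycleFactorization_pentagon (by decide +kernel))

theorem completeDigraph_eq : (⊤ : SimpleGraph (Fin 15)).adjMatrix ℕ =
    fixedPart + development shift 3 (starter.permMatrix ℕ) + development shift 3 block := by
  decide +kernel

theorem hwpStarSolution {j k : ℕ} (hjk : j + k = 3) :
    HWPStarSolution 15 3 5 (4 + 3 * j + k) (1 + 2 * k) := by
  have starter_factor : HasCycleFactorization 3 5 (starter.permMatrix ℕ) 1 0 :=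
    hasCycleFactorization_triangle (by decide +kernel)
  have h := hasCycleFactorization_fixedPart.add_development starter_factor
    hasCycleFactorization_block_triangle hasCycleFactorization_block_mixed hjk shift
  rw [← completeDigraph_eq] at h
  convert h.hwpStarSolution using 1 <;> omega

end OddCount

namespace EvenCount

/-- Two pentagon factors, the part of `K₁₅*` that is not developed under `shift`. -/
def fixedPart : Matrix (Fin 15) (Fin 15) ℕ :=
  Perm.permMatrix ℕ (c[0, 3, 14, 2, 11] * c[1, 5, 8, 4, 7] * c[6, 10, 13, 9, 12]) +
  Perm.permMatrix ℕ (c[0, 11, 14, 3, 7] * c[1, 4, 8, 12, 5] * c[2, 10, 6, 9, 13])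

theorem hasCycleFactorization_fixedPart : HasCycleFactorization 3 5 fixedPart 0 2 :=
  (hasCycleFactorization_pentagon (by decide +kernel)).add
    (hasCycleFactorization_pentagon (by decide +kernel))

/-- The triangle factor that is developed under `shift`. -/
def starter : Perm (Fin 15) :=
  c[0, 5, 4] * c[1, 10, 2] * c[3, 12, 9] * c[6, 11, 13] * c[7, 8, 14]

/-- A 3-regular digraph with two factorizations: three triangle factors, or one triangle and two
pentagon factors. -/
def block : Matrix (Fin 15) (Fin 15) ℕ :=
  Perm.permMatrix ℕ (c[0, 10, 3] * c[1, 8, 13] * c[2, 5, 11] * c[4, 9, 6] * c[7, 14, 12]) +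
  Perm.permMatrix ℕ (c[0, 4, 14] * c[1, 2, 6] * c[3, 13, 5] * c[7, 12, 10] * c[8, 9, 11]) +
  Perm.permMatrix ℕ (c[0, 1, 9] * c[2, 4, 3] * c[5, 14, 6] * c[7, 13, 11] * c[8, 10, 12])

theorem block_eq : block =
  Perm.permMatrix ℕ (c[0, 4, 14] * c[1, 9, 6] * c[2, 5, 3] * c[7, 12, 10] * c[8, 13, 11]) +
  Perm.permMatrix ℕ (c[0, 10, 12, 8, 9] * c[1, 2, 4, 3, 13] * c[5, 11, 7, 14, 6]) +
  Perm.permMatrix ℕ (c[0, 1, 8, 10, 3] * c[2, 6, 4, 9, 11] * c[5, 14, 12, 7, 13]) := by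
  decide +kernel

theorem hasCycleFactorization_block_triangle : HasCycleFactorization 3 5 block 3 0 :=
  ((hasCycleFactorization_triangle (by decide +kernel)).add
    (hasCycleFactorization_triangle (by decide +kernel))).add
    (hasCycleFactorization_triangle (by decide +kernel))

theorem hasCycleFactorization_block_mixed : HasCycleFactorization 3 5 block 1 2 := by
  rw [block_eq]
  exact ((hasCycleFactorization_triangle (by decide +kernel)).add
    (hasCycleFactorization_pentagon (by decide +kernel))).add
    (hasCycleFactorization_pentagon (by decide +kernel))

theorem completeDigraph_eq : (⊤ : SimpleGraph (Fin 15)).adjMatrix ℕ =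
    fixedPart + development shift 3 (starter.permMatrix ℕ) + development shift 3 block := by
  decide +kernel

theorem hwpStarSolution {j k : ℕ} (hjk : j + k = 3) :
    HWPStarSolution 15 3 5 (3 + 3 * j + k) (2 + 2 * k) := by
  have starter_factor : HasCycleFactorization 3 5 (starter.permMatrix ℕ) 1 0 :=
    hasCycleFactorization_triangle (by decide +kernel)
  have h := hasCycleFactorization_fixedPart.add_development starter_factor
    hasCycleFactorization_block_triangle hasCycleFactorization_block_mixed hjk shift
  rw [← completeDigraph_eq] at h
  convert h.hwpStarSolution using 1 <;> omega

end EvenCount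

namespace SmallCount

/-- Two pentagon factors, the part of `K₁₅*` that is not developed under `shift`. -/
def fixedPart : Matrix (Fin 15) (Fin 15) ℕ :=
  Perm.permMatrix ℕ (c[0, 11, 12, 4, 3] * c[1, 2, 9, 8, 5] * c[6, 7, 14, 13, 10]) +
  Perm.permMatrix ℕ (c[0, 13, 2, 6, 14] * c[1, 9, 10, 8, 12] * c[3, 7, 11, 4, 5])

theorem hasCycleFactorization_fixedPart : HasCycleFactorization 3 5 fixedPart 0 2 :=
  (hasCycleFactorization_pentagon (by decide +kernel)).add
    (hasCycleFactorization_pentagon (by decide +kernel))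

/-- A triangle factor to be developed under `shift`. -/
def triangleStarter : Perm (Fin 15) :=
  c[0, 9, 5] * c[1, 4, 14] * c[2, 11, 10] * c[3, 12, 7] * c[6, 13, 8]

/-- A pentagon factor whose translates cover the same arcs as those of `triangleStarter`. -/
def pentagonStarter : Perm (Fin 15) :=
  c[0, 9, 4, 6, 5] * c[1, 8, 3, 12, 7] * c[2, 13, 11, 14, 10]

/-- A 3-regular digraph with two factorizations: one triangle and two pentagon factors, or three
pentagon factors. -/
def block : Matrix (Fin 15) (Fin 15) ℕ :=
  Perm.permMatrix ℕ (c[0, 4, 7] * c[1, 3, 2] * c[5, 10, 11] * c[6, 12, 9] * c[8, 13, 14]) +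
  Perm.permMatrix ℕ (c[0, 14, 3, 6, 11] * c[1, 12, 2, 4, 9] * c[5, 7, 8, 10, 13]) +
  Perm.permMatrix ℕ (c[0, 12, 10, 3, 9] * c[1, 14, 7, 13, 6] * c[2, 5, 11, 8, 4])

theorem block_eq : block =
  Perm.permMatrix ℕ (c[0, 4, 2, 5, 11] * c[1, 3, 6, 12, 9] * c[7, 8, 10, 13, 14]) +
  Perm.permMatrix ℕ (c[0, 12, 2, 4, 7] * c[1, 14, 3, 9, 6] * c[5, 10, 11, 8, 13]) +
  Perm.permMatrix ℕ (c[0, 14, 8, 4, 9] * c[1, 12, 10, 3, 2] * c[5, 7, 13, 6, 11]) := by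
  decide +kernel

theorem hasCycleFactorization_block_mixed : HasCycleFactorization 3 5 block 1 2 :=
  ((hasCycleFactorization_triangle (by decide +kernel)).add
    (hasCycleFactorization_pentagon (by decide +kernel))).add
    (hasCycleFactorization_pentagon (by decide +kernel))

theorem hasCycleFactorization_block_pentagon : HasCycleFactorization 3 5 block 0 3 := by
  rw [block_eq]
  exact ((hasCycleFactorization_pentagon (by decide +kernel)).add
    (hasCycleFactorization_pentagon (by decide +kernel))).add
    (hasCycleFactorization_pentagon (by decide +kernel))

theorem completeDigraph_eq_triangle : (⊤ : SimpleGraph (Fin 15)).adjMatrix ℕ =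
    fixedPart + development shift 3 (triangleStarter.permMatrix ℕ) + development shift 3 block := by
  decide +kernel

theorem completeDigraph_eq_pentagon : (⊤ : SimpleGraph (Fin 15)).adjMatrix ℕ =
    fixedPart + development shift 3 (pentagonStarter.permMatrix ℕ) + development shift 3 block := by
  decide +kernel

theorem hwpStarSolution_triangle {j k : ℕ} (hjk : j + k = 3) :
    HWPStarSolution 15 3 5 (3 + j) (2 + 2 * j + 3 * k) := by
  have starter_factor : HasCycleFactorization 3 5 (triangleStarter.permMatrix ℕ) 1 0 :=
    hasCycleFactorization_triangle (by decide +kernel)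
  have h := hasCycleFactorization_fixedPart.add_development starter_factor
    hasCycleFactorization_block_mixed hasCycleFactorization_block_pentagon hjk shift
  rw [← completeDigraph_eq_triangle] at h
  convert h.hwpStarSolution using 1 <;> omega

theorem hwpStarSolution_pentagon {j k : ℕ} (hjk : j + k = 3) :
    HWPStarSolution 15 3 5 j (5 + 2 * j + 3 * k) := by
  have starter_factor : HasCycleFactorization 3 5 (pentagonStarter.permMatrix ℕ) 0 1 :=
    hasCycleFactorization_pentagon (by decide +kernel)
  have h := hasCycleFactorization_fixedPart.add_development starter_factor
    hasCycleFactorization_block_mixed hasCycleFactorization_block_pentagon hjk shift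
  rw [← completeDigraph_eq_pentagon] at h
  convert h.hwpStarSolution using 1 <;> omega

end SmallCount

/-- A parallel class of a Kirkman triple system of order 15, with each triple oriented; the other
classes are its translates under `kirkmanRotation`. -/
def kirkmanClass : Perm (Fin 15) :=
  c[14, 0, 7] * c[1, 2, 4] * c[3, 8, 12] * c[5, 11, 13] * c[6, 9, 10]

/-- The automorphism of order 7 of the Kirkman triple system, fixing the point `14`. -/
def kirkmanRotation : Perm (Fin 15) :=
  c[0, 1, 2, 3, 4, 5, 6] * c[7, 8, 9, 10, 11, 12, 13]

theorem completeDigraph_eq_kirkman : (⊤ : SimpleGraph (Fin 15)).adjMatrix ℕ =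
    development kirkmanRotation 7
      (kirkmanClass.permMatrix ℕ + (kirkmanClass⁻¹).permMatrix ℕ) := by
  decide +kernel

theorem hwpStarSolution_fourteen_zero : HWPStarSolution 15 3 5 14 0 := by
  have both_orientations : HasCycleFactorization 3 5
      (kirkmanClass.permMatrix ℕ + (kirkmanClass⁻¹).permMatrix ℕ) 2 0 :=
    (hasCycleFactorization_triangle (by decide +kernel)).add
      (hasCycleFactorization_triangle (by decide +kernel))
  have h := both_orientations.development_const kirkmanRotation 7
  rw [← completeDigraph_eq_kirkman] at h
  exact h.hwpStarSolution

theorem hwpStarSolution_of_add_eq {r s : ℕ} (h : r + s = 14) : HWPStarSolution 15 3 5 r s := by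
  obtain rfl : s = 14 - r := by omega
  have hr : r ≤ 14 := by omega
  interval_cases r
  · exact SmallCount.hwpStarSolution_pentagon (j := 0) (k := 3) rfl
  · exact SmallCount.hwpStarSolution_pentagon (j := 1) (k := 2) rfl
  · exact SmallCount.hwpStarSolution_pentagon (j := 2) (k := 1) rfl
  · exact SmallCount.hwpStarSolution_triangle (j := 0) (k := 3) rfl
  · exact SmallCount.hwpStarSolution_triangle (j := 1) (k := 2) rfl
  · exact SmallCount.hwpStarSolution_triangle (j := 2) (k := 1) rfl
  · exact SmallCount.hwpStarSolution_triangle (j := 3) (k := 0) rfl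
  · exact OddCount.hwpStarSolution (j := 0) (k := 3) rfl
  · exact EvenCount.hwpStarSolution (j := 1) (k := 2) rfl
  · exact OddCount.hwpStarSolution (j := 1) (k := 2) rfl
  · exact EvenCount.hwpStarSolution (j := 2) (k := 1) rfl
  · exact OddCount.hwpStarSolution (j := 2) (k := 1) rfl
  · exact EvenCount.hwpStarSolution (j := 3) (k := 0) rfl
  · exact OddCount.hwpStarSolution (j := 3) (k := 0) rfl
  · exact hwpStarSolution_fourteen_zero

theorem hwpStar_15_3_5_general (r s : ℕ) : HWPStarSolution 15 3 5 r s ↔ r + s = 14 :=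
  ⟨HWPStarSolution.add_eq (by decide) (by decide), hwpStarSolution_of_add_eq⟩

/-- Lemma 4.2, case (3,5): if r + s = 14 and r ∉ {11, 12, 13} then
HWP*(15; 3^r, 5^s) has a solution; conversely any solution forces r + s = 14. -/
theorem hwpStar_15_3_5 (r s : ℕ) :
    (r + s = 14 ∧ r ∉ ({11, 12, 13} : Set ℕ) → HWPStarSolution 15 3 5 r s) ∧
    (HWPStarSolution 15 3 5 r s → r + s = 14) :=
  ⟨fun h => (hwpStar_15_3_5_general r s).2 h.1, (hwpStar_15_3_5_general r s).1⟩
end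

section
/- (Theorem 4.3, sufficiency.) Let v be an odd integer with v > 15 and 15 ∣ v, and let (m, n) be one of the pairs (3,5), (3,15), (5,15). Then for all nonnegative integers r, s with r + s = v − 1, there exists a solution to HWP*(v; m^r, n^s). -/
/-!
Write `v = 15 * k` and take `A × Fin 15` with `A = ZMod k` as the set of points.

Let `D` be a digraph on `V` and `p : V → ℤ` such that the differences of `p` along the arcs of `D`
are units of `A`. An arc of `A × V` over `D` from `(a, f)` to `(b, g)` then has a slope `d`, defined
by `b - a = (p g - p f) * d`. The arcs of one slope form a sheared copy of `A` disjoint copies of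
`D`; hence, if `D` decomposes both into `m`-cycle factors and into `n`-cycle factors, the length can
be chosen for each slope separately.

If `3 ∣ k`, this applies to the tripartite digraph of pairs incongruent modulo `3`, with
`p f = f % 3`. What remains is three copies of the problem on `5 * k` points; induct on `k`.

If `k` is coprime to `6`, this applies, with `p f = f % 5` and the nonzero slopes, to a 9-regular
digraph `Spread`. The other arcs between distinct fibres over `A` are covered by `6 * k` factors of
one length `m`. Each consists of translated and scaled copies of one small permutation, which fill
all fibres but one, and of one of six `m`-cycle factors from a decomposition of `K₁₅*` on the
remaining fibre; the other eight factors of this decomposition are copied on all fibres. One of `r`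
and `s` is at least `6 * k`, which provides the factors of one length.
-/

namespace DirectedHamiltonWaterloo

open Function Finset

section Periods

variable {α β : Type*} {f : α → α} {g : β → β}

theorem minimalPeriod_apply_of_semiconj {φ : α → β} (hφ : Injective φ) (h : Semiconj φ f g)
    (x : α) : minimalPeriod g (φ x) = minimalPeriod f x := by
  refine minimalPeriod_eq_minimalPeriod_iff.2 fun n => ?_
  rw [IsPeriodicPt, IsFixedPt, ← (h.iterate_right n).eq x, hφ.eq_iff]
  rfl

theorem minimalPeriod_eq_of_properDivisors {m : ℕ} (hpos : 0 < m) {x : α} (hm : f^[m] x = x)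
    (hd : ∀ d ∈ m.properDivisors, f^[d] x ≠ x) : minimalPeriod f x = m := by
  by_contra hne
  have hdvd : minimalPeriod f x ∣ m := IsPeriodicPt.minimalPeriod_dvd hm
  exact hd _ (Nat.mem_properDivisors.2
    ⟨hdvd, lt_of_le_of_ne (Nat.le_of_dvd hpos hdvd) hne⟩) (isPeriodicPt_minimalPeriod f x)

theorem bijective_of_minimalPeriod_eq {m : ℕ} (hm : 0 < m) (h : ∀ x, minimalPeriod f x = m) :
    Bijective f := by
  have hpts : ptsOfPeriod f m = Set.univ :=
    Set.eq_univ_of_forall fun x => h x ▸ isPeriodicPt_minimalPeriod f x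
  simpa only [hpts, Set.bijOn_univ] using bijOn_ptsOfPeriod f hm

end Periods

theorem exists_equiv_comp_eq_of_map_univ_eq {I J β : Type*} [Fintype I] [Fintype J]
    {f : I → β} {g : J → β} (h : univ.val.map f = univ.val.map g) :
    ∃ e : J ≃ I, f ∘ e = g := by
  classical
  have hcard (b : β) : Fintype.card {j // g j = b} = Fintype.card {i // f i = b} := by
    have := congrArg (Multiset.count b) h
    simp only [Multiset.count_map, ← Finset.filter_val, card_val] at this
    simp only [Fintype.card_subtype, eq_comm (b := b), this]
  refine ⟨(Equiv.sigmaFiberEquiv g).symm.trans ((Equiv.sigmaCongrRight fun b =>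
    Fintype.equivOfCardEq (hcard b)).trans (Equiv.sigmaFiberEquiv f)), funext fun j => ?_⟩
  exact (Fintype.equivOfCardEq (hcard (g j)) ⟨j, rfl⟩).2

theorem isUnit_intCast_of_dvd {A : Type*} [CommRing A] {z N : ℤ} (hN : IsUnit (N : A))
    (hz : z ∣ N) : IsUnit (z : A) :=
  isUnit_of_dvd_unit (map_dvd (Int.castRingHom A) hz) hN

/-- `σ` is a decomposition of the digraph `D` into directed 2-factors, all cycles of `σ i` having
length `len i`; a 2-factor is encoded by its successor map. -/
structure IsFactorization {V I : Type} (D : V → V → Prop) (len : I → ℕ) (σ : I → V → V) :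
    Prop where
  minimalPeriod_eq : ∀ i x, minimalPeriod (σ i) x = len i
  rel : ∀ i x, D x (σ i x)
  existsUnique : ∀ x y, D x y → ∃! i, σ i x = y

/-- The digraph `D` decomposes into directed 2-factors whose cycle lengths, one for each factor,
form the multiset `M`. -/
def Factorable {V : Type} (D : V → V → Prop) (M : Multiset ℕ) : Prop :=
  ∃ (I : Type) (_ : Fintype I) (len : I → ℕ) (σ : I → V → V),
    univ.val.map len = M ∧ IsFactorization D len σ

namespace IsFactorization

variable {V I J : Type} {D : V → V → Prop} {len : I → ℕ} {σ : I → V → V}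

theorem factorable [Fintype I] (h : IsFactorization D len σ) :
    Factorable D (univ.val.map len) :=
  ⟨I, ‹_›, len, σ, rfl, h⟩

theorem reindex (h : IsFactorization D len σ) (e : J ≃ I) :
    IsFactorization D (len ∘ e) (σ ∘ e) where
  minimalPeriod_eq j := h.minimalPeriod_eq (e j)
  rel j := h.rel (e j)
  existsUnique x y hxy := e.bijective.existsUnique_iff.1 (h.existsUnique x y hxy)

theorem of_card_eq_one [Fintype I] [DecidableEq V]
    (hpos : ∀ i, 0 < len i)
    (hper : ∀ i x, (σ i)^[len i] x = x ∧ ∀ d ∈ (len i).properDivisors, (σ i)^[d] x ≠ x)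
    (hrel : ∀ i x, D x (σ i x)) (hcard : ∀ x y, D x y → #{i | σ i x = y} = 1) :
    IsFactorization D len σ where
  minimalPeriod_eq i x := minimalPeriod_eq_of_properDivisors (hpos i) (hper i x).1 (hper i x).2
  rel := hrel
  existsUnique x y hxy := (Fintype.existsUnique_iff_card_one _).2 (hcard x y hxy)

theorem of_charts {W : I → Type} (Ψ : ∀ i, W i ≃ V) (π : ∀ i, W i → W i)
    (hper : ∀ i w, minimalPeriod (π i) w = len i) (hrel : ∀ i w, D (Ψ i w) (Ψ i (π i w)))
    (hex : ∀ x y, D x y → ∃! p : Σ i, W i, Ψ p.1 p.2 = x ∧ Ψ p.1 (π p.1 p.2) = y) :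
    IsFactorization D len fun i x => Ψ i (π i ((Ψ i).symm x)) where
  minimalPeriod_eq i x := by
    rw [← hper i ((Ψ i).symm x), ← minimalPeriod_apply_of_semiconj (Ψ i).injective
      (g := fun x => Ψ i (π i ((Ψ i).symm x))) (fun w => by simp), Equiv.apply_symm_apply]
  rel i x := by simpa using hrel i ((Ψ i).symm x)
  existsUnique x y hxy := by
    obtain ⟨⟨i, w⟩, ⟨rfl, hy⟩, huniq⟩ := hex x y hxy
    refine ⟨i, by simpa using hy, fun j hj => ?_⟩
    exact congrArg Sigma.fst (huniq ⟨j, (Ψ j).symm (Ψ i w)⟩ ⟨by simp, hj⟩)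

end IsFactorization

namespace Factorable

variable {V W A ι : Type} {D E : V → V → Prop} {M M₁ M₂ : Multiset ℕ}

theorem congr (h : Factorable D M) (hDE : ∀ x y, D x y ↔ E x y) : Factorable E M := by
  obtain rfl : D = E := funext₂ fun x y => propext (hDE x y)
  exact h

theorem exists_isFactorization {I : Type} [Fintype I] {len : I → ℕ}
    (h : Factorable D (univ.val.map len)) : ∃ σ, IsFactorization D len σ := by
  obtain ⟨J, _, len', σ, hM, hσ⟩ := h
  obtain ⟨e, rfl⟩ := exists_equiv_comp_eq_of_map_univ_eq hM
  exact ⟨σ ∘ e, hσ.reindex e⟩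

theorem comap_equiv (h : Factorable D M) (e : W ≃ V) :
    Factorable (fun x y => D (e x) (e y)) M := by
  obtain ⟨I, _, len, σ, rfl, hσ⟩ := h
  refine (IsFactorization.factorable (σ := fun i x => e.symm (σ i (e x))) ⟨fun i x => ?_,
    fun i x => ?_, fun x y hxy => ?_⟩)
  · rw [← hσ.minimalPeriod_eq i (e x)]
    exact (minimalPeriod_apply_of_semiconj e.injective (fun w => by simp) x).symm
  · simpa only [Equiv.apply_symm_apply] using hσ.rel i (e x)
  · simpa only [Equiv.symm_apply_eq] using hσ.existsUnique _ _ hxy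

theorem fibres (A : Type) (h : Factorable D M) :
    Factorable (fun P Q : A × V => P.1 = Q.1 ∧ D P.2 Q.2) M := by
  obtain ⟨I, _, len, σ, rfl, hσ⟩ := h
  refine (IsFactorization.factorable (σ := fun i => Prod.map id (σ i)) ⟨fun i P => ?_,
    fun i P => ⟨rfl, hσ.rel i P.2⟩, fun P Q hPQ => ?_⟩)
  · rw [← hσ.minimalPeriod_eq i P.2]
    exact minimalPeriod_apply_of_semiconj (Prod.mk_right_injective P.1) (fun _ => rfl) P.2
  · simpa [Prod.ext_iff, hPQ.1] using hσ.existsUnique _ _ hPQ.2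

theorem of_partition (S : Finset ι) (c : V → V → ι) (M : ι → Multiset ℕ)
    (hc : ∀ x y, D x y → c x y ∈ S)
    (h : ∀ i ∈ S, Factorable (fun x y => D x y ∧ c x y = i) (M i)) :
    Factorable D (∑ i ∈ S, M i) := by
  choose I hI len σ hM hσ using fun i : S => h i i.2
  have hsum : univ.val.map (fun p : Σ i, I i => len p.1 p.2) = ∑ i ∈ S, M i := by
    rw [← S.sum_coe_sort, ← Multiset.sum_map_singleton (univ.val.map _), Multiset.map_map,
      Finset.sum_map_val, Fintype.sum_sigma]
    refine sum_congr rfl fun i _ => ?_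
    rw [← hM i, ← Multiset.sum_map_singleton (univ.val.map (len i)), Multiset.map_map]
    rfl
  rw [← hsum]
  refine IsFactorization.factorable (σ := fun p => σ p.1 p.2) ⟨fun p => (hσ p.1).minimalPeriod_eq _,
    fun p x => ((hσ p.1).rel p.2 x).1, fun x y hxy => ?_⟩
  obtain ⟨i, hi⟩ : ∃ i : S, c x y = i := ⟨⟨c x y, hc x y hxy⟩, rfl⟩
  obtain ⟨j, hj, huniq⟩ := (hσ i).existsUnique x y ⟨hxy, hi⟩
  refine ⟨⟨i, j⟩, hj, ?_⟩
  rintro ⟨i', j'⟩ (hj' : σ i' j' x = y)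
  obtain rfl : i' = i := Subtype.ext (((hσ i').rel j' x).2.symm.trans (hj'.symm ▸ hi))
  rw [huniq j' hj']

theorem of_split (C : V → V → Prop) (h₁ : Factorable (fun x y => D x y ∧ C x y) M₁)
    (h₂ : Factorable (fun x y => D x y ∧ ¬C x y) M₂) : Factorable D (M₁ + M₂) := by
  classical
  have := of_partition univ (fun x y => decide (C x y)) (fun b => bif b then M₁ else M₂)
    (fun _ _ _ => mem_univ _) (D := D) ?_
  · simpa using this
  · rintro (_ | _) -
    · simpa using h₂
    · simpa using h₁

theorem exists_of_add (h : Factorable D (M₁ + M₂)) :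
    ∃ C : V → V → Prop, Factorable (fun x y => D x y ∧ C x y) M₁ ∧
      Factorable (fun x y => D x y ∧ ¬C x y) M₂ := by
  let len : M₁ ⊕ M₂ → ℕ := Sum.elim (fun i => i) (fun i => i)
  have hlen : univ.val.map len = M₁ + M₂ := by
    rw [← univ_disjSum_univ, val_disjSum, Multiset.disjSum, Multiset.map_add, Multiset.map_map,
      Multiset.map_map]
    exact congrArg₂ (· + ·) M₁.map_univ_coe M₂.map_univ_coe
  obtain ⟨σ, hσ⟩ := exists_isFactorization (hlen ▸ h)
  refine ⟨fun x y => ∃ i, σ (.inl i) x = y, ?_, ?_⟩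
  · refine ⟨M₁, inferInstance, fun i => i, fun i => σ (.inl i), M₁.map_univ_coe,
      fun i => hσ.minimalPeriod_eq _, fun i x => ⟨hσ.rel _ x, i, rfl⟩,
      fun x y ⟨hxy, i, hi⟩ => ⟨i, hi, fun j hj => ?_⟩⟩
    exact Sum.inl_injective ((hσ.existsUnique x y hxy).unique hj hi)
  · refine ⟨M₂, inferInstance, fun i => i, fun i => σ (.inr i), M₂.map_univ_coe,
      fun i => hσ.minimalPeriod_eq _, fun i x => ⟨hσ.rel _ x, fun ⟨j, hj⟩ => ?_⟩,
      fun x y ⟨hxy, hC⟩ => ?_⟩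
    · exact Sum.inl_ne_inr ((hσ.existsUnique x _ (hσ.rel (.inr i) x)).unique hj rfl)
    · obtain ⟨i | i, hi, huniq⟩ := hσ.existsUnique x y hxy
      · exact absurd ⟨i, hi⟩ hC
      · exact ⟨i, hi, fun j hj => Sum.inr_injective (huniq _ hj)⟩

theorem of_partition_two (S : Finset ι) (c : V → V → ι) (hc : ∀ x y, D x y → c x y ∈ S)
    (h₁ : ∀ i ∈ S, Factorable (fun x y => D x y ∧ c x y = i) M₁)
    (h₂ : ∀ i ∈ S, Factorable (fun x y => D x y ∧ c x y = i) M₂) {a b : ℕ} (hab : a + b = #S) :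
    Factorable D (a • M₁ + b • M₂) := by
  classical
  obtain ⟨T, hTS, rfl⟩ := exists_subset_card_eq (hab ▸ Nat.le_add_right a b)
  have hb : #(S \ T) = b := by rw [card_sdiff_of_subset hTS]; omega
  have := of_partition S c (fun i => if i ∈ T then M₁ else M₂) hc fun i hi => by
    split_ifs
    exacts [h₁ i hi, h₂ i hi]
  rwa [← sum_sdiff hTS, add_comm, sum_congr rfl fun i hi => if_pos hi, sum_const,
    sum_congr rfl fun i hi => if_neg (mem_sdiff.1 hi).2, sum_const, hb] at this

theorem of_const {I : Type} [Fintype I] {m : ℕ} {σ : I → V → V}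
    (h : IsFactorization D (fun _ => m) σ) :
    Factorable D (Multiset.replicate (Fintype.card I) m) := by
  simpa using h.factorable

theorem shear [AddCommGroup A] (p : V → A) (h : Factorable D M) :
    Factorable (fun P Q : A × V => Q.1 - P.1 = p Q.2 - p P.2 ∧ D P.2 Q.2) M := by
  let e : A × V ≃ A × V :=
    { toFun := fun P => (P.1 - p P.2, P.2)
      invFun := fun P => (P.1 + p P.2, P.2)
      left_inv := fun P => by simp
      right_inv := fun P => by simp }
  refine ((h.fibres A).comap_equiv e).congr fun P Q => and_congr_left fun _ => ?_
  rw [sub_eq_sub_iff_sub_eq_sub, eq_comm]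
  rfl

theorem lines [CommRing A] {p : V → ℤ} {N : ℤ} (hN : IsUnit (N : A))
    (hp : ∀ f g, D f g → p g - p f ∣ N) (S : Finset A) (h₁ : Factorable D M₁)
    (h₂ : Factorable D M₂) {a b : ℕ} (hab : a + b = #S) :
    Factorable (fun P Q : A × V =>
      D P.2 Q.2 ∧ ∃ d ∈ S, Q.1 - P.1 = ((p Q.2 - p P.2 : ℤ) : A) * d) (a • M₁ + b • M₂) := by
  have hunit {f g} (hfg : D f g) : IsUnit ((p g - p f : ℤ) : A) :=
    isUnit_intCast_of_dvd hN (hp f g hfg)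
  let slope (P Q : A × V) : A := Ring.inverse ((p Q.2 - p P.2 : ℤ) : A) * (Q.1 - P.1)
  have slope_eq {P Q : A × V} {d : A} (hPQ : D P.2 Q.2) :
      slope P Q = d ↔ Q.1 - P.1 = ((p Q.2 - p P.2 : ℤ) : A) * d :=
    Ring.inverse_mul_eq_iff_eq_mul _ _ _ (hunit hPQ)
  have line {M : Multiset ℕ} (h : Factorable D M) (d : A) (hd : d ∈ S) :
      Factorable (fun P Q : A × V =>
        (D P.2 Q.2 ∧ ∃ d ∈ S, Q.1 - P.1 = ((p Q.2 - p P.2 : ℤ) : A) * d) ∧ slope P Q = d) M := by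
    refine (h.shear fun f => (p f : A) * d).congr fun P Q => ?_
    rw [← sub_mul, ← Int.cast_sub]
    exact ⟨fun ⟨hd', hPQ⟩ => ⟨⟨hPQ, d, hd, hd'⟩, (slope_eq hPQ).2 hd'⟩,
      fun ⟨⟨hPQ, _⟩, hd'⟩ => ⟨(slope_eq hPQ).1 hd', hPQ⟩⟩
  refine of_partition_two S slope ?_ (line h₁) (line h₂) hab
  rintro P Q ⟨hPQ, d, hd, hd'⟩
  rwa [(slope_eq hPQ).2 hd']

theorem hwpStarSolution {v m n r s : ℕ} (hm : 0 < m) (hn : 0 < n)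
    (h : Factorable (· ≠ · : Fin v → Fin v → Prop)
      (Multiset.replicate r m + Multiset.replicate s n)) : HWPStarSolution v m n r s := by
  let len : Fin (r + s) → ℕ := Fin.append (fun _ => m) (fun _ => n)
  have hlen : univ.val.map len = Multiset.replicate r m + Multiset.replicate s n := by
    simp [len, List.ofFn_fin_append, ← Multiset.coe_add, ← Multiset.coe_replicate]
  obtain ⟨σ, hσ⟩ := exists_isFactorization (hlen ▸ h)
  have len_left (i : Fin (r + s)) (hi : (i : ℕ) < r) : len i = m :=
    Fin.append_left (fun _ => m) (fun _ => n) ⟨i, hi⟩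
  have len_right (i : Fin (r + s)) (hi : r ≤ (i : ℕ)) : len i = n := by
    obtain ⟨j, rfl⟩ : ∃ j : Fin s, Fin.natAdd r j = i :=
      ⟨⟨i - r, by omega⟩, Fin.ext (Nat.add_sub_of_le hi)⟩
    exact Fin.append_right _ _ j
  have len_pos (i : Fin (r + s)) : 0 < len i := by
    rcases lt_or_ge (i : ℕ) r with hi | hi
    · rwa [len_left i hi]
    · rwa [len_right i hi]
  exact ⟨fun i => Equiv.ofBijective (σ i)
      (bijective_of_minimalPeriod_eq (len_pos i) (hσ.minimalPeriod_eq i)),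
    fun i hi x => len_left i hi ▸ hσ.minimalPeriod_eq i x,
    fun i hi x => len_right i hi ▸ hσ.minimalPeriod_eq i x, hσ.existsUnique⟩

end Factorable

section FifteenPoints

/-- The self-map of `Fin 15` whose values at `0, 1, …, 14` are the two-digit blocks of the decimal
numeral `w`, the leading block being the image of `0`. -/
def decode (w : ℕ) (f : Fin 15) : Fin 15 := Fin.ofNat 15 (w / 100 ^ (14 - f.val) % 100)

/-- The conjugate of a self-map of `Fin 15` by the rotation `f ↦ f + t`. -/
def rotate (t : ℕ) (σ : Fin 15 → Fin 15) (f : Fin 15) : Fin 15 :=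
  σ (f - Fin.ofNat 15 t) + Fin.ofNat 15 t

/-- The divisors of `15` that can be the cycle length of a 2-factor. -/
def cycleLengths : Finset ℕ := {3, 5, 15}

/-- Two base 2-factors with cycles of length `m`, encoded for `decode` (the default case is
`m = 15`), whose rotations by multiples of `3` decompose the tripartite digraph of pairs that are
incongruent modulo `3`. -/
def tripartiteStarter (m : ℕ) : Fin 2 → ℕ :=
  match m with
  | 3 => ![020001080613141210050307110904, 010200101409041103130812070506]
  | 5 => ![081403070901130610051200110204, 050810011203070200041106140913]
  | _ => ![100007041101130309051406020812, 020609071204140501081113100003]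

/-- The 2-factors decomposing the tripartite digraph. -/
def tripartiteFactor (m : ℕ) (i : Fin 2 × Fin 5) : Fin 15 → Fin 15 :=
  rotate (3 * i.2) (decode (tripartiteStarter m i.1))

theorem factorable_tripartite {m : ℕ} (hm : m ∈ cycleLengths) :
    Factorable (fun f g : Fin 15 => f.val % 3 ≠ g.val % 3) (Multiset.replicate 10 m) := by
  have key : ∀ m ∈ cycleLengths,
      0 < m ∧
      (∀ i f, (tripartiteFactor m i)^[m] f = f ∧
        ∀ d ∈ m.properDivisors, (tripartiteFactor m i)^[d] f ≠ f) ∧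
      (∀ i f, f.val % 3 ≠ (tripartiteFactor m i f).val % 3) ∧
      ∀ f g : Fin 15, f.val % 3 ≠ g.val % 3 → #{i | tripartiteFactor m i f = g} = 1 := by
    decide +kernel
  obtain ⟨hpos, hper, hrel, hcard⟩ := key m hm
  exact .of_const (.of_card_eq_one (fun _ => hpos) hper hrel hcard)

/-- Three base 2-factors with cycles of length `m`, encoded for `decode` (the default case is
`m = 15`), whose rotations by multiples of `5` decompose the digraph `Spread`. -/
def spreadStarter (m : ℕ) : Fin 3 → ℕ :=
  match m with
  | 3 => ![031014070106090002050413111208, 081309040712050314110102061000,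
      111205010204140810000709030613]
  | 5 => ![010409070212140805001310030611, 091311010604020007120305081410,
      120301051311041014080602090700]
  | _ => ![111210090513030806000714040201, 060908120114040305070210110013,
      030711021306080401120905001410]

/-- The 2-factors decomposing the digraph `Spread`. -/
def spreadFactor (m : ℕ) (i : Fin 3 × Fin 3) : Fin 15 → Fin 15 :=
  rotate (5 * i.2) (decode (spreadStarter m i.1))

/-- A 9-regular digraph of pairs that are incongruent modulo `5`, defined as the union of its
2-factors with cycles of length `15`; the 2-factors with cycles of length `3` or `5` have the same
union. -/
def Spread (f g : Fin 15) : Prop := ∃ i, spreadFactor 15 i f = g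

instance : DecidableRel Spread := fun _ _ => inferInstanceAs (Decidable (∃ _, _))

theorem factorable_spread {m : ℕ} (hm : m ∈ cycleLengths) :
    Factorable Spread (Multiset.replicate 9 m) := by
  have key : ∀ m ∈ cycleLengths,
      0 < m ∧
      (∀ i f, (spreadFactor m i)^[m] f = f ∧
        ∀ d ∈ m.properDivisors, (spreadFactor m i)^[d] f ≠ f) ∧
      (∀ i f, Spread f (spreadFactor m i f)) ∧
      ∀ f g : Fin 15, Spread f g → #{i | spreadFactor m i f = g} = 1 := by
    decide +kernel
  obtain ⟨hpos, hper, hrel, hcard⟩ := key m hm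
  exact .of_const (.of_card_eq_one (fun _ => hpos) hper hrel hcard)

theorem dvd_of_spread : ∀ f g : Fin 15, Spread f g →
    ((g.val % 5 : ℕ) : ℤ) - ((f.val % 5 : ℕ) : ℤ) ∣ 12 := by
  decide +kernel

/-- The length of the cycle through `0` of the 2-factor encoded by `w`, provided that it is `3`,
`5` or `15`; all cycles have this length if the 2-factor is uniform. -/
def orbitLength (w : ℕ) : ℕ :=
  if (decode w)^[3] 0 = 0 then 3 else if (decode w)^[5] 0 = 0 then 5 else 15

/-- The words in `t` encode a decomposition of `K₁₅*` into `a` directed 2-factors with cycles of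
length `m` and `14 - a` with cycles of length `n`, in a form that can be decided. -/
def IsTable (t : List ℕ) (m n a : ℕ) : Prop :=
  (t.map orbitLength : Multiset ℕ) = Multiset.replicate a m + Multiset.replicate (14 - a) n ∧
  (∀ w ∈ t, ∀ f, decode w f ≠ f ∧ (decode w)^[orbitLength w] f = f ∧
    ∀ d ∈ (orbitLength w).properDivisors, (decode w)^[d] f ≠ f) ∧
  ∀ f g, f ≠ g → #{i : Fin t.length | decode t[i] f = g} = 1

instance (t : List ℕ) (m n a : ℕ) : Decidable (IsTable t m n a) :=
  inferInstanceAs (Decidable (_ ∧ _))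

theorem IsTable.factorable {t : List ℕ} {m n a : ℕ} (h : IsTable t m n a) :
    Factorable (· ≠ · : Fin 15 → Fin 15 → Prop)
      (Multiset.replicate a m + Multiset.replicate (14 - a) n) := by
  obtain ⟨hlen, hper, hcard⟩ := h
  have hfac : IsFactorization (· ≠ ·) (fun i : Fin t.length => orbitLength t[i])
      fun i => decode t[i] :=
    .of_card_eq_one (fun i => by unfold orbitLength; split_ifs <;> omega)
      (fun i f => (hper _ (t.getElem_mem i.2) f).2)
      (fun i f => (hper _ (t.getElem_mem i.2) f).1.symm) hcard
  convert hfac.factorable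
  rw [← hlen, Fin.univ_val_map]
  congr 1
  exact (List.ofFn_getElem_eq_map t orbitLength).symm

/-- The `a`-th entry encodes a solution to HWP*(15; 3^a, 5^(14 - a)), found by computer search. -/
def tables35 : List (List ℕ) :=
  [[010300110704140810060502091213, 140204011208051309110006031007, 061403050213091107101201000408,
    100014040603070512081113020109, 081101140500040206130912070310, 050912021406010403000710130811,
    020610130314000905040108110712, 041309120811021001070603140005, 030507101309120111020800041406,
    130406081107101402120309010500, 110705000912080614031304100201, 091208060110130300140407051102,
    071013090002111204011405080603, 120811071001030013050214060904],
   [131410111204000102030809050607, 050711041403081013011206090200, 100608120002040911140113070503,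
    011107091310030005120402140806, 140212080513110401060700031009, 061003130907141200020508010411,
    090805141100130312100207060104, 120509061011011404130003080702, 111306050714120210000301040908,
    081214070601101303110904020005, 070913100812021114040605000301, 020304000109050607081112131410,
    040001020308090506071410111213, 030400010206070809051314101112],
   [090506070814101112130203040001, 131410111202030400010506070809, 110801120704130009140605100302,
    081209021310001401050307061104, 140913050306110110020004080712, 041005140603071202111301000908,
    070011061012040813030914020105, 100414080500120311070109130206, 061100100908011304120702051403,
    050712011113090214000408030610, 120608130201140503101100090407, 031307091411021006040812010500,
    020304000109050607081410111213, 010203040007080905061213141011],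
   [080905060714101112130304000102, 060708090513141011120102030400, 050607080911121314100400010203,
    040212011309030005140807061110, 140003130210050401061109080712, 031001041407110600021312050908,
    100411020003081207010914130605, 011100120302040913080605101407, 090810141112010504030706020013,
    120509111004130206001408070301, 111306051201001403070210090804, 131214070608020110040003110509,
    071413100800090302110501041206, 020304000106070809051213141011],
   [131410111200010203040708090506, 141011121301020304000506070809, 121314101104000102030905060708,
    060708090514101112130001020304, 010300050702040810120609141113, 080204010613030009111407051012,
    070903000212140401051310080611, 030805040106131000021214110907, 020409060003071411010813101205,
    040512140908111307060200030110, 050006131007091214081103010402, 110601071409080513100312040200,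
    101207020811050906140104130003, 091113080310120605070402001401],
   [090506070812131410110400010203, 050607080914101112130102030400, 101112131400010203040506070809,
    070809050613141011120001020304, 121314101102030400010607080905, 061005141211040113000803090702,
    130711061001120002140309040508, 111408120710021301030904050006, 081210091304110314020705000601,
    140913110503001204100208060107, 030400010209050607081112131410, 020304000108090506071410111213,
    010203040006070809051213141011, 040001020307080905061314101112],
   [120913110600140302100107050804, 071305141211011004030002080609, 130814061004120211000501030907,
    111409100701001303120806020405, 081210051113020114040609070300, 090506070814101112130203040001,
    041107120502130006140908100103, 060012081310031401070405091102, 140701130908110410020300060512,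
    051008021403091200111304010706, 100611090312040513010714000208, 010203040009050607081213141011,
    030400010207080905061410111213, 020304000106070809051112131410],
   [130901050007100311021214060408, 110710020601080504120313140009, 091208110300020106051304071410,
    031013091204011402000607050811, 020411071013050914030100080612, 060305120811070010140402010913,
    080004061309121001111405030207, 051409080702001312061103100104, 010614100908030207130012041105,
    040200141110091203080701130506, 100503011412110613040908020700, 121106040214130800070510090301,
    071312000503140409010806111002, 140807130106041105100209001203],
   [071300110801140212060310040509, 090814011207021003130504110006, 130509100214080311040706001201,
    031406051100100904120208070113, 120410070613011105001403090802, 050607080911121314100400010203,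
    101112131404000102030607080905, 141011121303040001020809050607, 010904140510130800071102060312,
    060205001008111409011312030704, 110703060102091210050014130408, 021208040706030513110901101400,
    080313090012070406140105021110, 040001020309050607081213141011],
   [010507140200080410130603091211, 030206081014010900111207040513, 110403070912100205011413080006,
    051200040802131103060710140901, 090613010007031412040208111005, 080905060713141011120400010203,
    121314101103040001020506070809, 070809050610111213140304000102, 101112131401020304000905060708,
    020010091304070514081101030612, 140301110509000806101312020407, 061004021211050109070814130300,
    130711000308120602050109101404, 041408120106091307030002051110],
   [051009060812110114130703000204, 090611050714131202100008040103, 080507120611101413030401090002,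
    070906081304121110140300020501, 140805070910001312110204010306, 111310091402010004120507030608,
    101214110513030201000906080407, 061113101201140403020805070900, 130712141103021000040109060805,
    121408131000040311010602050709, 030400010207080905061112131410, 040001020306070809051410111213,
    010203040009050607081213141011, 020304000108090506071314101112],
   [021408100713011100051204030906, 080310091106140212010713000405, 120904110502071003130608140100,
    061305001214030811040107091002, 130714060100100409120302080511, 050607080910111213140001020304,
    101112131401020304000905060708, 090506070812131410110400010203, 111213141004000102030506070809,
    141011121303040001020809050607, 070809050611121314100203040001, 010203040008090506071112131410,
    040001020307080905061314101112, 030400010209050607081410111213],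
   [011207050811140913020603000410, 090213080603121005141107040100, 070503140910041311060112080002,
    050806041007110014120302130901, 110609070013081201100204031405, 130712100114020403050800061109,
    021408131106100300040509010712, 120310091400071104011306050208, 101304110502010812000914070603,
    061114001201030209130405100807, 141011121304000102030708090506, 080905060712131410110001020304,
    040001020308090506071213141011, 030400010209050607081410111213],
   [010507140200080410130603091211, 030206081014010900111207040513, 110403070912100205011413080006,
    051200040802131103060710140901, 090613010007031412040208111005, 020714120609110801100504130300,
    070308101311051209020106001404, 140804091103120613050002070110, 121009000506041307141101030802,
    061311050110070014080312020409, 080905060713141011120400010203, 131410111204000102030809050607,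
    101112131401020304000905060708, 040001020308090506071314101112],
   [141208000510020906130401110703, 031413090106110810000705021204, 120414071002001309110108060305,
    011305140811030407101202090006, 040207061409120105081113031000, 130503080014101102060912070401,
    110706040901140512030010130802, 080012051107040301140206100913, 050901130612081004021403001107,
    090610020700131211050314040108, 071000110308010213120604140509, 020811011204090603071300051410,
    100309120213051400040807010611, 061104101303070014010509080212]]

/-- The `a`-th entry encodes a solution to HWP*(15; 3^a, 15^(14 - a)), found by computer search.
`threes` and `fifteens` decompose the same digraph, and the `i`-th entry of `mixed` decomposes its
complement with `i` factors of length `3`. -/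
def tables315 : List (List ℕ) :=
  let threes :=
    [061113140900050402070312010810, 030405121314080607110910000102, 020310040106070509120013081411,
     081012021407011311040600030509, 120500100308111401060409020713, 011303061104020912100705140008,
     140709011210000305130804110206]
  let fifteens :=
    [011003041407051311120609000208, 020705060904011412100813030011, 031310021200110601070405081409,
     060312100114080407130900110502, 080409141110000305060712020113, 120500011306070902110304140810,
     141113120308020509040010010706]
  let mixed := [
    [041406110812130203000107091005, 050907130602101200031408041101, 070801090013041014021103050612,
     090204050701121106081314100300, 100014080211030104051206130907, 111208071009140013010502060403,
     130611000503090810140201071204],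
    [090604000502141013031208071101, 100211050709120800011406130403, 070814131012041103020501090600,
     111407090201100006081303051204, 040006070803130114051102100912, 130901080011031204140207061005,
     051208110613090210000114040307],
    [091404111013030100080206051207, 100908070201121104051403130600, 070006130512140803021101100904,
     130801000711090210030514060412, 050611080002041213140107091003, 041214090803100006011302071105,
     110207050609131014001208040301],
    [110214090803040006051207131001, 090004110502131003011408061207, 051208130609140110000203071104,
     071411001001030813020506090412, 040607080213091200141101100305, 100901070011120204081314050603,
     130806050712101114030102040900],
    [100207110512030113081406040900, 050011090801040206141307101203, 110901050613141000021208070304,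
     131206070011100803010214090405, 040608000209121114030501131007, 091404080703130010050102061112,
     070814131002091204001103050601],
    [111404000502090106081303101207, 040607050809141100031202131001, 131206080201041014001107050903,
     100211070612130803051401090400, 090008130711031210010214040605, 070901110013100204140508060312,
     050814091003120013020106071104],
    [101208110213030104051406070900, 091407130601121000080203041105, 040214050709130010031108061201,
     110004070502100803141301090612, 130611080012090214010507100403, 050901000803041106021214131007,
     070806091011141213000102050304]]
  mixed.map (fifteens ++ ·) ++ mixed.map (threes ++ ·) ++ tables35.drop 14

/-- The `a`-th entry encodes a solution to HWP*(15; 5^a, 15^(14 - a)), found by computer search.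
`fives₇` and `fifteens₇` decompose the same digraph, as do `fives₄` and `fifteens₄`, and the `i`-th
entry of `mixed` decomposes what is left with `i` factors of length `5`. -/
def tables515 : List (List ℕ) :=
  let fives₄ :=
    [040509131108100312070006140201, 051206081011070413000214030109, 011114100212040600030513090807,
     100807021203001404061301110905]
  let fifteens₄ :=
    [051214081103100604070013090201, 101109130208040312000506140107, 040807101211001413060201030905,
     010506021012070400031314110809]
  let fives₇ :=
    [131412050709020010080304011106, 060208140510131211010709040300, 120310071306090214040100080511,
     030401061400081305110907021012, 071013010604110903021412050008, 140904000313011106100805071202,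
     080600090102140507121103100413]
  let fifteens₇ :=
    [141013090704081205021103010006, 031412061309110207080104100500, 130910071406010503110800041202,
     120608050310130014010709020411, 080401000602091311101405070312, 070300140113021106040912051008,
     060204010500140910120307081113]
  let mixed := [
    [090003110814120102050610130704, 020711120001051009130408061403,
     111305040907030801141202000610],
    [020011120914051001130408060703, 090703110001120802050610131404,
     111305040807030109141202000610],
    [090005110814030102131210060704, 110703040001120809050602131410,
     021311120907051001140408000603],
    [020011040914121001050608130703, 111303120807050109140402000610,
     090705110001030802131210061404]]
  let mixed₇ := mixed.map (fifteens₄ ++ ·) ++ mixed.map (fives₄ ++ ·)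
  (mixed₇.take 7).map (fifteens₇ ++ ·) ++ mixed₇.map (fives₇ ++ ·)

theorem isTable_tables35 : ∀ a : Fin 15, IsTable (tables35.getD a []) 3 5 a := by
  decide +kernel

theorem isTable_tables315 : ∀ a : Fin 15, IsTable (tables315.getD a []) 3 15 a := by
  decide +kernel

theorem isTable_tables515 : ∀ a : Fin 15, IsTable (tables515.getD a []) 5 15 a := by
  decide +kernel

theorem factorable_ne_fin_fifteen_of_lt {m n a b : ℕ} (hm : m ∈ cycleLengths)
    (hn : n ∈ cycleLengths) (hmn : m < n) (hab : a + b = 14) :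
    Factorable (· ≠ · : Fin 15 → Fin 15 → Prop)
      (Multiset.replicate a m + Multiset.replicate b n) := by
  obtain rfl : b = 14 - a := by omega
  have ha : a < 15 := by omega
  obtain ⟨rfl, rfl⟩ | ⟨rfl, rfl⟩ | ⟨rfl, rfl⟩ :
      (m = 3 ∧ n = 5) ∨ (m = 3 ∧ n = 15) ∨ (m = 5 ∧ n = 15) := by
    simp only [cycleLengths, mem_insert, mem_singleton] at hm hn
    omega
  exacts [(isTable_tables35 ⟨a, ha⟩).factorable, (isTable_tables315 ⟨a, ha⟩).factorable,
    (isTable_tables515 ⟨a, ha⟩).factorable]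

theorem factorable_ne_fin_fifteen {m n a b : ℕ} (hm : m ∈ cycleLengths) (hn : n ∈ cycleLengths)
    (hab : a + b = 14) :
    Factorable (· ≠ · : Fin 15 → Fin 15 → Prop)
      (Multiset.replicate a m + Multiset.replicate b n) := by
  rcases lt_trichotomy m n with h | rfl | h
  · exact factorable_ne_fin_fifteen_of_lt hm hn h hab
  · obtain ⟨l, hl, h | h⟩ : ∃ l ∈ cycleLengths, m < l ∨ l < m := by
      revert m; decide
    · simpa [← Multiset.replicate_add, hab] using
        factorable_ne_fin_fifteen_of_lt hm hl h (Nat.add_zero 14)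
    · simpa [← Multiset.replicate_add, hab] using
        factorable_ne_fin_fifteen_of_lt hl hm h (Nat.zero_add 14)
  · rw [add_comm]
    exact factorable_ne_fin_fifteen_of_lt hn hm h (by omega)

end FifteenPoints

section Inflation

/-- Two half points `q` and `q + 15` represent each element of `Fin 15`; `j` selects one of three
rotations by multiples of `10`. -/
def halfPoint (j : Fin 3) (q : Fin 30) : Fin 15 := Fin.ofNat 15 (q + 10 * j)

/-- The displacement of a half point, as a multiple of a scale, from a chosen central fibre. -/
def weight (q : Fin 30) : ℤ := (![2, -1, 1, -2, 1, -1] : Fin 6 → ℤ) (Fin.ofNat 6 q)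

/-- A permutation of the half points with all cycles of length `m`, found by computer search. Its
arcs under the three representations `halfPoint j` are exactly the pairs outside `Spread`, loops
included. -/
def halfPerm (m : ℕ) : Fin 30 → Fin 30 :=
  match m with
  | 3 => ![20, 21, 17, 8, 19, 0, 25, 26, 11, 28, 23, 3, 7, 9, 6, 2, 1, 15, 10, 24, 5, 16, 27, 18,
         4, 14, 12, 29, 13, 22]
  | 5 => ![13, 6, 19, 18, 12, 22, 16, 20, 11, 28, 25, 26, 2, 9, 29, 5, 17, 27, 8, 24, 15, 10, 7,
         0, 4, 14, 3, 1, 23, 21]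
  | _ => ![15, 21, 27, 10, 29, 24, 7, 9, 13, 2, 0, 26, 1, 16, 19, 17, 11, 22, 14, 4, 18, 25, 5, 8,
         28, 20, 3, 12, 23, 6]

theorem minimalPeriod_halfPerm {m : ℕ} (hm : m ∈ cycleLengths) (q : Fin 30) :
    minimalPeriod (halfPerm m) q = m := by
  have key : ∀ m ∈ cycleLengths, 0 < m ∧ ∀ q, (halfPerm m)^[m] q = q ∧
      ∀ d ∈ m.properDivisors, (halfPerm m)^[d] q ≠ q := by
    decide +kernel
  obtain ⟨hpos, hper⟩ := key m hm
  exact minimalPeriod_eq_of_properDivisors hpos (hper q).1 (hper q).2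

theorem weight_halfPerm_sub_dvd {m : ℕ} (hm : m ∈ cycleLengths) :
    ∀ q, weight (halfPerm m q) - weight q ∣ 12 := by
  revert m; decide +kernel

theorem not_spread_halfPoint {m : ℕ} (hm : m ∈ cycleLengths) :
    ∀ j q, ¬Spread (halfPoint j q) (halfPoint j (halfPerm m q)) := by
  revert m; decide +kernel

theorem existsUnique_halfPoint {m : ℕ} (hm : m ∈ cycleLengths) {f g : Fin 15}
    (hfg : ¬Spread f g) :
    ∃! p : Fin 3 × Fin 30, halfPoint p.1 p.2 = f ∧ halfPoint p.1 (halfPerm m p.2) = g := by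
  have key : ∀ m ∈ cycleLengths, ∀ f g, ¬Spread f g →
      #{p : Fin 3 × Fin 30 | halfPoint p.1 p.2 = f ∧ halfPoint p.1 (halfPerm m p.2) = g} = 1 := by
    decide +kernel
  exact (Fintype.existsUnique_iff_card_one _).2 (key m hm f g hfg)

theorem weight_dvd : ∀ q, weight q ∣ 12 := by
  decide

theorem weight_add_fifteen : ∀ q, weight (q + 15) = -weight q := by
  decide

theorem halfPoint_eq_iff : ∀ j q q', halfPoint j q = halfPoint j q' ↔ q = q' ∨ q = q' + 15 := by
  decide +kernel

theorem halfPoint_surjective : ∀ j, Surjective (halfPoint j) := by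
  decide +kernel

theorem exists_sign {A : Type*} [AddGroup A] (hA : ∀ h : A, h ≠ 0 → -h ≠ h) :
    ∃ pos : A → Bool, ∀ h ≠ 0, pos (-h) = !pos h := by
  classical
  refine ⟨fun h => decide (WellOrderingRel (-h) h), fun h h0 => ?_⟩
  change decide (WellOrderingRel (- -h) (-h)) = !decide (WellOrderingRel (-h) h)
  rw [neg_neg, ← decide_not, decide_eq_decide]
  rcases trichotomous_of WellOrderingRel (-h) h with hlt | heq | hgt
  · exact iff_of_false (asymm hlt) (not_not_intro hlt)
  · exact absurd heq (hA h h0)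
  · exact iff_of_true hgt (asymm hgt)

variable {A : Type} [CommRing A] {pos : A → Bool}

/-- Coordinates of `A × Fin 15` centred at the fibre over `e`: the summand `Fin 15` is that fibre,
and the half points `q` with scale `h` sit at displacement `weight q * h` from it. As `q` and
`q + 15` have opposite weights, it suffices to let `h` run over the scales of sign `ε`. -/
def halfPointMap (pos : A → Bool) (j : Fin 3) (ε : Bool) (e : A) :
    Fin 15 ⊕ ({h : A // h ≠ 0 ∧ pos h = ε} × Fin 30) → A × Fin 15
  | .inl f => (e, f)
  | .inr (h, q) => (e + weight q * h, halfPoint j q)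

theorem bijective_halfPointMap (hA : IsUnit ((12 : ℤ) : A)) (hpos : ∀ h ≠ 0, pos (-h) = !pos h)
    (j : Fin 3) (ε : Bool) (e : A) : Bijective (halfPointMap pos j ε e) := by
  have hw (q : Fin 30) : IsUnit (weight q : A) := isUnit_intCast_of_dvd hA (weight_dvd q)
  refine ⟨?_, fun ⟨x, f⟩ => ?_⟩
  · rintro (f | ⟨⟨h, h0, rfl⟩, q⟩) (f' | ⟨⟨h', h0', hpos'⟩, q'⟩) heq <;>
      simp only [halfPointMap, Prod.mk.injEq] at heq
    · rw [heq.2]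
    · simp [(hw q').mul_right_eq_zero, h0'] at heq
    · simp [(hw q).mul_right_eq_zero, h0] at heq
    · obtain ⟨hx, hf⟩ := heq
      rw [add_right_inj] at hx
      rcases (halfPoint_eq_iff j q q').1 hf with rfl | rfl
      · obtain rfl := (hw q).mul_left_cancel hx
        rfl
      · rw [weight_add_fifteen, Int.cast_neg, neg_mul_comm] at hx
        rw [← (hw q').mul_left_cancel hx, hpos h h0] at hpos'
        exact absurd hpos' (Bool.not_ne_self _)
  · by_cases hx : x = e
    · exact ⟨.inl f, by rw [hx]; rfl⟩
    obtain ⟨q, rfl⟩ := halfPoint_surjective j f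
    obtain ⟨h, hh⟩ : (weight q : A) ∣ x - e := (hw q).dvd
    have h0 : h ≠ 0 := by
      rintro rfl
      exact hx (sub_eq_zero.1 (by rw [hh, mul_zero]))
    by_cases hε : pos h = ε
    · exact ⟨.inr (⟨h, h0, hε⟩, q), by simp [halfPointMap, ← hh]⟩
    · refine ⟨.inr (⟨-h, neg_ne_zero.2 h0, ?_⟩, q + 15), ?_⟩
      · rw [hpos h h0]
        exact Bool.not_eq_eq_eq_not.2 (Bool.eq_not.2 hε)
      · simp [halfPointMap, weight_add_fifteen, ← hh, (halfPoint_eq_iff j (q + 15) q).2 (.inr rfl)]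

/-- A 2-factor in the coordinates `halfPointMap`: `τ` on the central fibre and `halfPerm m` on the
half points of each scale. -/
def chartFactor (pos : A → Bool) (m : ℕ) (ε : Bool) (τ : Fin 15 → Fin 15) :
    Fin 15 ⊕ ({h : A // h ≠ 0 ∧ pos h = ε} × Fin 30) →
      Fin 15 ⊕ ({h : A // h ≠ 0 ∧ pos h = ε} × Fin 30) :=
  Sum.map τ (Prod.map id (halfPerm m))

theorem minimalPeriod_chartFactor {m : ℕ} (hm : m ∈ cycleLengths) {ε : Bool} {τ : Fin 15 → Fin 15}
    (hτ : ∀ f, minimalPeriod τ f = m) (w : Fin 15 ⊕ ({h : A // h ≠ 0 ∧ pos h = ε} × Fin 30)) :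
    minimalPeriod (chartFactor pos m ε τ) w = m := by
  rcases w with f | ⟨h, q⟩
  · exact (minimalPeriod_apply_of_semiconj Sum.inl_injective (fun _ => rfl) f).trans (hτ f)
  · exact (minimalPeriod_apply_of_semiconj (Sum.inr_injective.comp (Prod.mk_right_injective h))
      (fun _ => rfl) q).trans (minimalPeriod_halfPerm hm q)

theorem existsUnique_arc_of_eq (hA : IsUnit ((12 : ℤ) : A)) {m : ℕ} (hm : m ∈ cycleLengths)
    {τ : Fin 3 × Bool → Fin 15 → Fin 15} (a : A) {f g : Fin 15} (hfg : ∃! i, τ i f = g) :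
    ∃! p : Σ i : (Fin 3 × Bool) × A, Fin 15 ⊕ ({h : A // h ≠ 0 ∧ pos h = i.1.2} × Fin 30),
      halfPointMap pos p.1.1.1 p.1.1.2 p.1.2 p.2 = (a, f) ∧
      halfPointMap pos p.1.1.1 p.1.1.2 p.1.2 (chartFactor pos m p.1.1.2 (τ p.1.1) p.2) =
        (a, g) := by
  obtain ⟨i, hi, huniq⟩ := hfg
  refine ⟨⟨(i, a), .inl f⟩, ⟨rfl, Prod.ext rfl hi⟩, ?_⟩
  rintro ⟨⟨i', e⟩, f' | ⟨⟨h, h0, hε⟩, q⟩⟩ ⟨hx, hy⟩ <;>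
    simp only [halfPointMap, chartFactor, Sum.map_inl, Sum.map_inr, Prod.map_apply, id,
      Prod.mk.injEq] at hx hy
  · obtain ⟨rfl, rfl⟩ := hx
    rw [huniq i' hy.2]
  · have hz := isUnit_intCast_of_dvd hA (weight_halfPerm_sub_dvd hm q)
    refine absurd (hz.mul_right_eq_zero.1 ?_) h0
    rw [Int.cast_sub, sub_mul, sub_eq_zero]
    exact add_left_cancel (hy.1.trans hx.1.symm)

theorem existsUnique_arc_of_ne (hA : IsUnit ((12 : ℤ) : A)) {m : ℕ} (hm : m ∈ cycleLengths)
    (τ : Fin 3 × Bool → Fin 15 → Fin 15) {a b : A} (hab : a ≠ b) {f g : Fin 15}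
    (hfg : ¬Spread f g) :
    ∃! p : Σ i : (Fin 3 × Bool) × A, Fin 15 ⊕ ({h : A // h ≠ 0 ∧ pos h = i.1.2} × Fin 30),
      halfPointMap pos p.1.1.1 p.1.1.2 p.1.2 p.2 = (a, f) ∧
      halfPointMap pos p.1.1.1 p.1.1.2 p.1.2 (chartFactor pos m p.1.1.2 (τ p.1.1) p.2) =
        (b, g) := by
  obtain ⟨⟨j, q⟩, ⟨rfl, rfl⟩, huniq⟩ := existsUnique_halfPoint hm hfg
  have hz := isUnit_intCast_of_dvd hA (weight_halfPerm_sub_dvd hm q)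
  obtain ⟨h, hh⟩ : ∃ h : A, b - a = (weight (halfPerm m q) - weight q : ℤ) * h := hz.dvd
  have h0 : h ≠ 0 := by
    rintro rfl
    exact hab (sub_eq_zero.1 (by rw [hh, mul_zero])).symm
  refine ⟨⟨((j, pos h), a - weight q * h), .inr (⟨h, h0, rfl⟩, q)⟩, ⟨?_, ?_⟩, ?_⟩
  · simp [halfPointMap]
  · simp only [halfPointMap, chartFactor, Sum.map_inr, Prod.map_apply, id, Prod.mk.injEq, and_true]
    rw [Int.cast_sub] at hh
    linear_combination -hh
  rintro ⟨⟨⟨j', ε⟩, e⟩, f' | ⟨⟨h', h0', hε⟩, q'⟩⟩ ⟨hx, hy⟩ <;>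
    simp only [halfPointMap, chartFactor, Sum.map_inl, Sum.map_inr, Prod.map_apply, id,
      Prod.mk.injEq] at hx hy
  · exact absurd (hx.1.symm.trans hy.1) hab
  · obtain ⟨rfl, rfl⟩ := Prod.mk.inj (huniq (j', q') ⟨hx.2, hy.2⟩)
    obtain rfl : h' = h := by
      refine hz.mul_left_cancel (hh ▸ ?_)
      rw [← hx.1, ← hy.1, Int.cast_sub]
      ring
    obtain rfl := eq_sub_of_add_eq hx.1
    obtain rfl : pos h' = ε := hε
    rfl

theorem Factorable.inflate [Fintype A] (hA : IsUnit ((12 : ℤ) : A)) {m : ℕ} (hm : m ∈ cycleLengths)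
    {E : Fin 15 → Fin 15 → Prop} (hE : Factorable E (Multiset.replicate 6 m)) :
    Factorable (fun P Q : A × Fin 15 =>
      (P.1 = Q.1 ∧ E P.2 Q.2) ∨ (P.1 ≠ Q.1 ∧ ¬Spread P.2 Q.2))
      (Multiset.replicate (6 * Fintype.card A) m) := by
  obtain ⟨pos, hpos⟩ := exists_sign fun (h : A) h0 heq => h0 <| hA.mul_right_eq_zero.1 <| by
    push_cast
    linear_combination -6 * heq
  obtain ⟨τ, hτ⟩ := Factorable.exists_isFactorization (I := Fin 3 × Bool) (len := fun _ => m)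
    (by simpa using hE)
  have := Factorable.of_const (m := m) <| IsFactorization.of_charts
    (D := fun P Q : A × Fin 15 => (P.1 = Q.1 ∧ E P.2 Q.2) ∨ (P.1 ≠ Q.1 ∧ ¬Spread P.2 Q.2))
    (fun i : (Fin 3 × Bool) × A =>
      Equiv.ofBijective _ (bijective_halfPointMap hA hpos i.1.1 i.1.2 i.2))
    (fun i => chartFactor pos m i.1.2 (τ i.1))
    (fun i => minimalPeriod_chartFactor hm (hτ.minimalPeriod_eq i.1)) ?_ ?_
  · simpa using this
  · rintro ⟨⟨j, ε⟩, e⟩ (f | ⟨⟨h, h0, hε⟩, q⟩)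
    · exact .inl ⟨rfl, hτ.rel _ f⟩
    · refine .inr ⟨fun heq => h0 ?_, not_spread_halfPoint hm j q⟩
      have hz := isUnit_intCast_of_dvd hA (weight_halfPerm_sub_dvd hm q)
      rw [← hz.mul_right_eq_zero, Int.cast_sub, sub_mul, sub_eq_zero]
      exact (add_left_cancel heq).symm
  · rintro ⟨a, f⟩ ⟨b, g⟩ (⟨rfl, hfg⟩ | ⟨hab, hfg⟩)
    · exact existsUnique_arc_of_eq hA hm a (hτ.existsUnique f g hfg)
    · exact existsUnique_arc_of_ne hA hm τ hab hfg

end Inflation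

section Recursion

variable {A : Type} [CommRing A] [Fintype A] {m n : ℕ} {a b : ℕ}

theorem factorable_lines_spread (hA : IsUnit ((12 : ℤ) : A)) (hm : m ∈ cycleLengths)
    (hn : n ∈ cycleLengths) (hab : a + b + 1 = Fintype.card A) :
    Factorable (fun P Q : A × Fin 15 => P.1 ≠ Q.1 ∧ Spread P.2 Q.2)
      (Multiset.replicate (a * 9) m + Multiset.replicate (b * 9) n) := by
  classical
  have hcard : a + b = #(univ.erase (0 : A)) := by
    rw [card_erase_of_mem (mem_univ 0), card_univ]
    omega
  simp only [← Multiset.nsmul_replicate]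
  refine (Factorable.lines hA dvd_of_spread _ (factorable_spread hm) (factorable_spread hn)
    hcard).congr fun P Q => ?_
  rw [and_comm, and_congr_left_iff]
  intro hPQ
  have hunit := isUnit_intCast_of_dvd hA (dvd_of_spread _ _ hPQ)
  constructor
  · rintro ⟨d, hd, hPQ⟩ heq
    rw [heq, sub_self, eq_comm, hunit.mul_right_eq_zero] at hPQ
    exact ne_of_mem_erase hd hPQ
  · intro hne
    obtain ⟨d, hd⟩ := hunit.dvd (a := Q.1 - P.1)
    refine ⟨d, mem_erase.2 ⟨?_, mem_univ d⟩, hd⟩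
    rintro rfl
    exact hne (sub_eq_zero.1 (hd.trans (mul_zero _))).symm

theorem factorable_lines_tripartite (hA : IsUnit ((2 : ℤ) : A)) (hm : m ∈ cycleLengths)
    (hn : n ∈ cycleLengths) (hab : a + b = Fintype.card A) :
    Factorable (fun P Q : A × Fin 15 => P.2.val % 3 ≠ Q.2.val % 3)
      (Multiset.replicate (a * 10) m + Multiset.replicate (b * 10) n) := by
  have hdvd : ∀ f g : Fin 15, f.val % 3 ≠ g.val % 3 →
      ((g.val % 3 : ℕ) : ℤ) - ((f.val % 3 : ℕ) : ℤ) ∣ 2 := by decide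
  simp only [← Multiset.nsmul_replicate]
  refine (Factorable.lines hA hdvd univ (factorable_tripartite hm) (factorable_tripartite hn)
    hab).congr fun P Q => and_iff_left_of_imp fun hPQ => ?_
  obtain ⟨d, hd⟩ := (isUnit_intCast_of_dvd hA (hdvd _ _ hPQ)).dvd (a := Q.1 - P.1)
  exact ⟨d, mem_univ d, hd⟩

theorem factorable_fibres_tripartite {B : Type} {M : Multiset ℕ}
    (h : Factorable (· ≠ · : B × Fin 5 → B × Fin 5 → Prop) M) :
    Factorable (fun P Q : B × Fin 15 => P ≠ Q ∧ P.2.val % 3 = Q.2.val % 3) M := by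
  let e : B × Fin 15 ≃ Fin 3 × (B × Fin 5) :=
    ((Equiv.refl B).prodCongr (finProdFinEquiv (m := 5) (n := 3)).symm).trans
      ((Equiv.prodAssoc _ _ _).symm.trans (Equiv.prodComm _ _))
  refine ((h.fibres (Fin 3)).comap_equiv e).congr fun P Q => ?_
  have hfst : (e P).1 = (e Q).1 ↔ P.2.val % 3 = Q.2.val % 3 := Fin.ext_iff
  have hext : e P = e Q ↔ (e P).1 = (e Q).1 ∧ (e P).2 = (e Q).2 := Prod.ext_iff
  rw [← hfst, ← e.injective.ne_iff, Ne, Ne, hext]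
  tauto

theorem factorable_ne_prod_of_isUnit_twelve (hA : IsUnit ((12 : ℤ) : A)) (hm : m ∈ cycleLengths)
    (hn : n ∈ cycleLengths) {r s : ℕ} (hrs : r + s + 1 = 15 * Fintype.card A) :
    Factorable (· ≠ · : A × Fin 15 → A × Fin 15 → Prop)
      (Multiset.replicate r m + Multiset.replicate s n) := by
  set k := Fintype.card A with hk
  wlog hr : 6 * k ≤ r generalizing m n r s
  · rw [add_comm]
    exact this hn hm (by omega) (by omega)
  obtain ⟨a, b, i, j, hab, hij, rfl, rfl⟩ : ∃ a b i j : ℕ, a + b = 8 ∧ i + j + 1 = k ∧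
      r = 6 * k + a + i * 9 ∧ s = b + j * 9 :=
    ⟨(r - 6 * k) % 9, 8 - (r - 6 * k) % 9, (r - 6 * k) / 9, k - 1 - (r - 6 * k) / 9,
      by omega, by omega, by omega, by omega⟩
  have h15 : Factorable (· ≠ · : Fin 15 → Fin 15 → Prop)
      (Multiset.replicate 6 m + (Multiset.replicate a m + Multiset.replicate b n)) := by
    rw [← add_assoc, ← Multiset.replicate_add]
    exact factorable_ne_fin_fifteen hm hn (by omega)
  obtain ⟨C, hC, hC'⟩ := h15.exists_of_add
  have key := Factorable.of_split (D := (· ≠ · : A × Fin 15 → A × Fin 15 → Prop))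
    (fun P Q => P.1 ≠ Q.1 ∧ Spread P.2 Q.2)
    ((factorable_lines_spread hA hm hn hij).congr fun P Q => ?_)
    (.of_split (fun P Q => P.1 = Q.1 → C P.2 Q.2) ((hC.inflate hA hm).congr fun P Q => ?_)
      ((hC'.fibres A).congr fun P Q => ?_))
  · convert key using 1
    simp only [Multiset.replicate_add, hk]
    abel
  · exact (and_iff_right_of_imp fun h heq => h.1 (congrArg Prod.fst heq)).symm
  all_goals by_cases hPQ : P.1 = Q.1 <;> simp [hPQ, Prod.ext_iff]

theorem factorable_ne_prod_of_isUnit_two [Nontrivial A] (hA : IsUnit ((2 : ℤ) : A))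
    (hm : m ∈ cycleLengths) (hn : n ∈ cycleLengths)
    (h : ∀ r s : ℕ, r + s + 1 = 5 * Fintype.card A →
      Factorable (· ≠ · : A × Fin 5 → A × Fin 5 → Prop)
        (Multiset.replicate r m + Multiset.replicate s n))
    {r s : ℕ} (hrs : r + s + 1 = 15 * Fintype.card A) :
    Factorable (· ≠ · : A × Fin 15 → A × Fin 15 → Prop)
      (Multiset.replicate r m + Multiset.replicate s n) := by
  have hcard : 1 < Fintype.card A := Fintype.one_lt_card
  set k := Fintype.card A
  obtain ⟨a, b, i, j, hab, hij, rfl, rfl⟩ : ∃ a b i j : ℕ, a + b + 1 = 5 * k ∧ i + j = k ∧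
      r = i * 10 + a ∧ s = j * 10 + b :=
    ⟨r - min (r / 10) k * 10, s - (k - min (r / 10) k) * 10, min (r / 10) k, k - min (r / 10) k,
      by omega, by omega, by omega, by omega⟩
  have key := Factorable.of_split (D := (· ≠ · : A × Fin 15 → A × Fin 15 → Prop))
    (fun P Q => P.2.val % 3 ≠ Q.2.val % 3)
    ((factorable_lines_tripartite hA hm hn hij).congr fun P Q => ?_)
    ((factorable_fibres_tripartite (h a b hab)).congr fun P Q => ?_)
  · convert key using 1
    simp only [Multiset.replicate_add]
    abel
  · exact (and_iff_right_of_imp fun hPQ heq => hPQ (by rw [heq])).symm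
  · rw [not_ne_iff]

theorem factorable_ne (hm : m ∈ cycleLengths) (hn : n ∈ cycleLengths) {k : ℕ} (hk : Odd k)
    {V : Type} [Fintype V] (hV : Fintype.card V = 15 * k) {r s : ℕ} (hrs : r + s + 1 = 15 * k) :
    Factorable (· ≠ · : V → V → Prop) (Multiset.replicate r m + Multiset.replicate s n) := by
  induction k using Nat.strong_induction_on generalizing V r s with | _ k ih
  have : NeZero k := ⟨hk.pos.ne'⟩
  obtain ⟨e⟩ : Nonempty (V ≃ ZMod k × Fin 15) := by
    rw [← Fintype.card_eq, hV, Fintype.card_prod, ZMod.card, Fintype.card_fin, mul_comm]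
  refine Factorable.congr (Factorable.comap_equiv ?_ e) fun x y => e.injective.ne_iff
  have h2 : IsUnit ((2 : ℕ) : ZMod k) := (ZMod.isUnit_iff_coprime 2 k).2 hk.coprime_two_left
  by_cases hk3 : 3 ∣ k
  · obtain ⟨w, rfl⟩ := hk3
    have : Fact (1 < 3 * w) := ⟨by have := hk.pos; omega⟩
    refine factorable_ne_prod_of_isUnit_two (by simpa using h2) hm hn (fun r' s' hrs' => ?_)
      (by rwa [ZMod.card])
    rw [ZMod.card] at hrs'
    refine ih w (by have := hk.pos; omega) (Nat.odd_mul.1 hk).2 ?_ (by omega)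
    rw [Fintype.card_prod, ZMod.card, Fintype.card_fin]
    omega
  · have h3 : IsUnit ((3 : ℕ) : ZMod k) :=
      (ZMod.isUnit_iff_coprime 3 k).2 ((Nat.Prime.coprime_iff_not_dvd Nat.prime_three).2 hk3)
    refine factorable_ne_prod_of_isUnit_twelve ?_ hm hn (by rwa [ZMod.card])
    convert (h2.mul h2).mul h3 using 1
    norm_num

end Recursion

end DirectedHamiltonWaterloo

open DirectedHamiltonWaterloo in
theorem hwpStar_odd_main_general (v : ℕ) (hvodd : Odd v) (hdvd : 15 ∣ v) (m n : ℕ)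
    (hm : m ∈ ({3, 5, 15} : Finset ℕ)) (hn : n ∈ ({3, 5, 15} : Finset ℕ)) (r s : ℕ)
    (hrs : r + s = v - 1) : HWPStarSolution v m n r s := by
  have hpos : ∀ l ∈ cycleLengths, 0 < l := by decide
  obtain ⟨k, rfl⟩ := hdvd
  have hk : Odd k := (Nat.odd_mul.1 hvodd).2
  have hsum : r + s + 1 = 15 * k := by have := hvodd.pos; omega
  exact (factorable_ne hm hn hk (Fintype.card_fin _) hsum).hwpStarSolution (hpos m hm) (hpos n hn)

/-- Theorem 4.3 (sufficiency): for odd v > 15 with 15 ∣ v and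
(m, n) ∈ {(3,5), (3,15), (5,15)}, HWP*(v; m^r, n^s) has a solution whenever
r + s = v - 1. -/
theorem hwpStar_odd_main (v : ℕ) (hvodd : Odd v) (hv : 15 < v) (hdvd : 15 ∣ v)
    (m n : ℕ)
    (hmn : (m, n) = (3, 5) ∨ (m, n) = (3, 15) ∨ (m, n) = (5, 15)) :
    ∀ r s : ℕ, r + s = v - 1 → HWPStarSolution v m n r s := by
  exact hwpStar_odd_main_general v hvodd hdvd m n (by grind) (by grind)
end
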